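/- arXiv:1312.2153 — 4 statements merged into one kernel-verified Lean document; each statement's English description precedes it below -/
import Mathlib

section
/- For all x, y ∈ ℝ, lim_{n→∞} n·P(X > a_n·x + b_n, ρ_n|X| + √(1-ρ_n²)·Y > a_n·y + b_n) = e^{-max(x,y)}. -/
open MeasureTheory Filter Real Set ProbabilityTheory Topology

lemma aux_potter (H a : ℝ → ℝ) (hH : Antitone H) (ha : ∀ u, 0 < a u) (U : ℝ)
    (good : ∀ u, U ≤ u → 0 < H u →
      H (u + a u) ≤ H u / 2 ∧ 0 < H (u + a u) ∧ a (u + a u) ≤ 3/2 * a u) :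
    ∀ k : ℕ, ∀ u, U ≤ u → 0 < H u → ∀ t : ℝ, 0 ≤ t → t ≤ k →
      H (u + a u * t) ≤ 3 / (2 + t) * H u := by
  have triv : ∀ u, 0 < H u → ∀ t, 0 ≤ t → t ≤ 1 → H (u + a u * t) ≤ 3 / (2 + t) * H u := by
    intro u hu t ht ht1
    have h1 : H (u + a u * t) ≤ H u := hH (by nlinarith [ha u])
    have h2 : 1 ≤ 3 / (2 + t) := by rw [le_div_iff₀ (by linarith)]; linarith
    nlinarith
  intro k
  induction k with
  | zero => intro u hU hu t ht htk; exact triv u hu t ht (by push_cast at htk; linarith)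
  | succ k ih =>
    intro u hU hu t ht htk
    rcases le_total t 1 with h1 | h1
    · exact triv u hu t ht h1
    obtain ⟨g1, g2, g3⟩ := good u hU hu
    have hau := ha u
    have := ih (u + a u) (by linarith) g2 ((t-1)*(2/3)) (by linarith) (by push_cast at htk; linarith)
    have h3 : H (u + a u * t) ≤ H (u + a u + a (u + a u) * ((t-1)*(2/3))) := by
      apply hH; nlinarith
    have h4 : 3 / (2 + (t-1)*(2/3)) * H (u + a u) ≤ 3 / (2 + (t-1)*(2/3)) * (H u / 2) := by
      apply mul_le_mul_of_nonneg_left g1; apply div_nonneg <;> linarith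
    have h5 : 3 / (2 + (t-1)*(2/3)) * (H u / 2) ≤ 3 / (2 + t) * H u := by
      have : 3 / (2 + (t-1)*(2/3)) / 2 ≤ 3 / (2+t) := by
        rw [div_div]; apply div_le_div_of_nonneg_left <;> linarith
      calc _ = (3 / (2 + (t-1)*(2/3)) / 2) * H u := by ring
        _ ≤ _ := by gcongr
    linarith

lemma aux_good (H a : ℝ → ℝ) (hH : Antitone H) (ha : ∀ u, 0 < a u) (l : Filter ℝ)
    (hl : ∀ P : ℝ → Prop, (∀ᶠ u in l, P u) ↔ ∃ U, 0 < H U ∧ ∀ u, U ≤ u → 0 < H u → P u)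
    (hG : ∀ s : ℝ, Tendsto (fun u => H (u + a u * s) / H u) l (𝓝 (Real.exp (-s)))) :
    ∀ᶠ u in l, H (u + a u) ≤ H u / 2 ∧ 0 < H (u + a u) ∧ a (u + a u) ≤ 3/2 * a u := by
  have hpos : ∀ᶠ u in l, 0 < H u := by
    rw [hl]
    by_contra h
    push Not at h
    have : ¬ ∃ U, 0 < H U := by
      rintro ⟨U, hU⟩; obtain ⟨u, h1, h2, h3⟩ := h U hU; linarith
    have h2 : ∀ᶠ u in l, 0 < H (u + a u * 0) / H u := (hG 0).eventually_const_lt (Real.exp_pos _)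
    rw [hl] at h2
    obtain ⟨U, hU, _⟩ := h2
    exact this ⟨U, hU⟩
  have e1 : Real.exp (-1) < 1/2 := by
    have := Real.exp_one_gt_d9
    rw [Real.exp_neg, inv_lt_comm₀ (Real.exp_pos _) (by norm_num)]; norm_num; linarith
  have p1 := (hG 1).eventually_lt_const e1
  have p2 := (hG 1).eventually_const_lt (Real.exp_pos _)
  have shift : ∀ P : ℝ → Prop, (∀ᶠ u in l, P u) → ∀ᶠ u in l, P (u + a u) := by
    intro P hP
    obtain ⟨U, hU, h⟩ := (hl P).1 hP
    have hUe : ∀ᶠ u in l, U ≤ u := (hl _).2 ⟨U, hU, fun u hu _ => hu⟩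
    filter_upwards [hUe, p2, hpos] with u h1 h2 h3
    apply h
    · linarith [ha u]
    · have := (div_pos_iff_of_pos_right h3).1 h2
      simpa using this
  have p3 := shift _ ((hG 1).eventually_const_lt (show Real.exp (-1.2) < Real.exp (-1) by
    apply Real.exp_lt_exp.2; norm_num))
  have p4 : ∀ᶠ u in l, H (u + a u * 2.5) / H (u + a u * 1) < Real.exp (-1.2) := by
    have := (hG 2.5).div (hG 1) (Real.exp_pos _).ne'
    rw [← Real.exp_sub] at this
    filter_upwards [this.eventually_lt_const (show _ < Real.exp (-1.2) by
      apply Real.exp_lt_exp.2; norm_num), hpos] with u h1 h2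
    simp only [Pi.div_apply] at h1
    rwa [div_div_div_cancel_right₀ h2.ne'] at h1
  filter_upwards [p1, p2, p3, p4, hpos] with u h1 h2 h3 h4 h5
  rw [mul_one] at h1 h2 h4
  have h6 : 0 < H (u + a u) := (div_pos_iff_of_pos_right h5).1 h2
  refine ⟨?_, h6, ?_⟩
  · rw [div_lt_iff₀ h5] at h1; linarith
  · by_contra hc
    push Not at hc
    have : H (u + a u + a (u + a u) * 1) ≤ H (u + a u * 2.5) := hH (by linarith)
    have := div_le_div_of_nonneg_right this h6.le
    linarith

lemma aux_formula {Ω : Type*} [MeasurableSpace Ω] (μ : Measure Ω) [IsProbabilityMeasure μ]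
    (R Θ : Ω → ℝ) (hRm : Measurable R) (hΘm : Measurable Θ)
    (hΘunif : μ.map Θ = (ENNReal.ofReal (2 * π))⁻¹ • volume.restrict (Ioo (-π) π))
    (hindep : IndepFun R Θ μ) (S : Set (ℝ × ℝ)) (hS : MeasurableSet S) :
    (Measurable fun θ => μ.real {ω | (R ω, θ) ∈ S}) ∧
    μ.real {ω | (R ω, Θ ω) ∈ S} =
      (2 * π)⁻¹ * ∫ θ in Ioo (-π) π, μ.real {ω | (R ω, θ) ∈ S} := by
  have : IsProbabilityMeasure (μ.map R) := Measure.isProbabilityMeasure_map hRm.aemeasurable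
  have : IsProbabilityMeasure (μ.map Θ) := Measure.isProbabilityMeasure_map hΘm.aemeasurable
  have hms : ∀ θ, MeasurableSet ((fun r : ℝ => (r, θ)) ⁻¹' S) := fun θ =>
    hS.preimage (by fun_prop)
  have e : ∀ θ, μ {ω | (R ω, θ) ∈ S} = (μ.map R) ((fun r : ℝ => (r, θ)) ⁻¹' S) := by
    intro θ
    rw [Measure.map_apply hRm (hms θ)]; rfl
  have hm : Measurable fun θ => μ {ω | (R ω, θ) ∈ S} := by
    simp_rw [e]
    exact measurable_measure_prodMk_right hS
  refine ⟨hm.ennreal_toReal, ?_⟩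
  have h1 : μ {ω | (R ω, Θ ω) ∈ S} = ∫⁻ θ, μ {ω | (R ω, θ) ∈ S} ∂(μ.map Θ) := by
    simp_rw [e]
    rw [← Measure.prod_apply_symm hS, ← (indepFun_iff_map_prod_eq_prod_map_map hRm.aemeasurable hΘm.aemeasurable).1 hindep,
      Measure.map_apply (hRm.prodMk hΘm) hS]
    rfl
  rw [Measure.real, h1, ← integral_toReal hm.aemeasurable (by simp), hΘunif, integral_smul_measure]
  rw [ENNReal.toReal_inv, ENNReal.toReal_ofReal (by positivity)]
  rfl

lemma aux_mono (H : ℝ → ℝ) (hH : Antitone H) (a b : ℕ → ℝ) (ha : ∀ n, 0 < a n)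
    (hpos : ∀ᶠ n in atTop, 0 < H (b n))
    (hG : ∀ s : ℝ, Tendsto (fun n => H (b n + a n * s) / H (b n)) atTop (𝓝 (Real.exp (-s))))
    (T : ℕ → ℝ) (t : ℝ) (hT : Tendsto T atTop (𝓝 t)) :
    Tendsto (fun n => H (b n + a n * T n) / H (b n)) atTop (𝓝 (Real.exp (-t))) := by
  have hc : Continuous fun s : ℝ => Real.exp (-s) := by fun_prop
  rw [tendsto_order]
  constructor
  · intro c hcl
    have h1 : ∀ᶠ s in 𝓝[>] t, c < Real.exp (-s) :=
      nhdsWithin_le_nhds ((hc.tendsto t).eventually_const_lt hcl)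
    obtain ⟨s, hs, hst⟩ := (h1.and self_mem_nhdsWithin).exists
    filter_upwards [hpos, (hG s).eventually_const_lt hs, hT.eventually_lt_const hst] with n h1 h2 h3
    refine h2.trans_le (div_le_div_of_nonneg_right (hH ?_) h1.le)
    nlinarith [ha n]
  · intro c hcl
    have h1 : ∀ᶠ s in 𝓝[<] t, Real.exp (-s) < c :=
      nhdsWithin_le_nhds ((hc.tendsto t).eventually_lt_const hcl)
    obtain ⟨s, hs, hst⟩ := (h1.and self_mem_nhdsWithin).exists
    filter_upwards [hpos, (hG s).eventually_lt_const hs, hT.eventually_const_lt hst] with n h1 h2 h3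
    refine (div_le_div_of_nonneg_right (hH ?_) h1.le).trans_lt h2
    nlinarith [ha n]

lemma aux_angle (q : ℕ → ℝ) (hq : Tendsto q atTop atTop) (φ : ℝ) :
    Tendsto (fun n => Real.sqrt (2 / q n) * φ) atTop (𝓝 0) ∧
    Tendsto (fun n => q n * (1 - Real.cos (Real.sqrt (2 / q n) * φ))) atTop (𝓝 (φ ^ 2)) := by
  have h0 : Tendsto (fun n => Real.sqrt (2 / q n) * φ) atTop (𝓝 0) := by
    have h1 : Tendsto (fun n => 2 / q n) atTop (𝓝 0) := hq.const_div_atTop 2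
    have := ((Real.continuous_sqrt.tendsto 0).comp h1).mul_const φ
    simpa using this
  refine ⟨h0, ?_⟩
  have h1 : Tendsto (fun n => (4 * φ ^ 4 * (5/96)) / q n) atTop (𝓝 0) := hq.const_div_atTop _
  rw [tendsto_iff_norm_sub_tendsto_zero]
  refine squeeze_zero' (Eventually.of_forall fun _ => norm_nonneg _) ?_ h1
  have habs : ∀ᶠ n in atTop, |Real.sqrt (2 / q n) * φ| ≤ 1 := by
    have := h0.abs
    rw [abs_zero] at this
    exact this.eventually_le_const one_pos
  filter_upwards [habs, hq.eventually_gt_atTop 0] with n h2 h3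
  have h4 := Real.cos_bound h2
  have h5 : (Real.sqrt (2 / q n) * φ) ^ 2 = 2 / q n * φ ^ 2 := by
    rw [mul_pow, Real.sq_sqrt (by positivity)]
  have h6 : |Real.sqrt (2 / q n) * φ| ^ 4 = 4 / q n ^ 2 * φ ^ 4 := by
    have : |Real.sqrt (2 / q n) * φ| ^ 4 = ((Real.sqrt (2 / q n) * φ) ^ 2) ^ 2 := by
      rw [← sq_abs (Real.sqrt (2 / q n) * φ)]; ring
    rw [this, h5]; ring
  rw [h5, h6] at h4
  rw [Real.norm_eq_abs]
  have h7 : q n * (1 - Real.cos (Real.sqrt (2 / q n) * φ)) - φ ^ 2 =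
     - (q n * (Real.cos (Real.sqrt (2 / q n) * φ) - (1 - 2 / q n * φ ^ 2 / 2))) := by
    field_simp; ring
  rw [h7, abs_neg, abs_mul, abs_of_pos h3]
  calc _ ≤ q n * (4 / q n ^ 2 * φ ^ 4 * (5/96)) := by gcongr
    _ = _ := by field_simp

lemma aux_angle2 (q : ℕ → ℝ) (hq : Tendsto q atTop atTop) (φ : ℝ)
    (ρ : ℕ → ℝ) (hρ : ∀ n, ρ n ∈ Ioc (0 : ℝ) 1)
    (hHR : Tendsto (fun n => (1 - ρ n) * q n) atTop (𝓝 0)) :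
    Tendsto (fun n => q n * (1 - (ρ n * Real.cos (Real.sqrt (2 / q n) * φ) +
      Real.sqrt (1 - ρ n ^ 2) * Real.sin (Real.sqrt (2 / q n) * φ)))) atTop (𝓝 (φ ^ 2)) := by
  obtain ⟨h0, h1⟩ := aux_angle q hq φ
  have hcos : Tendsto (fun n => Real.cos (Real.sqrt (2 / q n) * φ)) atTop (𝓝 1) := by
    have := (Real.continuous_cos.tendsto 0).comp h0
    rw [Real.cos_zero] at this
    exact this
  have h2 : Tendsto (fun n => q n * (Real.sqrt (1 - ρ n ^ 2) *
      Real.sin (Real.sqrt (2 / q n) * φ))) atTop (𝓝 0) := by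
    have h3 : Tendsto (fun n => Real.sqrt (((1 - ρ n) * q n) * 4) * |φ|) atTop (𝓝 0) := by
      have := ((Real.continuous_sqrt.tendsto _).comp (hHR.mul_const 4)).mul_const |φ|
      simpa using this
    refine squeeze_zero_norm' ?_ h3
    filter_upwards [hq.eventually_gt_atTop 0] with n hn
    obtain ⟨r1, r2⟩ := hρ n
    rw [Real.norm_eq_abs, abs_mul, abs_mul, abs_of_pos hn, abs_of_nonneg (Real.sqrt_nonneg _)]
    calc _ ≤ q n * (Real.sqrt (1 - ρ n ^ 2) * |Real.sqrt (2 / q n) * φ|) := by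
            exact mul_le_mul_of_nonneg_left (mul_le_mul_of_nonneg_left Real.abs_sin_le_abs (Real.sqrt_nonneg _)) hn.le
      _ = Real.sqrt (q n ^ 2 * ((1 - ρ n ^ 2) * (2 / q n))) * |φ| := by
            rw [Real.sqrt_mul (by positivity), Real.sqrt_sq hn.le, Real.sqrt_mul (by nlinarith),
              abs_mul, abs_of_nonneg (Real.sqrt_nonneg (2 / q n))]; ring
      _ ≤ _ := by
            refine mul_le_mul_of_nonneg_right (Real.sqrt_le_sqrt ?_) (abs_nonneg _)
            have : q n ^ 2 * ((1 - ρ n ^ 2) * (2 / q n)) = (1 - ρ n) * q n * (2 * (1 + ρ n)) := by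
              field_simp; ring
            rw [this]
            apply mul_le_mul_of_nonneg_left (by linarith)
            apply mul_nonneg <;> linarith
  have := ((hHR.mul hcos).add h1).sub h2
  simp only [zero_mul, zero_add, sub_zero] at this
  refine this.congr fun n => ?_
  ring

lemma aux_one (q : ℕ → ℝ) (hq : Tendsto q atTop atTop) (D : ℕ → ℝ) (c : ℝ)
    (h : Tendsto (fun n => q n * (1 - D n)) atTop (𝓝 c)) (x : ℝ) :
    Tendsto D atTop (𝓝 1) ∧ Tendsto (fun n => (x + q n * (1 - D n)) / D n) atTop (𝓝 (x + c)) := by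
  have hD : Tendsto D atTop (𝓝 1) := by
    have h1 := (h.div_atTop hq).const_sub 1
    rw [sub_zero] at h1
    refine h1.congr' ?_
    filter_upwards [hq.eventually_gt_atTop 0] with n hn
    field_simp; ring
  refine ⟨hD, ?_⟩
  have := (h.const_add x).div hD one_ne_zero
  rw [div_one] at this
  exact this

lemma aux_cos (θ : ℝ) (h1 : -π < θ) (h2 : θ < π) (r u : ℝ) (hr : 0 < r) (hu : 0 < u)
    (h : u < r * Real.cos θ) : u * (1 + θ ^ 2 / 5) < r := by
  have hc := Real.cos_le_one_div_sqrt_sq_add_one (x := θ) (by linarith [Real.pi_pos]) (by linarith [Real.pi_pos])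
  have hs : 0 < Real.sqrt (θ ^ 2 + 1) := by positivity
  have h3 : 1 + θ ^ 2 / 5 ≤ Real.sqrt (θ ^ 2 + 1) := by
    apply Real.le_sqrt_of_sq_le
    have : θ ^ 2 ≤ 15 := by nlinarith [Real.pi_lt_d2, Real.pi_pos]
    nlinarith [sq_nonneg θ]
  have h4 : u * Real.sqrt (θ ^ 2 + 1) < r := by
    have : r * Real.cos θ ≤ r * (1 / Real.sqrt (θ ^ 2 + 1)) := by gcongr
    rw [mul_one_div] at this
    rw [← lt_div_iff₀ hs]; linarith
  nlinarith

lemma aux_key {Ω : Type*} [MeasurableSpace Ω] (μ : Measure Ω) [IsProbabilityMeasure μ]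
    (R Θ : Ω → ℝ) (hRm : Measurable R) (hΘm : Measurable Θ)
    (hRpos : ∀ᵐ ω ∂μ, 0 < R ω)
    (hΘunif : μ.map Θ = (ENNReal.ofReal (2 * π))⁻¹ • volume.restrict (Ioo (-π) π))
    (hindep : IndepFun R Θ μ) (H : ℝ → ℝ) (hHdef : ∀ t, H t = μ.real {ω | t < R ω})
    (hH : Antitone H) (a b : ℕ → ℝ) (ha : ∀ n, 0 < a n)
    (hpos : ∀ᶠ n in atTop, 0 < H (b n)) (hb : ∀ᶠ n in atTop, 0 < b n)
    (hq : Tendsto (fun n => b n / a n) atTop atTop)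
    (hG : ∀ s : ℝ, Tendsto (fun n => H (b n + a n * s) / H (b n)) atTop (𝓝 (Real.exp (-s))))
    (hpot : ∀ᶠ n in atTop, ∀ t, 0 ≤ t → H (b n + a n * t) ≤ 3 / (2 + t) * H (b n))
    (ρ : ℕ → ℝ) (hρ : ∀ n, ρ n ∈ Ioc (0 : ℝ) 1)
    (hHR : Tendsto (fun n => (1 - ρ n) * (b n / a n)) atTop (𝓝 0)) (x y : ℝ) :
    Tendsto (fun n => μ.real {ω | a n * x + b n < R ω * Real.cos (Θ ω) ∧
            a n * y + b n < ρ n * |R ω * Real.cos (Θ ω)| +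
              Real.sqrt (1 - ρ n ^ 2) * (R ω * Real.sin (Θ ω))} /
          (H (b n) * Real.sqrt (2 / (b n / a n)) / (2 * π)))
      atTop (𝓝 (Real.exp (-max x y) * Real.sqrt π)) := by
  set q : ℕ → ℝ := fun n => b n / a n with hqdef
  set σ : ℕ → ℝ := fun n => Real.sqrt (2 / q n) with hσ
  let S : ℕ → Set (ℝ × ℝ) := fun n => {p | a n * x + b n < p.1 * Real.cos p.2 ∧
            a n * y + b n < ρ n * |p.1 * Real.cos p.2| +
              Real.sqrt (1 - ρ n ^ 2) * (p.1 * Real.sin p.2)}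
  have hS : ∀ n, MeasurableSet (S n) := by
    intro n
    simp only [S, ofPred_and]
    exact (measurableSet_lt (by fun_prop) (by fun_prop)).inter
      (measurableSet_lt (by fun_prop) (by fun_prop))
  let k : ℕ → ℝ → ℝ := fun n θ => μ.real {ω | (R ω, θ) ∈ S n}
  have hk : ∀ n, Measurable (k n) ∧ μ.real {ω | (R ω, Θ ω) ∈ S n} =
      (2 * π)⁻¹ * ∫ θ in Ioo (-π) π, k n θ := fun n =>
    aux_formula μ R Θ hRm hΘm hΘunif hindep (S n) (hS n)
  let g : ℕ → ℝ → ℝ := fun n φ => (Ioo (-π) π).indicator (k n) (σ n * φ) / H (b n)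
  have hq0 : ∀ᶠ n in atTop, 0 < q n := hq.eventually_gt_atTop 0
  have hJ : ∀ᶠ n in atTop, ∫ φ, g n φ = μ.real {ω | (R ω, Θ ω) ∈ S n} /
      (H (b n) * σ n / (2 * π)) := by
    filter_upwards [hpos, hq0] with n h1 h2
    have hs : 0 < σ n := Real.sqrt_pos.2 (by positivity)
    rw [(hk n).2]
    simp only [g]
    rw [integral_div, Measure.integral_comp_mul_left, integral_indicator measurableSet_Ioo,
      abs_of_pos (by positivity), smul_eq_mul]
    have := Real.pi_pos
    field_simp
  have hlimint : ∫ φ : ℝ, Real.exp (-(max x y + φ ^ 2)) = Real.exp (-max x y) * Real.sqrt π := by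
    have : ∀ φ : ℝ, Real.exp (-(max x y + φ ^ 2)) = Real.exp (-max x y) * Real.exp (-1 * φ ^ 2) := by
      intro φ; rw [← Real.exp_add]; congr 1; ring
    simp_rw [this]
    rw [integral_const_mul, integral_gaussian, div_one]
  rw [← hlimint]
  refine Tendsto.congr' (hJ.mono fun n h => h) ?_
  set A : ℝ := Real.exp (-x) + 1 with hA
  have hA0 : 0 < A := by positivity
  set K : ℝ := A * (1 + 10 * |x|) + 30 with hK
  apply tendsto_integral_filter_of_dominated_convergence (fun φ => K * (1 + φ ^ 2)⁻¹)
  · refine Eventually.of_forall fun n => Measurable.aestronglyMeasurable ?_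
    exact ((((hk n).1.indicator measurableSet_Ioo).comp (measurable_const_mul (σ n)))).div_const _
  · filter_upwards [hpos, hq0, hb, hpot, (hG x).eventually_lt_const (show _ < A by linarith),
      hq.eventually_ge_atTop (2 * |x|)] with n h1 h2 h3 h4 h5 h6
    refine Eventually.of_forall fun φ => ?_
    have hH0 : ∀ t, 0 ≤ H t := fun t => by rw [hHdef]; exact measureReal_nonneg
    have haq : a n * q n = b n := by
      simp only [hqdef]; have := ha n; field_simp
    have han := ha n
    have hKA : 0 < K := by positivity
    simp only [g]
    by_cases hθ : σ n * φ ∈ Ioo (-π) π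
    · rw [indicator_of_mem hθ, Real.norm_eq_abs, abs_of_nonneg (div_nonneg measureReal_nonneg h1.le)]
      have hx : b n / 2 ≤ a n * x + b n := by
        have : -(q n) / 2 ≤ x := by linarith [neg_abs_le x]
        nlinarith
      have hσ2 : (σ n * φ) ^ 2 = 2 / q n * φ ^ 2 := by
        rw [mul_pow, hσ, Real.sq_sqrt (by positivity)]
      have hle : b n + a n * (x + φ ^ 2 / 5) ≤ (a n * x + b n) * (1 + (σ n * φ) ^ 2 / 5) := by
        rw [hσ2]
        have e : b n / 2 * (2 / q n * φ ^ 2 / 5) = a n * (φ ^ 2 / 5) := by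
          rw [← haq]; field_simp
        have : b n / 2 * (2 / q n * φ ^ 2 / 5) ≤ (a n * x + b n) * (2 / q n * φ ^ 2 / 5) := by
          gcongr
        linarith
      have hkH : k n (σ n * φ) ≤ H (b n + a n * (x + φ ^ 2 / 5)) := by
        rw [hHdef]
        refine ENNReal.toReal_mono (measure_ne_top _ _) (measure_mono_ae ?_)
        filter_upwards [hRpos] with ω hω hmem
        exact hle.trans_lt (aux_cos _ hθ.1 hθ.2 _ _ hω (by linarith) hmem.1)
      rw [div_le_iff₀ h1]
      refine hkH.trans ?_
      rcases le_total (φ ^ 2) (10 * |x|) with hc | hc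
      · have e1 : H (b n + a n * (x + φ ^ 2 / 5)) ≤ H (b n + a n * x) := by
          apply hH; have := sq_nonneg φ; nlinarith
        rw [div_lt_iff₀ h1] at h5
        have e2 : A ≤ K * (1 + φ ^ 2)⁻¹ := by
          rw [← div_eq_mul_inv, le_div_iff₀ (by positivity)]
          nlinarith
        nlinarith
      · have e1 : H (b n + a n * (x + φ ^ 2 / 5)) ≤ H (b n + a n * (φ ^ 2 / 10)) := by
          apply hH
          have : φ ^ 2 / 10 ≤ x + φ ^ 2 / 5 := by linarith [neg_abs_le x]
          nlinarith
        have e2 : 3 / (2 + φ ^ 2 / 10) ≤ K * (1 + φ ^ 2)⁻¹ := by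
          rw [← div_eq_mul_inv, div_le_div_iff₀ (by positivity) (by positivity)]
          have : 30 ≤ K := by rw [hK]; have : 0 ≤ A * (1 + 10 * |x|) := by positivity
                              linarith
          nlinarith [sq_nonneg φ]
        have e3 := h4 (φ ^ 2 / 10) (by positivity)
        have e4 : 3 / (2 + φ ^ 2 / 10) * H (b n) ≤ K * (1 + φ ^ 2)⁻¹ * H (b n) := by gcongr
        linarith
    · rw [indicator_of_notMem hθ, zero_div, norm_zero]; positivity
  · exact integrable_inv_one_add_sq.const_mul K
  · refine Eventually.of_forall fun φ => ?_
    obtain ⟨t0, t1⟩ := aux_angle q hq φ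
    have t2 := aux_angle2 q hq φ ρ hρ hHR
    obtain ⟨c1, c2⟩ := aux_one q hq _ _ t1 x
    obtain ⟨d1, d2⟩ := aux_one q hq _ _ t2 y
    have hT := c2.max d2
    rw [max_add_add_right] at hT
    refine (aux_mono H hH a b ha hpos hG _ _ hT).congr' ?_
    filter_upwards [c1.eventually_const_lt one_pos, d1.eventually_const_lt one_pos,
      t0.eventually (Ioo_mem_nhds (neg_lt_zero.2 Real.pi_pos) Real.pi_pos)] with n h1 h2 h3
    simp only [g]
    rw [indicator_of_mem (show σ n * φ ∈ Ioo (-π) π from h3)]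
    congr 1
    rw [hHdef]
    have haq : a n * q n = b n := by
      simp only [hqdef]; have := ha n; field_simp
    have key : ∀ z D : ℝ, 0 < D → b n + a n * ((z + q n * (1 - D)) / D) = (a n * z + b n) / D := by
      intro z D hD
      rw [← haq]; field_simp; ring
    rw [mul_max_of_nonneg _ _ (ha n).le, ← max_add_add_left, key x _ h1, key y _ h2]
    simp only [k, Measure.real]
    congr 1
    apply measure_congr
    filter_upwards [hRpos] with ω hω
    apply propext
    change max _ _ < R ω ↔ _ ∧ _
    rw [max_lt_iff, div_lt_iff₀ h1, div_lt_iff₀ h2, abs_of_pos (mul_pos hω h1)]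
    refine and_congr Iff.rfl ?_
    simp only [hσ]
    ring_nf

lemma aux_noatom {Ω : Type*} [MeasurableSpace Ω] (μ : Measure Ω) [IsProbabilityMeasure μ]
    (R Θ : Ω → ℝ) (hRm : Measurable R) (hΘm : Measurable Θ)
    (hRpos : ∀ᵐ ω ∂μ, 0 < R ω)
    (hΘunif : μ.map Θ = (ENNReal.ofReal (2 * π))⁻¹ • volume.restrict (Ioo (-π) π))
    (hindep : IndepFun R Θ μ) (c : ℝ) : μ {ω | R ω * Real.cos (Θ ω) = c} = 0 := by
  have : IsProbabilityMeasure (μ.map R) := Measure.isProbabilityMeasure_map hRm.aemeasurable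
  have : IsProbabilityMeasure (μ.map Θ) := Measure.isProbabilityMeasure_map hΘm.aemeasurable
  have hS : MeasurableSet {p : ℝ × ℝ | p.1 * Real.cos p.2 = c} :=
    measurableSet_eq_fun (by fun_prop) (by fun_prop)
  have h1 : μ {ω | R ω * Real.cos (Θ ω) = c} =
      ((μ.map R).prod (μ.map Θ)) {p : ℝ × ℝ | p.1 * Real.cos p.2 = c} := by
    rw [← (indepFun_iff_map_prod_eq_prod_map_map hRm.aemeasurable hΘm.aemeasurable).1 hindep,
      Measure.map_apply (hRm.prodMk hΘm) hS]
    rfl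
  rw [h1, Measure.measure_prod_null hS]
  have h2 : ∀ᵐ r ∂(μ.map R), 0 < r := by
    rw [ae_map_iff hRm.aemeasurable measurableSet_Ioi]; exact hRpos
  filter_upwards [h2] with r hr
  have hc : ({θ : ℝ | r * Real.cos θ = c}).Countable := by
    by_cases he : ∃ θ₀, r * Real.cos θ₀ = c
    · obtain ⟨θ₀, h0⟩ := he
      refine ((countable_range fun k : ℤ => θ₀ - 2 * k * π).union
        (countable_range fun k : ℤ => 2 * k * π - θ₀)).mono ?_
      intro θ hθ
      have : Real.cos θ = Real.cos θ₀ := by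
        have h3 : r * Real.cos θ = r * Real.cos θ₀ := by rw [h0]; exact hθ
        exact mul_left_cancel₀ hr.ne' h3
      obtain ⟨k, hk | hk⟩ := Real.cos_eq_cos_iff.1 this
      · left; exact ⟨k, by simp only; linarith⟩
      · right; exact ⟨k, by simp only; linarith⟩
    · push Not at he
      have : {θ : ℝ | r * Real.cos θ = c} = ∅ := by ext θ; simpa using he θ
      rw [this]; exact countable_empty
  have hac : μ.map Θ ≪ volume := by
    rw [hΘunif]
    exact (Measure.smul_absolutelyContinuous).trans Measure.restrict_le_self.absolutelyContinuous
  exact hac (hc.measure_zero _)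

lemma aux_tailpos {Ω : Type*} [MeasurableSpace Ω] (μ : Measure Ω) [IsProbabilityMeasure μ]
    (R Θ : Ω → ℝ) (hRm : Measurable R) (hΘm : Measurable Θ)
    (hΘunif : μ.map Θ = (ENNReal.ofReal (2 * π))⁻¹ • volume.restrict (Ioo (-π) π))
    (hindep : IndepFun R Θ μ) (U V : ℝ) (hU : 0 ≤ U) (hUV : U < V)
    (hV : 0 < μ.real {ω | V < R ω}) : 0 < μ.real {ω | U < R ω * Real.cos (Θ ω)} := by
  have hV0 : 0 < V := by linarith
  have hc : U / V < 1 := by rw [div_lt_one hV0]; exact hUV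
  have hc0 : 0 ≤ U / V := by positivity
  have hA : 0 < Real.arccos (U / V) := Real.arccos_pos.2 hc
  have hA2 : Real.arccos (U / V) ≤ π := Real.arccos_le_pi _
  have hsub : {ω | V < R ω} ∩ {ω | Θ ω ∈ Ioo 0 (Real.arccos (U / V))} ⊆
      {ω | U < R ω * Real.cos (Θ ω)} := by
    rintro ω ⟨h1, h2, h3⟩
    simp only [mem_ofPred_eq] at h1 ⊢
    have h4 : U / V < Real.cos (Θ ω) := by
      have := Real.cos_lt_cos_of_nonneg_of_le_pi h2.le hA2 h3
      rwa [Real.cos_arccos (by linarith) hc.le] at this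
    have h5 : U = V * (U / V) := by field_simp
    calc U = V * (U / V) := h5
      _ ≤ R ω * (U / V) := by gcongr
      _ < _ := mul_lt_mul_of_pos_left h4 (by linarith)
  have hi : μ ({ω | V < R ω} ∩ {ω | Θ ω ∈ Ioo 0 (Real.arccos (U / V))}) =
      μ {ω | V < R ω} * μ {ω | Θ ω ∈ Ioo 0 (Real.arccos (U / V))} :=
    hindep.measure_inter_preimage_eq_mul (Ioi V) (Ioo _ _) measurableSet_Ioi measurableSet_Ioo
  have hm : μ {ω | Θ ω ∈ Ioo 0 (Real.arccos (U / V))} ≠ 0 := by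
    have : μ {ω | Θ ω ∈ Ioo 0 (Real.arccos (U / V))} = (μ.map Θ) (Ioo 0 (Real.arccos (U / V))) := by
      rw [Measure.map_apply hΘm measurableSet_Ioo]; rfl
    rw [this, hΘunif, Measure.smul_apply, Measure.restrict_apply measurableSet_Ioo,
      inter_eq_left.2 (Ioo_subset_Ioo (by linarith [Real.pi_pos]) hA2), Real.volume_Ioo, smul_eq_mul]
    refine mul_ne_zero (ENNReal.inv_ne_zero.2 ENNReal.ofReal_ne_top) ?_
    simpa using hc
  have hV' : μ {ω | V < R ω} ≠ 0 := fun h => by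
    rw [Measure.real, h] at hV; simp at hV
  rw [Measure.real]
  apply ENNReal.toReal_pos _ (measure_ne_top _ _)
  intro h0
  have := measure_mono_null hsub h0
  rw [hi] at this
  exact mul_ne_zero hV' hm this

lemma aux_quantile {Ω : Type*} [MeasurableSpace Ω] (μ : Measure Ω) [IsProbabilityMeasure μ]
    (X : Ω → ℝ) (hX : Measurable X) (hna : ∀ c, μ {ω | X ω = c} = 0) (p : ℝ) (hp : p < 1) (U : ℝ)
    (hU : (μ {ω | X ω ≤ U}).toReal < p) :
    U ≤ sInf {x | p < (μ {ω | X ω ≤ x}).toReal} ∧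
    (μ {ω | X ω ≤ sInf {x | p < (μ {ω | X ω ≤ x}).toReal}}).toReal = p := by
  have : IsProbabilityMeasure (μ.map X) := Measure.isProbabilityMeasure_map hX.aemeasurable
  have e : ∀ x, (μ {ω | X ω ≤ x}).toReal = cdf (μ.map X) x := by
    intro x
    rw [cdf_eq_real, Measure.real, Measure.map_apply hX measurableSet_Iic]; rfl
  simp_rw [e] at hU ⊢
  set C := cdf (μ.map X)
  have hlb : U ∈ lowerBounds {x | p < C x} := by
    intro x hx
    by_contra hc
    push Not at hc
    have := C.mono hc.le
    simp only [mem_ofPred_eq] at hx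
    linarith
  have hne : {x | p < C x}.Nonempty :=
    ((tendsto_cdf_atTop (μ.map X)).eventually_const_lt hp).exists
  set β := sInf {x | p < C x} with hβ
  refine ⟨le_csInf hne hlb, le_antisymm ?_ ?_⟩
  · have h1 : C.measure {β} = 0 := by
      rw [measure_cdf, Measure.map_apply hX (measurableSet_singleton _)]; exact hna β
    rw [StieltjesFunction.measure_singleton, ENNReal.ofReal_eq_zero] at h1
    have h2 : Function.leftLim C β ≤ p := by
      refine le_of_tendsto (C.mono.tendsto_leftLim β) ?_
      filter_upwards [self_mem_nhdsWithin] with z hz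
      by_contra hc
      push Not at hc
      exact absurd (csInf_le ⟨U, hlb⟩ hc) (not_le.2 hz)
    linarith
  · have h3 : Tendsto C (𝓝[>] β) (𝓝 (C β)) := (C.right_continuous β).mono_left
      (nhdsWithin_mono _ Ioi_subset_Ici_self)
    refine ge_of_tendsto h3 ?_
    filter_upwards [self_mem_nhdsWithin] with z hz
    obtain ⟨v, hv, hvz⟩ := exists_lt_of_csInf_lt hne hz
    exact (hv.le.trans (C.mono hvz.le))

theorem joint_tail_half_skew_gumbel_lambda_zero
{Ω : Type*} [MeasurableSpace Ω] (μ : Measure Ω) [IsProbabilityMeasure μ]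
    (R Θ : Ω → ℝ) (hRm : Measurable R) (hΘm : Measurable Θ)
    (hRpos : ∀ᵐ ω ∂μ, 0 < R ω)
    (hΘunif : μ.map Θ = (ENNReal.ofReal (2 * π))⁻¹ • volume.restrict (Ioo (-π) π))
    (hindep : IndepFun R Θ μ)
    (X Y : Ω → ℝ)
    (hX : X = fun ω => R ω * Real.cos (Θ ω))
    (hY : Y = fun ω => R ω * Real.sin (Θ ω))
    (F G : ℝ → ℝ)
    (hF : F = fun x => (μ {ω | R ω ≤ x}).toReal)
    (hG : G = fun x => (μ {ω | X ω ≤ x}).toReal)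
    (w : ℝ → ℝ) (hw : ∀ x, 0 < w x)
    (l : Filter ℝ)
    (hendpoint : (l = atTop ∧ ∀ x, F x < 1) ∨
      (l = nhdsWithin 1 (Iio 1) ∧ (∀ x < 1, F x < 1) ∧ ∀ x, 1 ≤ x → F x = 1))
    (hGumbel : ∀ s : ℝ,
      Tendsto (fun u => (1 - F (u + s / w u)) / (1 - F u)) l (𝓝 (Real.exp (-s))))
    (b a : ℕ → ℝ)
    (hb : ∀ n : ℕ, b n = sInf {x | 1 - 1 / (n : ℝ) < G x})
    (ha : ∀ n : ℕ, a n = 1 / w (b n))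
    (ρ : ℕ → ℝ) (hρ : ∀ n, ρ n ∈ Ioc (0 : ℝ) 1)
    (hHR : Tendsto (fun n : ℕ => (1 - ρ n) * b n / a n) atTop (𝓝 0)) :
    ∀ x y : ℝ,
      Tendsto (fun n : ℕ =>
          (n : ℝ) * (μ {ω | a n * x + b n < X ω ∧
            a n * y + b n < ρ n * |X ω| + Real.sqrt (1 - ρ n ^ 2) * Y ω}).toReal)
        atTop (𝓝 (Real.exp (-max x y))) := by
  set H : ℝ → ℝ := fun t => μ.real {ω | t < R ω} with hHdef
  have hH : Antitone H := by
    intro s t hst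
    exact measureReal_mono (fun ω (h : t < R ω) => hst.trans_lt h)
  have compl : ∀ (Z : Ω → ℝ), Measurable Z → ∀ t, 1 - (μ {ω | Z ω ≤ t}).toReal = μ.real {ω | t < Z ω} := by
    intro Z hZ t
    have : {ω | t < Z ω} = {ω | Z ω ≤ t}ᶜ := by ext ω; simp
    rw [this, probReal_compl_eq_one_sub (measurableSet_le hZ measurable_const)]
    rfl
  have hXm : Measurable X := by rw [hX]; fun_prop
  have hHF : ∀ t, 1 - F t = H t := by intro t; rw [hF]; exact compl R hRm t
  have hGF : ∀ t, 1 - G t = μ.real {ω | t < X ω} := by intro t; rw [hG]; exact compl X hXm t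
  simp_rw [hHF] at hGumbel
  have hG' : ∀ s : ℝ, Tendsto (fun u => H (u + 1 / w u * s) / H u) l (𝓝 (Real.exp (-s))) := by
    intro s
    refine (hGumbel s).congr fun u => ?_
    rw [one_div_mul_eq_div]
  have hnx : ∀ U, 0 < H U → ∃ V, U < V ∧ 0 < V ∧ 0 < H V := by
    intro U hU
    rcases hendpoint with ⟨_, h⟩ | ⟨_, h1, h2⟩
    · exact ⟨max U 0 + 1, by linarith [le_max_left U 0], by linarith [le_max_right U 0],
        by rw [← hHF]; linarith [h (max U 0 + 1)]⟩
    · have hU1 : U < 1 := by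
        by_contra hc
        push Not at hc
        rw [← hHF, h2 U hc] at hU; simp at hU
      have hm : max U 0 < 1 := max_lt hU1 one_pos
      exact ⟨(max U 0 + 1) / 2, by linarith [le_max_left U 0], by linarith [le_max_right U 0],
        by rw [← hHF]; linarith [h1 ((max U 0 + 1)/2) (by linarith)]⟩
  have hl : ∀ P : ℝ → Prop, (∀ᶠ u in l, P u) ↔ ∃ U, 0 < H U ∧ ∀ u, U ≤ u → 0 < H u → P u := by
    intro P
    rcases hendpoint with ⟨rfl, h⟩ | ⟨rfl, h1, h2⟩
    · have hp : ∀ u, 0 < H u := fun u => by rw [← hHF]; linarith [h u]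
      rw [eventually_atTop]
      exact ⟨fun ⟨U, hU⟩ => ⟨U, hp U, fun u hu _ => hU u hu⟩,
        fun ⟨U, _, hU⟩ => ⟨U, fun u hu => hU u hu (hp u)⟩⟩
    · have hp : ∀ u, u < 1 → 0 < H u := fun u hu => by rw [← hHF]; linarith [h1 u hu]
      have hp' : ∀ u, 0 < H u → u < 1 := fun u hu => by
        by_contra hc
        push Not at hc
        rw [← hHF, h2 u hc] at hu; simp at hu
      constructor
      · intro hP
        obtain ⟨U, hU, hs⟩ := (mem_nhdsLT_iff_exists_Ioo_subset).1 hP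
        refine ⟨(U + 1) / 2, hp _ (by linarith [mem_Iio.1 hU]), fun u hu hu2 => hs ⟨?_, hp' u hu2⟩⟩
        linarith [mem_Iio.1 hU]
      · rintro ⟨U, hU, hs⟩
        filter_upwards [Ioo_mem_nhdsLT (hp' U hU)] with u hu
        exact hs u hu.1.le (hp u hu.2)
  have hap : ∀ u, 0 < 1 / w u := fun u => one_div_pos.2 (hw u)
  have hgood := aux_good H (fun u => 1 / w u) hH hap l hl hG'
  obtain ⟨U₀, hU₀, hgd⟩ := (hl _).1 hgood
  have hH0 : ∀ u, u ≤ 0 → H u = 1 := by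
    intro u hu
    have : (1 : ℝ) = μ.real univ := by simp
    rw [this]
    simp only [hHdef, Measure.real]
    congr 1
    apply measure_congr
    filter_upwards [hRpos] with ω hω
    apply propext
    change u < R ω ↔ True
    simp only [iff_true]; linarith
  have hHpos : ∀ᶠ u in l, 0 < H u := (hl _).2 ⟨U₀, hU₀, fun u _ h => h⟩
  have hqw : Tendsto (fun u => u * w u) l atTop := by
    rw [tendsto_atTop]
    intro C₀
    obtain ⟨C, hC0, hC⟩ : ∃ C : ℝ, 0 < C ∧ C₀ ≤ C := ⟨max C₀ 1, by positivity, le_max_left _ _⟩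
    rcases hendpoint with ⟨rfl, h⟩ | ⟨rfl, h1, h2⟩
    · have hlim : Tendsto H atTop (𝓝 0) := by
        have : IsProbabilityMeasure (μ.map R) := Measure.isProbabilityMeasure_map hRm.aemeasurable
        have h3 := (tendsto_cdf_atTop (μ.map R)).const_sub 1
        rw [sub_self] at h3
        refine h3.congr fun u => ?_
        rw [← hHF, hF, cdf_eq_real, Measure.real, Measure.map_apply hRm measurableSet_Iic]; rfl
      have h4 := (hG' (-C)).mul hlim
      rw [mul_zero] at h4
      filter_upwards [h4.eventually_lt_const one_pos, hHpos] with u h5 h6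
      rw [div_mul_cancel₀ _ h6.ne'] at h5
      have h7 : 0 < u + 1 / w u * (-C) := by
        by_contra hc
        push Not at hc
        rw [hH0 _ hc] at h5; linarith
      have := hw u
      have h8 : 0 < (u + 1 / w u * (-C)) * w u := mul_pos h7 this
      have h9 : (u + 1 / w u * (-C)) * w u = u * w u - C := by field_simp; ring
      linarith
    · have h3 := (hG' C).eventually_const_lt (Real.exp_pos _)
      have hhalf : ∀ᶠ u in 𝓝[<] (1:ℝ), u ∈ Ioo (1/2 : ℝ) 1 := Ioo_mem_nhdsLT (by norm_num)
      filter_upwards [h3, hHpos, hhalf] with u h4 h5 h6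
      have h7 : 0 < H (u + 1 / w u * C) := (div_pos_iff_of_pos_right h5).1 h4
      have h8 : u + 1 / w u * C < 1 := by
        by_contra hc
        push Not at hc
        rw [← hHF, h2 _ hc] at h7; simp at h7
      have := hw u
      have h9 : (u + 1 / w u * C) * w u < 1 * w u := mul_lt_mul_of_pos_right h8 this
      have h10 : (u + 1 / w u * C) * w u = u * w u + C := by field_simp
      nlinarith [h6.1]
  have hna : ∀ c, μ {ω | X ω = c} = 0 := by
    intro c; rw [hX]; exact aux_noatom μ R Θ hRm hΘm hRpos hΘunif hindep c
  have hbU : ∀ U, 0 < H U → ∀ᶠ n : ℕ in atTop, U ≤ b n ∧ G (b n) = 1 - 1 / (n : ℝ) := by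
    intro U hU
    obtain ⟨V, hUV, hV0, hV⟩ := hnx U hU
    obtain ⟨V', hVV, hV0', hV'⟩ := hnx V hV
    have hp := aux_tailpos μ R Θ hRm hΘm hΘunif hindep V V' hV0.le hVV hV'
    have hp2 : 0 < 1 - G V := by rw [hGF, hX]; exact hp
    have ht : Tendsto (fun n : ℕ => 1 / (n : ℝ)) atTop (𝓝 0) := tendsto_one_div_atTop_nhds_zero_nat
    filter_upwards [ht.eventually_lt_const hp2, eventually_gt_atTop 0] with n h1 h2
    have h3 : (0 : ℝ) < 1 / (n : ℝ) := by positivity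
    have h4 := aux_quantile μ X hXm hna (1 - 1 / (n : ℝ)) (by linarith) V
      (by have : (μ {ω | X ω ≤ V}).toReal = G V := by rw [hG]
          rw [this]; linarith)
    rw [hb n, hG]
    exact ⟨hUV.le.trans h4.1, h4.2⟩
  obtain ⟨V₀, hV1, hV2, hV3⟩ := hnx U₀ hU₀
  have hb0 : ∀ᶠ n in atTop, 0 < b n := (hbU V₀ hV3).mono fun n h => hV2.trans_le h.1
  have htail : ∀ᶠ n : ℕ in atTop, μ.real {ω | b n < X ω} = 1 / (n : ℝ) := by
    filter_upwards [hbU U₀ hU₀] with n h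
    rw [← hGF, h.2]; ring
  have hposb : ∀ᶠ n in atTop, 0 < H (b n) := by
    filter_upwards [htail, hb0, eventually_gt_atTop 0] with n h1 h2 h3
    have h4 : μ.real {ω | b n < X ω} ≤ H (b n) := by
      refine ENNReal.toReal_mono (measure_ne_top _ _) (measure_mono_ae ?_)
      filter_upwards [hRpos] with ω hω hmem
      change b n < X ω at hmem
      change b n < R ω
      rw [hX] at hmem
      simp only at hmem
      nlinarith [Real.cos_le_one (Θ ω)]
    have : (0 : ℝ) < 1 / (n : ℝ) := by positivity
    linarith
  have hbl : Tendsto b atTop l := by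
    intro s hs
    obtain ⟨U, hU, h⟩ := (hl (· ∈ s)).1 hs
    rw [mem_map]
    filter_upwards [hbU U hU, hposb] with n h1 h2
    exact h _ h1.1 h2
  have hapos : ∀ n, 0 < a n := fun n => by rw [ha]; exact hap _
  have hq : Tendsto (fun n => b n / a n) atTop atTop := by
    refine (hqw.comp hbl).congr fun n => ?_
    simp [ha n]
  have hGs : ∀ s : ℝ, Tendsto (fun n => H (b n + a n * s) / H (b n)) atTop (𝓝 (Real.exp (-s))) := by
    intro s
    refine ((hG' s).comp hbl).congr fun n => ?_
    simp only [Function.comp, ha n]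
  have hpot : ∀ᶠ n in atTop, ∀ t, 0 ≤ t → H (b n + a n * t) ≤ 3 / (2 + t) * H (b n) := by
    filter_upwards [hbU U₀ hU₀, hposb] with n h1 h2 t ht
    obtain ⟨k, hk⟩ := exists_nat_ge t
    rw [ha n]
    exact aux_potter H (fun u => 1 / w u) hH hap U₀ hgd k (b n) h1.1 h2 t ht hk
  have hHR' : Tendsto (fun n => (1 - ρ n) * (b n / a n)) atTop (𝓝 0) := by
    refine hHR.congr fun n => ?_
    rw [mul_div_assoc]
  intro x y
  have k1 := aux_key μ R Θ hRm hΘm hRpos hΘunif hindep H (fun _ => rfl) hH a b hapos hposb hb0 hq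
    hGs hpot ρ hρ hHR' x y
  have k2 := aux_key μ R Θ hRm hΘm hRpos hΘunif hindep H (fun _ => rfl) hH a b hapos hposb hb0 hq
    hGs hpot (fun _ => 1) (fun _ => by simp) (by simp) 0 0
  have hpi : 0 < Real.sqrt π := Real.sqrt_pos.2 Real.pi_pos
  have k3 := k1.div k2 (by positivity)
  simp only [max_self, neg_zero, Real.exp_zero, one_mul] at k3
  rw [mul_div_cancel_right₀ _ hpi.ne'] at k3
  refine k3.congr' ?_
  filter_upwards [htail, hposb, hb0, eventually_gt_atTop 0] with n h1 h2 h3 h4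
  have h5 : {ω | a n * 0 + b n < R ω * Real.cos (Θ ω) ∧ a n * 0 + b n <
      |R ω * Real.cos (Θ ω)| + Real.sqrt (1 - 1 ^ 2) * (R ω * Real.sin (Θ ω))} = {ω | b n < X ω} := by
    ext ω
    simp only [mem_ofPred_eq, hX]
    constructor
    · intro h; linarith [h.1]
    · intro h
      have := le_abs_self (R ω * Real.cos (Θ ω))
      refine ⟨by linarith, ?_⟩
      rw [one_pow, sub_self, Real.sqrt_zero, zero_mul]; linarith
  simp only [Pi.div_apply]
  have hB : 0 < H (b n) * Real.sqrt (2 / (b n / a n)) / (2 * π) := by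
    have := Real.pi_pos
    have := hapos n
    have : 0 < Real.sqrt (2 / (b n / a n)) := Real.sqrt_pos.2 (by positivity)
    positivity
  rw [h5, h1, div_div_div_cancel_right₀ hB.ne', hX, hY, div_div_eq_mul_div, div_one, mul_comm]
  rfl
end

section
/- If ρ_n = ρ for a fixed ρ ∈ (0,1) and all large n, then for all x, y ∈ ℝ, lim_{n→∞} [P(X ≤ a_n·x + b_n, ρ|X| + √(1-ρ²)·Y ≤ a_n·y + b_n + a_n·ln 2)]^n = Λ(x)·Λ(y), where Λ(t) = exp(-e^{-t}); that is, the normalized componentwise maxima of the half-skew triangular array are asymptotically independent. -/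
open MeasureTheory Filter Real Set ProbabilityTheory Topology

lemma aux_step (Fb w : ℝ → ℝ) (l : Filter ℝ) (hanti : Antitone Fb)
    (hw : ∀ x, 0 < w x)
    (hbas : l.HasBasis (fun c => 0 < Fb c) (fun c => {u | c < u ∧ 0 < Fb u}))
    (hpos : ∀ᶠ u in l, 0 < Fb u)
    (hG : ∀ s : ℝ, Tendsto (fun u => Fb (u + s / w u) / Fb u) l (𝓝 (Real.exp (-s)))) :
    ∀ᶠ u in l, 0 < Fb (u + 1 / w u) ∧ Fb (u + 1 / w u) ≤ 1 / 2 * Fb u ∧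
      1 / w (u + 1 / w u) ≤ 2 / w u := by
  have h1 := hG 1
  have hpos1 : ∀ᶠ u in l, 0 < Fb (u + 1 / w u) := by
    filter_upwards [h1.eventually (lt_mem_nhds (Real.exp_pos _)), hpos] with u hu hp
    exact (div_pos_iff_of_pos_right hp).1 hu
  have hT : Tendsto (fun u => u + 1 / w u) l l := by
    rw [hbas.tendsto_right_iff]
    intro c hc
    filter_upwards [hpos1, hbas.mem_of_mem hc] with u hu hc'
    have := hw u
    have : 0 < 1 / w u := by positivity
    exact ⟨by linarith [hc'.1], hu⟩
  have he1 : Real.exp (-1) < 1 / 2 := by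
    have := Real.exp_one_gt_d9
    rw [Real.exp_neg, one_div]
    apply inv_strictAnti₀ <;> linarith
  have h2 : Tendsto (fun u => Fb ((u + 1 / w u) + 1 / w (u + 1 / w u)) / Fb u) l
      (𝓝 (Real.exp (-2))) := by
    have h := (h1.comp hT).mul h1
    rw [← Real.exp_add] at h
    norm_num at h
    refine h.congr' ?_
    filter_upwards [hpos1] with u hu
    have : Fb (u + (w u)⁻¹) ≠ 0 := by simpa using hu.ne'
    simp only [one_div]
    field_simp
  have h3 := hG 3
  have h32 : Real.exp (-3) < Real.exp (-2) := Real.exp_lt_exp.2 (by norm_num)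
  filter_upwards [hpos1, hpos, h1.eventually (gt_mem_nhds he1),
    h3.eventually_lt h2 h32] with u hu hp hle hlt
  refine ⟨hu, ?_, ?_⟩
  · rw [div_lt_iff₀ hp] at hle
    exact hle.le
  · by_contra hcon
    push Not at hcon
    rw [div_lt_div_iff_of_pos_right hp] at hlt
    have : Fb (u + 1 / w u + 1 / w (u + 1 / w u)) ≤ Fb (u + 3 / w u) := by
      apply hanti
      have : 3 / w u = 1 / w u + 2 / w u := by ring
      linarith
    linarith

lemma aux_decay (Fb w : ℝ → ℝ) (l : Filter ℝ) (hanti : Antitone Fb)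
    (hw : ∀ x, 0 < w x)
    (hbas : l.HasBasis (fun c => 0 < Fb c) (fun c => {u | c < u ∧ 0 < Fb u}))
    (hpos : ∀ᶠ u in l, 0 < Fb u)
    (hG : ∀ s : ℝ, Tendsto (fun u => Fb (u + s / w u) / Fb u) l (𝓝 (Real.exp (-s)))) :
    ∀ᶠ u in l, ∀ t : ℝ, 1 ≤ t → Fb (u + t / w u) ≤ 2 / t * Fb u := by
  obtain ⟨c, hc, hcs⟩ := hbas.eventually_iff.1 (aux_step Fb w l hanti hw hbas hpos hG)
  have key : ∀ u, c < u → 0 < Fb u → ∀ k : ℕ, ∃ z, c < z ∧ 0 < Fb z ∧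
      z ≤ u + (2 ^ k - 1) / w u ∧ 1 / w z ≤ 2 ^ k / w u ∧ Fb z ≤ (1 / 2) ^ k * Fb u := by
    intro u hu hFu k
    induction k with
    | zero => exact ⟨u, hu, hFu, by simp, by simp, by simp⟩
    | succ k ih =>
      obtain ⟨z, hz, hFz, h1, h2, h3⟩ := ih
      obtain ⟨g1, g2, g3⟩ := hcs (show z ∈ {u | c < u ∧ 0 < Fb u} from ⟨hz, hFz⟩)
      have hwz := hw z
      have : 0 < 1 / w z := by positivity
      refine ⟨z + 1 / w z, by linarith, g1, ?_, ?_, ?_⟩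
      · have e : (2 ^ (k+1) - 1) / w u = (2 ^ k - 1) / w u + 2 ^ k / w u := by ring
        linarith
      · have e : (2:ℝ) ^ (k+1) / w u = 2 * (2 ^ k / w u) := by ring
        have e2 : 2 / w z = 2 * (1 / w z) := by ring
        linarith
      · rw [pow_succ]
        nlinarith
  filter_upwards [hbas.mem_of_mem hc] with u hu t ht
  obtain ⟨k, hk1, hk2⟩ := exists_nat_pow_near ht (by norm_num : (1:ℝ) < 2)
  obtain ⟨z, -, -, h1, -, h3⟩ := key u hu.1 hu.2 k
  have hwu := hw u
  have h4 : Fb (u + t / w u) ≤ Fb z := by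
    apply hanti
    have : (2 ^ k - 1) / w u ≤ t / w u := by gcongr; linarith
    linarith
  have h5 : ((1:ℝ) / 2) ^ k ≤ 2 / t := by
    rw [div_pow, one_pow, div_le_div_iff₀ (by positivity) (by linarith)]
    rw [pow_succ] at hk2
    linarith
  calc _ ≤ _ := h4
    _ ≤ _ := h3
    _ ≤ _ := by gcongr; exact hu.2.le

lemma aux_bound (Fb w : ℝ → ℝ) (l : Filter ℝ) (hanti : Antitone Fb)
    (hw : ∀ x, 0 < w x)
    (hbas : l.HasBasis (fun c => 0 < Fb c) (fun c => {u | c < u ∧ 0 < Fb u}))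
    (hpos : ∀ᶠ u in l, 0 < Fb u)
    (hG : ∀ s : ℝ, Tendsto (fun u => Fb (u + s / w u) / Fb u) l (𝓝 (Real.exp (-s))))
    (S : ℝ) (hS : 0 ≤ S) :
    ∃ K : ℝ, 0 ≤ K ∧ ∀ᶠ u in l, ∀ t : ℝ, -S ≤ t → Fb (u + t / w u) / Fb u ≤ K / (1 + t + S) := by
  refine ⟨(Real.exp S + 2) * (2 + S), by positivity, ?_⟩
  have h0 := hG (-S)
  rw [neg_neg] at h0
  filter_upwards [aux_decay Fb w l hanti hw hbas hpos hG, hpos,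
    h0.eventually (gt_mem_nhds (lt_add_one _))] with u h1 hp h2 t ht
  have hwu := hw u
  have hE := Real.exp_pos S
  rw [le_div_iff₀ (by linarith)]
  rcases le_or_gt 1 t with h | h
  · have h3 := h1 t h
    have : Fb (u + t / w u) / Fb u ≤ 2 / t := by rw [div_le_iff₀ hp]; exact h3
    calc _ ≤ 2 / t * (1 + t + S) := by gcongr
      _ ≤ 2 * (2 + S) := by
        rw [div_mul_eq_mul_div, div_le_iff₀ (by linarith)]
        nlinarith
      _ ≤ _ := by gcongr; linarith
  · have : Fb (u + t / w u) / Fb u ≤ Real.exp S + 1 := by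
      refine le_trans ?_ h2.le
      gcongr
      apply hanti
      gcongr
    calc _ ≤ (Real.exp S + 1) * (2 + S) := by
          gcongr <;> linarith
      _ ≤ _ := by gcongr; linarith

lemma aux_move (Fb w : ℝ → ℝ) (l : Filter ℝ) (hanti : Antitone Fb)
    (hw : ∀ x, 0 < w x)
    (hpos : ∀ᶠ u in l, 0 < Fb u)
    (hG : ∀ s : ℝ, Tendsto (fun u => Fb (u + s / w u) / Fb u) l (𝓝 (Real.exp (-s))))
    (τ : ℝ → ℝ) (t : ℝ) (hτ : Tendsto τ l (𝓝 t)) :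
    Tendsto (fun u => Fb (u + τ u / w u) / Fb u) l (𝓝 (Real.exp (-t))) := by
  have hcont : Continuous fun s : ℝ => Real.exp (-s) := by fun_prop
  rw [tendsto_order]
  constructor
  · intro A hA
    obtain ⟨s, hs1, hs2⟩ := (((hcont.tendsto t).mono_left (nhdsWithin_le_nhds (s := Ioi t))).eventually
      (lt_mem_nhds hA) |>.and self_mem_nhdsWithin).exists
    filter_upwards [(hG s).eventually (lt_mem_nhds hs1), hτ.eventually (gt_mem_nhds hs2), hpos]
      with u h1 h2 hp
    refine h1.trans_le ?_
    have := hw u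
    gcongr
    apply hanti
    gcongr
  · intro A hA
    obtain ⟨s, hs1, hs2⟩ := (((hcont.tendsto t).mono_left (nhdsWithin_le_nhds (s := Iio t))).eventually
      (gt_mem_nhds hA) |>.and self_mem_nhdsWithin).exists
    filter_upwards [(hG s).eventually (gt_mem_nhds hs1), hτ.eventually (lt_mem_nhds hs2), hpos]
      with u h1 h2 hp
    refine lt_of_le_of_lt ?_ h1
    have := hw u
    gcongr
    apply hanti
    gcongr

lemma aux_cos_s4 (φ s : ℝ) : Tendsto (fun v : ℝ => (v + s) / Real.cos (φ / √v) - v) atTop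
    (𝓝 (s + φ ^ 2 / 2)) := by
  have hx : Tendsto (fun v : ℝ => (√v)⁻¹) atTop (𝓝[>] 0) :=
    tendsto_inv_atTop_nhdsGT_zero.comp Real.tendsto_sqrt_atTop
  have hx0 := hx.mono_right nhdsWithin_le_nhds
  have hc : Tendsto (fun v : ℝ => Real.cos (φ / √v)) atTop (𝓝 1) := by
    have : Tendsto (fun v : ℝ => Real.cos (φ * (√v)⁻¹)) atTop (𝓝 (Real.cos (φ * 0))) :=
      (Real.continuous_cos.tendsto _).comp (hx0.const_mul φ)
    simpa [div_eq_mul_inv] using this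
  have hs : Tendsto (fun v : ℝ => √v * Real.sin (φ / 2 * (√v)⁻¹)) atTop (𝓝 (φ / 2)) := by
    have hd : HasDerivAt (fun x : ℝ => Real.sin (φ / 2 * x)) (φ / 2) 0 := by
      have := ((hasDerivAt_id (0:ℝ)).const_mul (φ / 2)).sin
      simpa using this
    have h := (hasDerivAt_iff_tendsto_slope_zero.1 hd).comp
      (hx.mono_right (nhdsWithin_mono _ (fun x (hx : 0 < x) => hx.ne')))
    simpa [Function.comp_def] using h
  have hlim : Tendsto (fun v : ℝ => (s + 2 * (√v * Real.sin (φ / 2 * (√v)⁻¹)) ^ 2) / Real.cos (φ / √v))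
      atTop (𝓝 ((s + 2 * (φ / 2) ^ 2) / 1)) :=
    (((hs.pow 2).const_mul 2).const_add s).div hc one_ne_zero
  have e : (s + 2 * (φ / 2) ^ 2) / 1 = s + φ ^ 2 / 2 := by ring
  rw [e] at hlim
  refine hlim.congr' ?_
  filter_upwards [hc.eventually (lt_mem_nhds zero_lt_one), eventually_gt_atTop 0] with v h1 h2
  have h3 : Real.cos (φ / √v) = 1 - 2 * Real.sin (φ / 2 * (√v)⁻¹) ^ 2 := by
    have : φ / √v = 2 * (φ / 2 * (√v)⁻¹) := by ring
    rw [this, Real.cos_two_mul, Real.cos_sq']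
    ring
  rw [mul_pow, Real.sq_sqrt h2.le, eq_sub_iff_add_eq, div_add' _ _ _ h1.ne']
  congr 1
  rw [h3]; ring

lemma aux_asymp (Fb w : ℝ → ℝ) (l : Filter ℝ) [l.IsCountablyGenerated] (hanti : Antitone Fb)
    (hw : ∀ x, 0 < w x)
    (hbas : l.HasBasis (fun c => 0 < Fb c) (fun c => {u | c < u ∧ 0 < Fb u}))
    (hpos : ∀ᶠ u in l, 0 < Fb u) (hnn : ∀ u, 0 ≤ Fb u)
    (hG : ∀ s : ℝ, Tendsto (fun u => Fb (u + s / w u) / Fb u) l (𝓝 (Real.exp (-s))))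
    (hv : Tendsto (fun u => u * w u) l atTop) (s : ℝ) :
    Tendsto (fun u => √(u * w u) *
      (∫ θ : ℝ, if |θ| < π / 2 then Fb ((u + s / w u) / Real.cos θ) else 0) / Fb u) l
      (𝓝 (Real.exp (-s) * √(2 * π))) := by
  obtain ⟨K, hK, hb⟩ := aux_bound Fb w l hanti hw hbas hpos hG |s| (abs_nonneg s)
  have hπ := Real.pi_pos
  have hint : Integrable (fun φ : ℝ => K * (1 + (φ / π) ^ 2)⁻¹) :=
    (integrable_inv_one_add_sq.comp_div hπ.ne').const_mul K
  have hval : ∫ φ : ℝ, Real.exp (-(s + φ ^ 2 / 2)) = Real.exp (-s) * √(2 * π) := by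
    have h := integral_gaussian (1 / 2)
    have : π / (1 / 2) = 2 * π := by ring
    rw [this] at h
    rw [← h, ← integral_const_mul]
    congr 1
    ext φ
    rw [← Real.exp_add]
    congr 1
    ring
  have heq : ∀ u, 0 < u * w u → √(u * w u) *
      (∫ θ : ℝ, if |θ| < π / 2 then Fb ((u + s / w u) / Real.cos θ) else 0) / Fb u =
      ∫ φ : ℝ, (if |φ / √(u * w u)| < π / 2 then
        Fb ((u + s / w u) / Real.cos (φ / √(u * w u))) else 0) / Fb u := by
    intro u hu
    rw [integral_div]
    congr 1
    have := Measure.integral_comp_div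
      (fun θ : ℝ => if |θ| < π / 2 then Fb ((u + s / w u) / Real.cos θ) else 0) (√(u * w u))
    rw [this, abs_of_nonneg (Real.sqrt_nonneg _), smul_eq_mul]
  have hform : ∀ u c, (u + s / w u) / c = u + ((u * w u + s) / c - u * w u) / w u := by
    intro u c
    have := (hw u).ne'
    field_simp
    ring
  rw [← hval]
  have hmain : Tendsto (fun u => ∫ φ : ℝ, (if |φ / √(u * w u)| < π / 2 then
        Fb ((u + s / w u) / Real.cos (φ / √(u * w u))) else 0) / Fb u) l
      (𝓝 (∫ φ : ℝ, Real.exp (-(s + φ ^ 2 / 2)))) := by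
    refine tendsto_integral_filter_of_dominated_convergence _ ?_ ?_ hint ?_
    · refine Eventually.of_forall fun u => ?_
      refine Measurable.aestronglyMeasurable ?_
      refine Measurable.div_const (Measurable.ite ?_ ?_ measurable_const) _
      · exact measurableSet_lt (by fun_prop) (by fun_prop)
      · exact hanti.measurable.comp (by fun_prop)
    · filter_upwards [hb, hpos, hv.eventually_ge_atTop (2 * |s| + 1)] with u h1 hp h2
      refine Eventually.of_forall fun φ => ?_
      set v := u * w u with hvdef
      have hs0 := abs_nonneg s
      have hs1 := neg_abs_le s
      have hv0 : 0 < v := by linarith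
      split_ifs with hθ
      · set θ := φ / √v with hθd
        have hc : 0 < Real.cos θ := by
          apply Real.cos_pos_of_mem_Ioo
          rw [abs_lt] at hθ
          exact ⟨by linarith [hθ.1], hθ.2⟩
        have hq := Real.cos_le_one_sub_mul_cos_sq (x := θ) (by linarith)
        have hinv : 1 + 2 / π ^ 2 * θ ^ 2 ≤ 1 / Real.cos θ := by
          rw [le_div_iff₀ hc]
          have : 0 ≤ 2 / π ^ 2 * θ ^ 2 := by positivity
          nlinarith
        have hθ2 : v * θ ^ 2 = φ ^ 2 := by
          rw [hθd, div_pow, Real.sq_sqrt hv0.le]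
          field_simp
        rw [hform u, ← hvdef, Real.norm_of_nonneg (div_nonneg (hnn _) hp.le)]
        have hτ : s + φ ^ 2 / π ^ 2 ≤ (v + s) / Real.cos θ - v := by
          have h3 : (v + s) * (1 + 2 / π ^ 2 * θ ^ 2) ≤ (v + s) * (1 / Real.cos θ) := by
            gcongr; linarith
          have h4 : (v / 2) * (2 / π ^ 2 * θ ^ 2) ≤ (v + s) * (2 / π ^ 2 * θ ^ 2) := by
            gcongr; linarith
          have h5 : (v / 2) * (2 / π ^ 2 * θ ^ 2) = φ ^ 2 / π ^ 2 := by
            rw [← hθ2]; ring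
          have h6 : (v + s) / Real.cos θ = (v + s) * (1 / Real.cos θ) := by ring
          rw [h6]
          nlinarith
        have hφ : 0 ≤ φ ^ 2 / π ^ 2 := by positivity
        refine (h1 _ (by linarith)).trans ?_
        rw [div_eq_mul_inv, div_pow]
        refine mul_le_mul_of_nonneg_left (inv_anti₀ (by linarith) (by linarith)) hK
      · simp only [zero_div, norm_zero]
        positivity
    · refine Eventually.of_forall fun φ => ?_
      have hτ := (aux_cos_s4 φ s).comp hv
      have := aux_move Fb w l hanti hw hpos hG _ _ hτ
      refine this.congr' ?_
      have h0 : Tendsto (fun u => |φ / √(u * w u)|) l (𝓝 0) := by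
        have := ((Real.tendsto_sqrt_atTop.comp hv).const_div_atTop φ).abs
        simpa using this
      filter_upwards [h0.eventually (gt_mem_nhds (by positivity : (0:ℝ) < π / 2))] with u hu
      rw [if_pos hu, hform u]
      rfl
  refine hmain.congr' ?_
  filter_upwards [hv.eventually_gt_atTop 0] with u hu
  rw [heq u hu]

lemma aux_negl (Fb w : ℝ → ℝ) (l : Filter ℝ) (hanti : Antitone Fb)
    (hw : ∀ x, 0 < w x)
    (hbas : l.HasBasis (fun c => 0 < Fb c) (fun c => {u | c < u ∧ 0 < Fb u}))
    (hpos : ∀ᶠ u in l, 0 < Fb u) (hnn : ∀ u, 0 ≤ Fb u)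
    (hG : ∀ s : ℝ, Tendsto (fun u => Fb (u + s / w u) / Fb u) l (𝓝 (Real.exp (-s))))
    (hv : Tendsto (fun u => u * w u) l atTop) (s κ : ℝ) (hκ : 1 < κ) :
    Tendsto (fun u => √(u * w u) * Fb (κ * (u + s / w u)) / Fb u) l (𝓝 0) := by
  have hlim : Tendsto (fun u => 4 / (κ - 1) / √(u * w u)) l (𝓝 0) :=
    (Real.tendsto_sqrt_atTop.comp hv).const_div_atTop _
  refine squeeze_zero' ?_ ?_ hlim
  · filter_upwards [hpos] with u hu
    have := hnn (κ * (u + s / w u))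
    positivity
  · have hv1 : Tendsto (fun u => (κ - 1) / 2 * (u * w u)) l atTop :=
      hv.const_mul_atTop (by linarith)
    filter_upwards [hpos, aux_decay Fb w l hanti hw hbas hpos hG, hv.eventually_gt_atTop 0,
      hv1.eventually_ge_atTop (κ * |s| + 1)] with u hp h1 h0 h2
    set v := u * w u with hvd
    have hwu := hw u
    have hks : 0 ≤ κ * |s| := by positivity
    have hsk : -(κ * |s|) ≤ κ * s := by
      rw [← mul_neg]; gcongr; exact neg_abs_le s
    have hle : Fb (κ * (u + s / w u)) ≤ Fb (u + ((κ - 1) / 2 * v) / w u) := by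
      apply hanti
      have e1 : κ * (u + s / w u) = u + ((κ - 1) * v + κ * s) / w u := by
        rw [hvd]; field_simp; ring
      rw [e1]
      gcongr
      linarith
    have h3 := h1 ((κ - 1) / 2 * v) (by linarith)
    have h4 : Fb (κ * (u + s / w u)) / Fb u ≤ 2 / ((κ - 1) / 2 * v) := by
      rw [div_le_iff₀ hp]; exact hle.trans h3
    rw [mul_div_assoc]
    calc √v * (Fb (κ * (u + s / w u)) / Fb u) ≤ √v * (2 / ((κ - 1) / 2 * v)) := by gcongr
      _ = 4 / (κ - 1) / √v := by
        have : κ - 1 ≠ 0 := by linarith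
        have h5 : √v ≠ 0 := (Real.sqrt_pos.2 h0).ne'
        have h6 : v = √v ^ 2 := (Real.sq_sqrt h0.le).symm
        have h7 : (κ - 1) / 2 * v = (κ - 1) / 2 * √v ^ 2 := by rw [← h6]
        rw [h7]
        field_simp
        norm_num

/-- Sequence version: abstract tail function `Gb`. -/
lemma aux_seq (Fb Gb w : ℝ → ℝ) (l : Filter ℝ) [l.NeBot]
    (hantiF : Antitone Fb) (hantiG : Antitone Gb)
    (hw : ∀ x, 0 < w x)
    (hbas : l.HasBasis (fun c => 0 < Fb c) (fun c => {u | c < u ∧ 0 < Fb u}))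
    (hpos : ∀ᶠ u in l, 0 < Fb u) (hle1 : ∀ u, Fb u ≤ 1)
    (hv : Tendsto (fun u => u * w u) l atTop)
    (C : ℝ) (hC : 0 < C)
    (hA : ∀ s, Tendsto (fun u => √(u * w u) * Gb (u + s / w u) / Fb u) l (𝓝 (Real.exp (-s) * C)))
    (hN : ∀ s κ, 1 < κ → Tendsto (fun u => √(u * w u) * Fb (κ * (u + s / w u)) / Fb u) l (𝓝 0))
    (b : ℕ → ℝ) (hb : ∀ n : ℕ, b n = sInf {x | Gb x < 1 / (n : ℝ)}) :
    (∀ s, Tendsto (fun n : ℕ => n * Gb (b n + s / w (b n))) atTop (𝓝 (Real.exp (-s)))) ∧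
    (∀ s κ, 1 < κ → Tendsto (fun n : ℕ => n * Fb (κ * (b n + s / w (b n)))) atTop (𝓝 0)) := by
  have hA0 : Tendsto (fun u => √(u * w u) * Gb u / Fb u) l (𝓝 C) := by
    simpa using hA 0
  have hGpos : ∀ᶠ u in l, 0 < Gb u := by
    filter_upwards [hA0.eventually (lt_mem_nhds hC), hpos, hv.eventually_gt_atTop 0] with u h1 h2 h3
    have h4 : 0 < √(u * w u) := Real.sqrt_pos.2 h3
    rw [mul_div_right_comm] at h1
    exact (mul_pos_iff_of_pos_left (div_pos h4 h2)).1 h1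
  have hG0 : Tendsto Gb l (𝓝 0) := by
    have h1 : Tendsto (fun u => (√(u * w u) * Gb u / Fb u) / √(u * w u)) l (𝓝 0) :=
      hA0.div_atTop (Real.tendsto_sqrt_atTop.comp hv)
    refine squeeze_zero' (hGpos.mono fun _ h => h.le) ?_ h1
    filter_upwards [hGpos, hpos, hv.eventually_gt_atTop 0] with u h1 h2 h3
    have h4 : 0 < √(u * w u) := Real.sqrt_pos.2 h3
    have : √(u * w u) * Gb u / Fb u / √(u * w u) = Gb u / Fb u := by field_simp
    rw [this, le_div_iff₀ h2]
    nlinarith [hle1 u]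
  have hnear : ∀ n : ℕ, 0 < n → ∃ u, 0 < Fb u ∧ Gb u < 1 / (n:ℝ) := by
    intro n hn
    have : (0:ℝ) < 1 / n := by positivity
    exact (hpos.and (hG0.eventually (gt_mem_nhds this))).exists
  have hlow : ∀ u, 0 < Gb u → ∀ᶠ n : ℕ in atTop, 0 < n ∧ ∀ x, Gb x < 1 / (n:ℝ) → u ≤ x := by
    intro u hu
    have h1 : Tendsto (fun n : ℕ => 1 / (n:ℝ)) atTop (𝓝 0) := tendsto_one_div_atTop_nhds_zero_nat
    filter_upwards [h1.eventually (gt_mem_nhds hu), eventually_gt_atTop 0] with n hn h0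
    refine ⟨h0, fun x hx => ?_⟩
    by_contra hcon
    push Not at hcon
    have := hantiG hcon.le
    linarith
  obtain ⟨u0, hu0⟩ := hGpos.exists
  have hbdd : ∀ᶠ n : ℕ in atTop, 0 < n ∧ BddBelow {x | Gb x < 1 / (n:ℝ)} :=
    (hlow u0 hu0).mono fun n hn => ⟨hn.1, u0, fun x hx => hn.2 x hx⟩
  have hbl : Tendsto b atTop l := by
    rw [hbas.tendsto_right_iff]
    intro c hc
    obtain ⟨u, hu1, hu2⟩ := (hGpos.and (hbas.mem_of_mem hc)).exists
    filter_upwards [hlow u hu1, hbdd] with n hn hbd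
    obtain ⟨z, hz1, hz2⟩ := hnear n hn.1
    refine ⟨hu2.1.trans_le ?_, hz1.trans_le (hantiF ?_)⟩
    · rw [hb]
      exact le_csInf ⟨z, hz2⟩ hn.2
    · rw [hb]
      exact csInf_le hbd.2 hz2
  have hratio : ∀ s, Tendsto (fun u => Gb (u + s / w u) / Gb u) l (𝓝 (Real.exp (-s))) := by
    intro s
    have h := (hA s).div hA0 hC.ne'
    rw [mul_div_cancel_right₀ _ hC.ne'] at h
    refine h.congr' ?_
    filter_upwards [hGpos, hpos, hv.eventually_gt_atTop 0] with u h1 h2 h3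
    have h4 : 0 < √(u * w u) := Real.sqrt_pos.2 h3
    simp only [Pi.div_apply]
    field_simp
  have hratN : ∀ s κ, 1 < κ → Tendsto (fun u => Fb (κ * (u + s / w u)) / Gb u) l (𝓝 0) := by
    intro s κ hκ
    have h := (hN s κ hκ).div hA0 hC.ne'
    rw [zero_div] at h
    refine h.congr' ?_
    filter_upwards [hGpos, hpos, hv.eventually_gt_atTop 0] with u h1 h2 h3
    have h4 : 0 < √(u * w u) := Real.sqrt_pos.2 h3
    simp only [Pi.div_apply]
    field_simp
  have hGb := hbl.eventually hGpos
  have hone : Tendsto (fun n : ℕ => n * Gb (b n)) atTop (𝓝 1) := by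
    have hcont : Continuous fun s : ℝ => Real.exp (-s) := by fun_prop
    have hcont2 : Continuous fun s : ℝ => Real.exp s := by fun_prop
    rw [tendsto_order]
    constructor
    · intro A hA'
      have hT : Tendsto (fun s : ℝ => Real.exp (-s)) (𝓝[>] 0) (𝓝 1) := by
        simpa using (hcont.tendsto 0).mono_left (nhdsWithin_le_nhds (s := Ioi 0))
      obtain ⟨ε, h1, h2⟩ := ((hT.eventually (lt_mem_nhds hA')).and self_mem_nhdsWithin).exists
      have h2 : 0 < ε := h2
      have h3 : Tendsto (fun n => (Gb (b n + (-ε) / w (b n)) / Gb (b n))⁻¹) atTop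
          (𝓝 (Real.exp (-ε))) := by
        have := ((hratio (-ε)).comp hbl).inv₀ (Real.exp_pos _).ne'
        rw [← Real.exp_neg, neg_neg] at this
        exact this
      filter_upwards [h3.eventually (lt_mem_nhds h1), hGb, hbdd] with n g1 g2 g3
      refine g1.trans_le ?_
      have hn : (0:ℝ) < n := by exact_mod_cast g3.1
      have hwb := hw (b n)
      have g4 : 1 / (n:ℝ) ≤ Gb (b n + (-ε) / w (b n)) := by
        by_contra hcon
        push Not at hcon
        have := csInf_le g3.2 hcon
        rw [← hb n] at this
        have : 0 < ε / w (b n) := by positivity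
        rw [neg_div] at *
        linarith
      have g5 : 0 < Gb (b n + (-ε) / w (b n)) := lt_of_lt_of_le (by positivity) g4
      rw [inv_div, div_le_iff₀ g5]
      rw [div_le_iff₀ hn] at g4
      nlinarith
    · intro A hA'
      have hT : Tendsto (fun s : ℝ => Real.exp s) (𝓝[>] 0) (𝓝 1) := by
        simpa using (hcont2.tendsto 0).mono_left (nhdsWithin_le_nhds (s := Ioi 0))
      obtain ⟨ε, h1, h2⟩ := ((hT.eventually (gt_mem_nhds hA')).and self_mem_nhdsWithin).exists
      have h2 : 0 < ε := h2
      have h3 : Tendsto (fun n => (Gb (b n + ε / w (b n)) / Gb (b n))⁻¹) atTop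
          (𝓝 (Real.exp ε)) := by
        have := ((hratio ε).comp hbl).inv₀ (Real.exp_pos _).ne'
        rw [← Real.exp_neg, neg_neg] at this
        exact this
      filter_upwards [h3.eventually (gt_mem_nhds h1), hGb, hbdd,
        ((hratio ε).comp hbl).eventually (lt_mem_nhds (Real.exp_pos _))] with n g1 g2 g3 g5
      refine lt_of_le_of_lt ?_ g1
      have hn : (0:ℝ) < n := by exact_mod_cast g3.1
      have hwb := hw (b n)
      have g4 : Gb (b n + ε / w (b n)) < 1 / (n:ℝ) := by
        obtain ⟨z, hz1, hz2⟩ := hnear n g3.1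
        have : sInf {x | Gb x < 1 / (n:ℝ)} < b n + ε / w (b n) := by
          rw [← hb n]
          have : 0 < ε / w (b n) := by positivity
          linarith
        obtain ⟨y, hy1, hy2⟩ := exists_lt_of_csInf_lt ⟨z, hz2⟩ this
        exact (hantiG hy2.le).trans_lt hy1
      have g6 : 0 < Gb (b n + ε / w (b n)) := (div_pos_iff_of_pos_right g2).1 g5
      rw [inv_div, le_div_iff₀ g6]
      rw [lt_div_iff₀ hn] at g4
      nlinarith
  constructor
  · intro s
    have h := hone.mul ((hratio s).comp hbl)
    rw [one_mul] at h
    refine h.congr' ?_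
    filter_upwards [hGb] with n hn
    simp only [Function.comp]
    field_simp
  · intro s κ hκ
    have h := hone.mul ((hratN s κ hκ).comp hbl)
    rw [one_mul] at h
    refine h.congr' ?_
    filter_upwards [hGb] with n hn
    simp only [Function.comp]
    field_simp

lemma aux_rot {Ω : Type*} [MeasurableSpace Ω] (μ : Measure Ω) [IsProbabilityMeasure μ]
    (R Θ : Ω → ℝ) (hRm : Measurable R) (hΘm : Measurable Θ)
    (hΘunif : μ.map Θ = (ENNReal.ofReal (2 * π))⁻¹ • volume.restrict (Ioo (-π) π))
    (hindep : IndepFun R Θ μ) (β t : ℝ) :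
    μ.real {ω | t < R ω * Real.cos (Θ ω - β)} =
      (2 * π)⁻¹ * ∫ θ in (-π)..π, μ.real {ω | t < R ω * Real.cos θ} := by
  have hπ := Real.pi_pos
  have hPR : IsProbabilityMeasure (μ.map R) := Measure.isProbabilityMeasure_map hRm.aemeasurable
  have hPT : IsProbabilityMeasure (μ.map Θ) := Measure.isProbabilityMeasure_map hΘm.aemeasurable
  have hA : MeasurableSet {p : ℝ × ℝ | t < p.1 * Real.cos (p.2 - β)} :=
    measurableSet_lt measurable_const (by fun_prop)
  have h1 : μ {ω | t < R ω * Real.cos (Θ ω - β)} =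
      ∫⁻ θ, μ {ω | t < R ω * Real.cos (θ - β)} ∂(μ.map Θ) := by
    have e : {ω | t < R ω * Real.cos (Θ ω - β)} =
      (fun ω => (R ω, Θ ω)) ⁻¹' {p : ℝ × ℝ | t < p.1 * Real.cos (p.2 - β)} := rfl
    rw [e, ← Measure.map_apply (hRm.prodMk hΘm) hA,
      (indepFun_iff_map_prod_eq_prod_map_map hRm.aemeasurable hΘm.aemeasurable).1 hindep,
      Measure.prod_apply_symm hA]
    refine lintegral_congr fun θ => ?_
    rw [Measure.map_apply hRm (measurable_prodMk_right hA)]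
    rfl
  have hmeas : Measurable fun θ => μ {ω | t < R ω * Real.cos (θ - β)} := by
    have := measurable_measure_prodMk_right (μ := μ.map R) hA
    convert this using 2 with θ
    rw [Measure.map_apply hRm (measurable_prodMk_right hA)]
    rfl
  have h2 : μ.real {ω | t < R ω * Real.cos (Θ ω - β)} =
      ∫ θ, μ.real {ω | t < R ω * Real.cos (θ - β)} ∂(μ.map Θ) := by
    rw [measureReal_def, h1, ← integral_toReal hmeas.aemeasurable
      (Eventually.of_forall fun θ => measure_lt_top _ _)]
    rfl
  rw [h2, hΘunif, integral_smul_measure, ← integral_Ioc_eq_integral_Ioo,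
    ← intervalIntegral.integral_of_le (by linarith), ENNReal.toReal_inv,
    ENNReal.toReal_ofReal (by positivity), smul_eq_mul]
  congr 1
  have hper : Function.Periodic (fun θ => μ.real {ω | t < R ω * Real.cos θ}) (2 * π) := by
    intro θ
    simp only [Real.cos_add_two_pi]
  rw [intervalIntegral.integral_comp_sub_right
    (fun θ => μ.real {ω | t < R ω * Real.cos θ}) β]
  have h3 := hper.intervalIntegral_add_eq (-π - β) (-π)
  have e1 : -π - β + 2 * π = π - β := by ring
  have e2 : -π + 2 * π = π := by ring
  rwa [e1, e2] at h3

lemma aux_line {Ω : Type*} [MeasurableSpace Ω] (μ : Measure Ω) [IsProbabilityMeasure μ]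
    (R : Ω → ℝ) (hRpos : ∀ᵐ ω ∂μ, 0 < R ω) (t : ℝ) (ht : 0 < t) :
    ∫ θ in (-π)..π, μ.real {ω | t < R ω * Real.cos θ} =
      ∫ θ : ℝ, if |θ| < π / 2 then μ.real {ω | t / Real.cos θ < R ω} else 0 := by
  have hπ := Real.pi_pos
  rw [intervalIntegral.integral_of_le (by linarith),
    ← setIntegral_eq_integral_of_forall_compl_eq_zero (s := Ioc (-π) π)
      (f := fun θ : ℝ => if |θ| < π / 2 then μ.real {ω | t / Real.cos θ < R ω} else 0)]
  · refine setIntegral_congr_fun (measurableSet_Ioc (a := (-π : ℝ)) (b := π)) fun θ hθ => ?_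
    have habs : |θ| ≤ π := abs_le.2 ⟨hθ.1.le, hθ.2⟩
    show μ.real {ω | t < R ω * Real.cos θ} =
      if |θ| < π / 2 then μ.real {ω | t / Real.cos θ < R ω} else 0
    split_ifs with h
    · have hc : 0 < Real.cos θ := Real.cos_pos_of_mem_Ioo (by
        rw [abs_lt] at h
        exact ⟨by linarith [h.1], h.2⟩)
      congr 1
      ext ω
      simp only [Set.mem_ofPred_eq]
      rw [div_lt_iff₀ hc]
    · have hc : Real.cos θ ≤ 0 := by
        rw [← Real.cos_abs]
        exact Real.cos_nonpos_of_pi_div_two_le_of_le (not_lt.1 h) (by linarith)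
      rw [measureReal_def, measure_eq_zero_iff_ae_notMem.2, ENNReal.toReal_zero]
      filter_upwards [hRpos] with ω hω hcon
      have hcon : t < R ω * Real.cos θ := hcon
      nlinarith
  · intro θ hθ
    rw [if_neg]
    intro h
    rw [abs_lt] at h
    exact hθ ⟨by linarith [h.1], by linarith [h.2]⟩

lemma aux_pair (r A B t1 t2 m : ℝ) (hr : 0 < r) (hm1 : m ≤ t1) (hm2 : m ≤ t2)
    (hc : 0 < Real.cos ((A - B) / 2))
    (h1 : t1 < r * Real.cos A) (h2 : t2 < r * Real.cos B) :
    1 / Real.cos ((A - B) / 2) * m < r := by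
  have h : Real.cos A + Real.cos B = 2 * Real.cos ((A + B) / 2) * Real.cos ((A - B) / 2) :=
    Real.cos_add_cos A B
  have h3 : Real.cos A + Real.cos B ≤ 2 * Real.cos ((A - B) / 2) := by
    rw [h]
    nlinarith [Real.cos_le_one ((A + B) / 2)]
  rw [one_div_mul_eq_div, div_lt_iff₀ hc]
  nlinarith

lemma aux_max (ρ θ α : ℝ) (h0 : 0 < ρ) (hα1 : Real.cos α = ρ) (hα2 : Real.sin α = √(1 - ρ ^ 2))
    (r t : ℝ) (hr : 0 < r) :
    (t < ρ * |r * Real.cos θ| + √(1 - ρ ^ 2) * (r * Real.sin θ)) ↔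
      (t < r * Real.cos (θ - α) ∨ t < r * Real.cos (θ - (π - α))) := by
  have e1 : r * Real.cos (θ - α) = ρ * (r * Real.cos θ) + √(1 - ρ ^ 2) * (r * Real.sin θ) := by
    rw [Real.cos_sub, hα1, hα2]; ring
  have e2 : r * Real.cos (θ - (π - α)) =
      ρ * (-(r * Real.cos θ)) + √(1 - ρ ^ 2) * (r * Real.sin θ) := by
    rw [Real.cos_sub, Real.cos_pi_sub, Real.sin_pi_sub, hα1, hα2]; ring
  rw [e1, e2, ← lt_max_iff, max_add_add_right, ← mul_max_of_nonneg _ _ h0.le]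
  rfl

lemma aux_incl {Ω : Type*} [MeasurableSpace Ω] (μ : Measure Ω) [IsProbabilityMeasure μ]
    (A B C : Set Ω) (hA : MeasurableSet A) (hB : MeasurableSet B) (hC : MeasurableSet C) :
    μ.real A + μ.real B + μ.real C - (μ.real (A ∩ B) + μ.real (A ∩ C) + μ.real (B ∩ C))
      ≤ μ.real (A ∪ (B ∪ C)) ∧
    μ.real (A ∪ (B ∪ C)) ≤ μ.real A + μ.real B + μ.real C := by
  have h1 := measureReal_union_add_inter (μ := μ) (s := A) (hB.union hC)
  have h2 := measureReal_union_add_inter (μ := μ) (s := B) hC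
  have h3 : μ.real (A ∩ (B ∪ C)) ≤ μ.real (A ∩ B) + μ.real (A ∩ C) := by
    rw [inter_union_distrib_left]
    exact measureReal_union_le _ _
  have h4 : 0 ≤ μ.real (A ∩ (B ∪ C)) := measureReal_nonneg
  have h5 : 0 ≤ μ.real (B ∩ C) := measureReal_nonneg
  constructor <;> linarith

theorem maxima_half_skew_gumbel_fixed_rho_independent
{Ω : Type*} [MeasurableSpace Ω] (μ : Measure Ω) [IsProbabilityMeasure μ]
    (R Θ : Ω → ℝ) (hRm : Measurable R) (hΘm : Measurable Θ)
    (hRpos : ∀ᵐ ω ∂μ, 0 < R ω)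
    (hΘunif : μ.map Θ = (ENNReal.ofReal (2 * π))⁻¹ • volume.restrict (Ioo (-π) π))
    (hindep : IndepFun R Θ μ)
    (X Y : Ω → ℝ)
    (hX : X = fun ω => R ω * Real.cos (Θ ω))
    (hY : Y = fun ω => R ω * Real.sin (Θ ω))
    (F G : ℝ → ℝ)
    (hF : F = fun x => (μ {ω | R ω ≤ x}).toReal)
    (hG : G = fun x => (μ {ω | X ω ≤ x}).toReal)
    (w : ℝ → ℝ) (hw : ∀ x, 0 < w x)
    (l : Filter ℝ)
    (hendpoint : (l = atTop ∧ ∀ x, F x < 1) ∨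
      (l = nhdsWithin 1 (Iio 1) ∧ (∀ x < 1, F x < 1) ∧ ∀ x, 1 ≤ x → F x = 1))
    (hGumbel : ∀ s : ℝ,
      Tendsto (fun u => (1 - F (u + s / w u)) / (1 - F u)) l (𝓝 (Real.exp (-s))))
    (b a : ℕ → ℝ)
    (hb : ∀ n : ℕ, b n = sInf {x | 1 - 1 / (n : ℝ) < G x})
    (ha : ∀ n : ℕ, a n = 1 / w (b n))
    (ρ : ℝ) (hρ : ρ ∈ Ioo (0 : ℝ) 1) :
    ∀ x y : ℝ,
      Tendsto (fun n : ℕ =>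
          ((μ {ω | X ω ≤ a n * x + b n ∧
            ρ * |X ω| + Real.sqrt (1 - ρ ^ 2) * Y ω ≤
              a n * y + b n + a n * Real.log 2}).toReal) ^ n)
        atTop (𝓝 (Real.exp (-Real.exp (-x)) * Real.exp (-Real.exp (-y)))) := by
  have hπ := Real.pi_pos
  have hXm : Measurable X := by rw [hX]; fun_prop
  have hYm : Measurable Y := by rw [hY]; fun_prop
  -- tails
  obtain ⟨Fb, hFb⟩ : ∃ Fb : ℝ → ℝ, Fb = fun x => μ.real {ω | x < R ω} := ⟨_, rfl⟩
  obtain ⟨Gb, hGb⟩ : ∃ Gb : ℝ → ℝ, Gb = fun x => μ.real {ω | x < X ω} := ⟨_, rfl⟩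
  have hFF : ∀ x, 1 - F x = Fb x := by
    intro x
    have h := probReal_compl_eq_one_sub (μ := μ) (measurableSet_le hRm (measurable_const (a := x)))
    rw [hF, hFb]
    simp only [← measureReal_def]
    rw [← h]
    congr 1
    ext ω; simp
  have hGG : ∀ x, 1 - G x = Gb x := by
    intro x
    have h := probReal_compl_eq_one_sub (μ := μ) (measurableSet_le hXm (measurable_const (a := x)))
    rw [hG, hGb]
    simp only [← measureReal_def]
    rw [← h]
    congr 1
    ext ω; simp
  simp only [hFF] at hGumbel
  have hantiF : Antitone Fb := by
    intro x y hxy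
    rw [hFb]
    exact measureReal_mono fun ω (h : y < R ω) => lt_of_le_of_lt hxy h
  have hantiG : Antitone Gb := by
    intro x y hxy
    rw [hGb]
    exact measureReal_mono fun ω (h : y < X ω) => lt_of_le_of_lt hxy h
  have hnn : ∀ u, 0 ≤ Fb u := fun u => by rw [hFb]; exact measureReal_nonneg
  have hle1 : ∀ u, Fb u ≤ 1 := fun u => by rw [hFb]; exact measureReal_le_one
  have hF0 : ∀ u ≤ 0, Fb u = 1 := by
    intro u hu
    rw [hFb]
    have : μ {ω | u < R ω} = 1 := by
      refine (measure_congr (eventuallyEq_univ.2 ?_)).trans measure_univ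
      filter_upwards [hRpos] with ω hω
      exact lt_of_le_of_lt hu hω
    simp [measureReal_def, this]
  have hFlim : Tendsto Fb atTop (𝓝 0) := by
    have hPR : IsProbabilityMeasure (μ.map R) := Measure.isProbabilityMeasure_map hRm.aemeasurable
    have h := (tendsto_cdf_atTop (μ.map R)).const_sub 1
    rw [sub_self] at h
    refine h.congr fun x => ?_
    rw [← hFF x, cdf_eq_real, map_measureReal_apply hRm measurableSet_Iic, hF]
    rfl
  -- structure of the filter
  obtain ⟨hne, hcg, hbas, hpos, hv⟩ : l.NeBot ∧ l.IsCountablyGenerated ∧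
      l.HasBasis (fun c => 0 < Fb c) (fun c => {u | c < u ∧ 0 < Fb u}) ∧
      (∀ᶠ u in l, 0 < Fb u) ∧ Tendsto (fun u => u * w u) l atTop := by
    rcases hendpoint with ⟨rfl, h⟩ | ⟨rfl, h1, h2⟩
    · have hp : ∀ x, 0 < Fb x := fun x => by rw [← hFF]; linarith [h x]
      refine ⟨inferInstance, inferInstance, ?_, Eventually.of_forall hp, ?_⟩
      · refine (atTop_basis_Ioi (α := ℝ)).to_hasBasis (fun c _ => ⟨c, hp c, fun u hu => hu.1⟩)
          (fun c _ => ⟨c, trivial, fun u hu => ⟨hu, hp u⟩⟩)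
      · rw [tendsto_atTop]
        intro M
        have hg := hGumbel (-max M 1)
        rw [neg_neg] at hg
        have hE := Real.exp_pos (max M 1)
        filter_upwards [hg.eventually (gt_mem_nhds (lt_add_one _)),
          hFlim.eventually (gt_mem_nhds (by positivity : 0 < 1 / (Real.exp (max M 1) + 1)))]
          with u g1 g2
        by_contra hcon
        push Not at hcon
        have hwu := hw u
        have h3 : u + -max M 1 / w u ≤ 0 := by
          have : u ≤ max M 1 / w u := by
            rw [le_div_iff₀ hwu]
            exact hcon.le.trans (le_max_left _ _)
          rw [neg_div]; linarith
        rw [hF0 _ h3, div_lt_iff₀ (hp u)] at g1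
        rw [lt_div_iff₀ (by positivity)] at g2
        linarith
    · have hp : ∀ x, 0 < Fb x ↔ x < 1 := by
        intro x
        rw [← hFF]
        constructor
        · intro h
          by_contra hcon
          rw [h2 x (not_lt.1 hcon)] at h
          simp at h
        · intro h
          linarith [h1 x h]
      have hpos : ∀ᶠ u in 𝓝[<] (1:ℝ), 0 < Fb u := by
        filter_upwards [self_mem_nhdsWithin] with u hu
        exact (hp u).2 hu
      refine ⟨inferInstance, inferInstance, ?_, hpos, ?_⟩
      · simp only [hp]
        exact nhdsLT_basis (1:ℝ)
      · rw [tendsto_atTop]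
        intro M
        have hM : 0 < max (2 * M) 1 := by positivity
        filter_upwards [(hGumbel (max (2 * M) 1)).eventually (lt_mem_nhds (Real.exp_pos _)), hpos,
          Ioo_mem_nhdsLT (show (1/2:ℝ) < 1 by norm_num)] with u g1 g2 g3
        have g4 := (hp _).1 ((div_pos_iff_of_pos_right g2).1 g1)
        have hwu := hw u
        have g5 : max (2 * M) 1 / w u < 1 := by linarith [g3.1]
        rw [div_lt_one hwu] at g5
        have := le_max_left (2 * M) 1
        nlinarith [g3.1]
  -- asymptotics of `Gb`
  have hrot := aux_rot μ R Θ hRm hΘm hΘunif hindep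
  have hrotG : ∀ β t, μ.real {ω | t < R ω * Real.cos (Θ ω - β)} = Gb t := by
    intro β t
    have h0 := hrot 0 t
    simp only [sub_zero] at h0
    rw [hrot β t, ← h0, hGb, hX]
  have hGform : ∀ t, 0 < t → Gb t =
      (2 * π)⁻¹ * ∫ θ : ℝ, if |θ| < π / 2 then Fb (t / Real.cos θ) else 0 := by
    intro t ht
    rw [← hrotG 0 t, hrot 0 t, aux_line μ R hRpos t ht, hFb]
  have hA : ∀ s, Tendsto (fun u => √(u * w u) * Gb (u + s / w u) / Fb u) l
      (𝓝 (Real.exp (-s) * (√(2 * π) * (2 * π)⁻¹))) := by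
    intro s
    have h := (aux_asymp Fb w l hantiF hw hbas hpos hnn hGumbel hv s).mul_const (2 * π)⁻¹
    rw [mul_assoc] at h
    refine h.congr' ?_
    filter_upwards [hv.eventually_gt_atTop |s|] with u hu
    have hwu := hw u
    have hp : 0 < u + s / w u := by
      have : u + s / w u = (u * w u + s) / w u := by field_simp
      rw [this]
      apply div_pos _ hwu
      linarith [neg_abs_le s]
    rw [hGform _ hp]
    ring
  have hN := fun s κ hκ => aux_negl Fb w l hantiF hw hbas hpos hnn hGumbel hv s κ hκ
  have hb' : ∀ n : ℕ, b n = sInf {x | Gb x < 1 / (n : ℝ)} := by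
    intro n
    rw [hb n]
    congr 1
    ext x
    rw [Set.mem_ofPred_eq, Set.mem_ofPred_eq, ← hGG]
    constructor <;> intro h <;> linarith
  obtain ⟨hS1, hS2⟩ := aux_seq Fb Gb w l hantiF hantiG hw hbas hpos hle1 hv _ (by positivity)
    hA hN b hb'
  intro x y
  -- angle
  have hα0 : 0 < Real.arccos ρ := Real.arccos_pos.2 hρ.2
  have hα2 : Real.arccos ρ < π / 2 := Real.arccos_lt_pi_div_two.2 hρ.1
  have hcα : Real.cos (Real.arccos ρ) = ρ := Real.cos_arccos (by linarith [hρ.1]) hρ.2.le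
  have hsα : Real.sin (Real.arccos ρ) = √(1 - ρ ^ 2) := Real.sin_arccos ρ
  set α := Real.arccos ρ with hα
  clear_value α
  obtain ⟨t1, ht1⟩ : ∃ t1 : ℕ → ℝ, ∀ n, t1 n = b n + x / w (b n) := ⟨_, fun _ => rfl⟩
  obtain ⟨t2, ht2⟩ : ∃ t2 : ℕ → ℝ, ∀ n, t2 n = b n + (y + Real.log 2) / w (b n) :=
    ⟨_, fun _ => rfl⟩
  obtain ⟨m, hm⟩ : ∃ m : ℕ → ℝ, ∀ n, m n = b n + (min x (y + Real.log 2)) / w (b n) :=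
    ⟨_, fun _ => rfl⟩
  have hm1 : ∀ n, m n ≤ t1 n := fun n => by
    have := hw (b n)
    rw [hm, ht1]; gcongr; exact min_le_left _ _
  have hm2 : ∀ n, m n ≤ t2 n := fun n => by
    have := hw (b n)
    rw [hm, ht2]; gcongr; exact min_le_right _ _
  have hL1 : Tendsto (fun n : ℕ => n * Gb (t1 n)) atTop (𝓝 (Real.exp (-x))) := by
    simp only [ht1]; exact hS1 x
  have hL2 : Tendsto (fun n : ℕ => n * Gb (t2 n)) atTop (𝓝 (Real.exp (-y) / 2)) := by
    simp only [ht2]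
    have := hS1 (y + Real.log 2)
    rwa [neg_add, Real.exp_add, Real.exp_neg (Real.log 2), Real.exp_log (by norm_num),
      ← div_eq_mul_inv] at this
  have hLm : ∀ c, 0 < c → c < 1 → Tendsto (fun n : ℕ => n * Fb (1 / c * m n)) atTop (𝓝 0) := by
    intro c h0 h1
    simp only [hm]
    exact hS2 _ _ (by rw [one_div]; exact (one_lt_inv₀ h0).2 h1)
  -- pair bounds
  have hpair : ∀ (β1 β2 : ℝ) (s1 s2 m0 : ℝ), m0 ≤ s1 → m0 ≤ s2 → 0 < Real.cos ((β2 - β1) / 2) →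
      μ.real ({ω | s1 < R ω * Real.cos (Θ ω - β1)} ∩ {ω | s2 < R ω * Real.cos (Θ ω - β2)}) ≤
        Fb (1 / Real.cos ((β2 - β1) / 2) * m0) := by
    intro β1 β2 s1 s2 m0 h1 h2 hc
    rw [hFb]
    refine ENNReal.toReal_mono (measure_ne_top _ _) (measure_mono_ae ?_)
    filter_upwards [hRpos] with ω hω hmem
    have e : (Θ ω - β1) - (Θ ω - β2) = β2 - β1 := by ring
    have := aux_pair (R ω) (Θ ω - β1) (Θ ω - β2) s1 s2 m0 hω h1 h2 (by rw [e]; exact hc)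
      hmem.1 hmem.2
    rw [e] at this
    exact this
  have hcos : ∀ δ, 0 < δ → δ < π → 0 < Real.cos (δ / 2) ∧ Real.cos (δ / 2) < 1 := by
    intro δ h0 h1
    refine ⟨Real.cos_pos_of_mem_Ioo ⟨by linarith, by linarith⟩, ?_⟩
    have := Real.cos_lt_cos_of_nonneg_of_le_pi (x := 0) (y := δ / 2) le_rfl (by linarith)
      (by linarith)
    simpa using this
  obtain ⟨c1p, c1l⟩ := hcos (α - 0) (by linarith) (by linarith)
  obtain ⟨c2p, c2l⟩ := hcos (π - α - 0) (by linarith) (by linarith)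
  obtain ⟨c3p, c3l⟩ := hcos (π - α - α) (by linarith) (by linarith)
  have hEm : ∀ β t, MeasurableSet {ω | t < R ω * Real.cos (Θ ω - β)} := fun β t =>
    measurableSet_lt measurable_const (by fun_prop)
  obtain ⟨U, hU⟩ : ∃ U : ℕ → ℝ, ∀ n, U n = μ.real ({ω | t1 n < R ω * Real.cos (Θ ω - 0)} ∪
      ({ω | t2 n < R ω * Real.cos (Θ ω - α)} ∪ {ω | t2 n < R ω * Real.cos (Θ ω - (π - α))})) :=
    ⟨_, fun _ => rfl⟩
  have hUlim : Tendsto (fun n : ℕ => n * U n) atTop (𝓝 (Real.exp (-x) + Real.exp (-y))) := by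
    have hup : Tendsto (fun n : ℕ => n * Gb (t1 n) + n * Gb (t2 n) + n * Gb (t2 n)) atTop
        (𝓝 (Real.exp (-x) + Real.exp (-y))) := by
      have := (hL1.add hL2).add hL2
      rwa [add_assoc, add_halves] at this
    have hlo := hup.sub (((hLm _ c1p c1l).add (hLm _ c2p c2l)).add (hLm _ c3p c3l))
    simp only [add_zero, sub_zero] at hlo
    refine tendsto_of_tendsto_of_tendsto_of_le_of_le hlo hup (fun n => ?_) (fun n => ?_)
    · have h := (aux_incl μ _ _ _ (hEm 0 (t1 n)) (hEm α (t2 n)) (hEm (π - α) (t2 n))).1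
      rw [← hU, hrotG, hrotG, hrotG] at h
      have p1 := hpair 0 α _ _ _ (hm1 n) (hm2 n) c1p
      have p2 := hpair 0 (π - α) _ _ _ (hm1 n) (hm2 n) c2p
      have p3 := hpair α (π - α) _ _ _ (hm2 n) (hm2 n) c3p
      simp only [sub_zero] at h p1 p2 p3 ⊢
      have hn : (0:ℝ) ≤ n := Nat.cast_nonneg n
      rw [← mul_add, ← mul_add, ← mul_add, ← mul_add, ← mul_sub]
      refine mul_le_mul_of_nonneg_left ?_ hn
      linarith
    · have h := (aux_incl μ _ _ _ (hEm 0 (t1 n)) (hEm α (t2 n)) (hEm (π - α) (t2 n))).2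
      rw [← hU, hrotG, hrotG, hrotG] at h
      have hn : (0:ℝ) ≤ n := Nat.cast_nonneg n
      simp only
      rw [← mul_add, ← mul_add]
      exact mul_le_mul_of_nonneg_left h hn
  have hP : ∀ n, (μ {ω | X ω ≤ a n * x + b n ∧
            ρ * |X ω| + Real.sqrt (1 - ρ ^ 2) * Y ω ≤
              a n * y + b n + a n * Real.log 2}).toReal = 1 + - U n := by
    intro n
    rw [hU, ← sub_eq_add_neg, ← probReal_compl_eq_one_sub
      ((hEm 0 (t1 n)).union ((hEm α (t2 n)).union (hEm (π - α) (t2 n)))), measureReal_def]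
    congr 1
    apply measure_congr
    filter_upwards [hRpos] with ω hω
    have e1 : a n * x + b n = t1 n := by rw [ht1, ha]; ring
    have e2 : a n * y + b n + a n * Real.log 2 = t2 n := by rw [ht2, ha]; ring
    have hmx := aux_max ρ (Θ ω) α hρ.1 hcα hsα (R ω) (t2 n) hω
    apply propext
    change (X ω ≤ a n * x + b n ∧ ρ * |X ω| + Real.sqrt (1 - ρ ^ 2) * Y ω ≤
              a n * y + b n + a n * Real.log 2) ↔
        ¬ (t1 n < R ω * Real.cos (Θ ω - 0) ∨ (t2 n < R ω * Real.cos (Θ ω - α) ∨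
          t2 n < R ω * Real.cos (Θ ω - (π - α))))
    rw [e1, e2, ← hmx, hX, hY, sub_zero, not_or, not_lt, not_lt]
  simp only [hP]
  rw [← Real.exp_add, ← neg_add]
  apply Real.tendsto_one_add_pow_exp_of_tendsto
  simpa using hUlim.neg
end

section
/- For all x, y ∈ ℝ, lim_{n→∞} [P(ρ_{1n}|X| + √(1-ρ_{1n}²)·Y ≤ a_n·x + b_n + a_n·ln 2, ρ_{2n}|X| + √(1-ρ_{2n}²)·Y ≤ a_n·y + b_n + a_n·ln 2)]^n = H_λ(x, y) with λ = |λ₁ - λ₂|, where H_λ(x,y) = exp(-Φ(λ + (x-y)/(2λ))·e^{-y} - Φ(λ + (y-x)/(2λ))·e^{-x}) and Φ is the standard normal distribution function. -/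
open MeasureTheory Filter Real Set ProbabilityTheory Topology

noncomputable def stdNormalCDF (t : ℝ) : ℝ :=
  (Real.sqrt (2 * Real.pi))⁻¹ * ∫ s in Set.Iic t, Real.exp (-(s ^ 2) / 2)

namespace HR

structure GumbelData (T aa : ℝ → ℝ) (l : Filter ℝ) : Prop where
  anti : Antitone T
  nonneg : ∀ u, 0 ≤ T u
  le_one : ∀ u, T u ≤ 1
  zero : T 0 = 1
  aapos : ∀ u, 0 < aa u
  nb : l.NeBot
  basis : ∀ P : ℝ → Prop, (∀ᶠ u in l, P u) ↔ ∃ c, 0 < T c ∧ ∀ u, c < u → 0 < T u → P u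
  gum : ∀ s : ℝ, Tendsto (fun u => T (u + s * aa u) / T u) l (𝓝 (Real.exp (-s)))

variable {T aa : ℝ → ℝ} {l : Filter ℝ}

lemma step (h : GumbelData T aa l) : ∃ c, 0 < T c ∧ ∀ u, c < u → 0 < T u →
    0 < T (u + aa u) ∧ T (u + aa u) ≤ T u / 2 ∧ aa (u + aa u) ≤ 2 * aa u := by
  have e1 := Real.exp_one_gt_d9
  have e2 := Real.exp_one_lt_d9
  have h1 : (0.3 : ℝ) < Real.exp (-1) := by
    rw [Real.exp_neg, lt_inv_comm₀ (by norm_num) (by positivity)]; norm_num; linarith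
  have h2 : Real.exp (-1) < (0.5 : ℝ) := by
    rw [Real.exp_neg, inv_lt_comm₀ (by positivity) (by norm_num)]; norm_num; linarith
  have h3 : Real.exp (-3) < (0.09 : ℝ) := by
    have : Real.exp (-3) = Real.exp (-1) * Real.exp (-1) * Real.exp (-1) := by
      rw [← Real.exp_add, ← Real.exp_add]; norm_num
    have h4 : Real.exp (-1) < (0.4 : ℝ) := by
      rw [Real.exp_neg, inv_lt_comm₀ (by positivity) (by norm_num)]; norm_num; linarith
    rw [this]
    have : Real.exp (-1) * Real.exp (-1) ≤ 0.4 * 0.4 := by gcongr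
    have : Real.exp (-1) * Real.exp (-1) * Real.exp (-1) ≤ 0.4 * 0.4 * 0.4 := by gcongr
    norm_num at *; linarith
  have ev := ((h.gum 1).eventually (lt_mem_nhds h1)).and
    (((h.gum 1).eventually (gt_mem_nhds h2)).and ((h.gum 3).eventually (gt_mem_nhds h3)))
  obtain ⟨c, hc, H⟩ := (h.basis _).1 ev
  refine ⟨c, hc, fun u hu hT => ?_⟩
  obtain ⟨p1, p2, p3⟩ := H u hu hT
  rw [one_mul, lt_div_iff₀ hT] at p1
  rw [one_mul, div_lt_iff₀ hT] at p2
  rw [div_lt_iff₀ hT] at p3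
  have hp : 0 < T (u + aa u) := by
    have : (0:ℝ) < 0.3 * T u := by positivity
    linarith
  refine ⟨hp, by norm_num at *; linarith, ?_⟩
  by_contra hcon
  push Not at hcon
  obtain ⟨q1, -, -⟩ := H (u + aa u) (by linarith [h.aapos u]) hp
  rw [one_mul, lt_div_iff₀ hp] at q1
  have : T (u + aa u + aa (u + aa u)) ≤ T (u + 3 * aa u) := h.anti (by linarith)
  norm_num at *
  linarith

lemma iter (h : GumbelData T aa l) : ∃ c, 0 < T c ∧ ∀ u, c < u → 0 < T u → ∀ k : ℕ,
    ∃ u', u ≤ u' ∧ 0 < T u' ∧ T u' ≤ T u / 2 ^ k ∧ u' ≤ u + (2 ^ k - 1) * aa u ∧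
      aa u' ≤ 2 ^ k * aa u := by
  obtain ⟨c, hc, H⟩ := step h
  refine ⟨c, hc, fun u hu hT k => ?_⟩
  induction k with
  | zero => exact ⟨u, le_rfl, hT, by simp, by simp, by simp⟩
  | succ k ih =>
    obtain ⟨u', g1, g2, g3, g4, g5⟩ := ih
    obtain ⟨k1, k2, k3⟩ := H u' (by linarith) g2
    refine ⟨u' + aa u', by linarith [h.aapos u'], k1, ?_, ?_, ?_⟩
    · have : T u / 2 ^ (k+1) = (T u / 2 ^ k) / 2 := by rw [pow_succ]; field_simp
      rw [this]; linarith
    · rw [pow_succ]; linarith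
    · rw [pow_succ]; linarith

lemma tendsto_zero (h : GumbelData T aa l) (ε : ℝ) (hε : 0 < ε) : ∀ᶠ u in l, T u < ε := by
  obtain ⟨c, hc, H⟩ := iter h
  have nb := h.nb
  obtain ⟨u, hu, hT⟩ : ∃ u, c < u ∧ 0 < T u := by
    have : ∀ᶠ u in l, c < u ∧ 0 < T u := (h.basis _).2 ⟨c, hc, fun u a b => ⟨a, b⟩⟩
    exact this.exists
  obtain ⟨k, hk⟩ := exists_pow_lt_of_lt_one hε (by norm_num : (1/2:ℝ) < 1)
  obtain ⟨u', -, g2, g3, -⟩ := H u hu hT k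
  refine (h.basis _).2 ⟨u', g2, fun y hy _ => ?_⟩
  have : T y ≤ T u' := h.anti hy.le
  have : T u / 2 ^ k ≤ 1 / 2 ^ k := by gcongr; exact h.le_one u
  rw [one_div_pow] at hk
  linarith

lemma ev_pos (h : GumbelData T aa l) : ∀ᶠ u in l, 0 < T u :=
  (h.basis _).2 ⟨0, by rw [h.zero]; norm_num, fun u _ b => b⟩

lemma ev_pos' (h : GumbelData T aa l) : ∀ᶠ u in l, 0 < u :=
  (h.basis _).2 ⟨0, by rw [h.zero]; norm_num, fun u b _ => b⟩

lemma shift_bound (h : GumbelData T aa l) (M : ℝ) :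
    ∀ᶠ u in l, T (u - M * aa u) ≤ 2 * Real.exp M * T u := by
  have hh : Real.exp (-(-M)) < 2 * Real.exp M := by rw [neg_neg]; linarith [Real.exp_pos M]
  have := (h.gum (-M)).eventually (gt_mem_nhds hh)
  filter_upwards [this, ev_pos h] with u h1 h2
  rw [div_lt_iff₀ h2, neg_mul, ← sub_eq_add_neg] at h1
  exact h1.le

lemma ratio_zero (h : GumbelData T aa l) : Tendsto (fun u => aa u / u) l (𝓝 0) := by
  rw [Metric.tendsto_nhds]
  intro ε hε
  filter_upwards [shift_bound h (1/ε), ev_pos' h, tendsto_zero h (1 / (2 * Real.exp (1/ε)))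
    (by positivity)] with u h1 h2 h3
  have h4 : T (u - 1/ε * aa u) < 1 := by
    refine h1.trans_lt ?_
    rwa [lt_div_iff₀ (by positivity), mul_comm] at h3
  have h5 : 0 < u - 1/ε * aa u := by
    by_contra hc
    push Not at hc
    have := h.anti hc
    rw [h.zero] at this
    linarith
  rw [dist_zero_right, Real.norm_eq_abs, abs_of_pos (div_pos (h.aapos u) h2), div_lt_iff₀ h2]
  have : ε * (1/ε * aa u) < ε * u := by gcongr; linarith
  rwa [← mul_assoc, mul_one_div_cancel hε.ne', one_mul] at this

lemma tail_bound (h : GumbelData T aa l) :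
    ∀ᶠ u in l, ∀ z, 0 ≤ z → T (u + aa u * z) ≤ 2 / (1 + z) * T u := by
  obtain ⟨c, hc, H⟩ := iter h
  refine (h.basis _).2 ⟨c, hc, fun u hu hT z hz => ?_⟩
  obtain ⟨k, hk1, hk2⟩ := exists_nat_pow_near (by linarith : (1:ℝ) ≤ 1 + z) (by norm_num : (1:ℝ) < 2)
  obtain ⟨u', -, g2, g3, g4, -⟩ := H u hu hT k
  have : u' ≤ u + aa u * z := by
    have : (2 ^ k - 1) * aa u ≤ z * aa u := by
      have := (h.aapos u).le
      gcongr; linarith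
    linarith
  refine (h.anti this).trans (g3.trans ?_)
  rw [div_mul_eq_mul_div, div_le_div_iff₀ (by positivity) (by positivity)]
  rw [pow_succ] at hk2
  nlinarith

lemma tail_bound' (h : GumbelData T aa l) (M : ℝ) (hM : 0 ≤ M) : ∃ C, 0 ≤ C ∧
    ∀ᶠ u in l, ∀ z, 0 ≤ z → T (u + aa u * (z - M)) ≤ C / (1 + z) * T u := by
  refine ⟨2 * Real.exp M * (1 + M), by positivity, ?_⟩
  filter_upwards [tail_bound h, shift_bound h M] with u h1 h2 z hz
  have hT := h.nonneg u
  have ha := h.aapos u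
  rcases le_total z M with hzM | hzM
  · have : T (u + aa u * (z - M)) ≤ T (u - M * aa u) := h.anti (by nlinarith)
    refine this.trans (h2.trans ?_)
    gcongr
    rw [le_div_iff₀ (by positivity)]
    gcongr
  · refine (h1 (z - M) (by linarith)).trans ?_
    refine mul_le_mul_of_nonneg_right ?_ hT
    rw [div_le_div_iff₀ (by linarith) (by linarith)]
    have : 1 ≤ Real.exp M := Real.one_le_exp hM
    have h3 : (1 + z) ≤ (1 + M) * (1 + (z - M)) := by nlinarith
    have h4 : 0 ≤ (1 + M) * (1 + (z - M)) := by linarith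
    nlinarith

lemma seq_limit (h : GumbelData T aa l) {b : ℕ → ℝ} (hb : Tendsto b atTop l) {z : ℕ → ℝ} {z0 : ℝ}
    (hz : Tendsto z atTop (𝓝 z0)) :
    Tendsto (fun n => T (b n + z n * aa (b n)) / T (b n)) atTop (𝓝 (Real.exp (-z0))) := by
  have cexp : Continuous fun s : ℝ => Real.exp (-s) := by fun_prop
  rw [tendsto_order]
  constructor
  · intro p hp
    obtain ⟨s, hs1, hs2⟩ : ∃ s, z0 < s ∧ p < Real.exp (-s) := by
      have := (cexp.tendsto z0).eventually (lt_mem_nhds hp)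
      have h2 := (this.filter_mono (nhdsWithin_le_nhds (s := Ioi z0))).and self_mem_nhdsWithin
      obtain ⟨s, h3, h4⟩ := h2.exists
      exact ⟨s, h4, h3⟩
    filter_upwards [((h.gum s).comp hb).eventually (lt_mem_nhds hs2), hz.eventually (gt_mem_nhds hs1)]
      with n h1 h2
    refine h1.trans_le ?_
    have := h.nonneg (b n)
    have := (h.aapos (b n)).le
    simp only [Function.comp]
    gcongr
    apply h.anti
    gcongr
  · intro p hp
    obtain ⟨s, hs1, hs2⟩ : ∃ s, s < z0 ∧ Real.exp (-s) < p := by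
      have := (cexp.tendsto z0).eventually (gt_mem_nhds hp)
      have h2 := (this.filter_mono (nhdsWithin_le_nhds (s := Iio z0))).and self_mem_nhdsWithin
      obtain ⟨s, h3, h4⟩ := h2.exists
      exact ⟨s, h4, h3⟩
    filter_upwards [((h.gum s).comp hb).eventually (gt_mem_nhds hs2), hz.eventually (lt_mem_nhds hs1)]
      with n h1 h2
    refine lt_of_le_of_lt ?_ h1
    have := h.nonneg (b n)
    have := (h.aapos (b n)).le
    simp only [Function.comp]
    gcongr
    apply h.anti
    gcongr

lemma mul_sub_div' {v t a : ℝ} (hv : 0 < v) : v * (t - a / v) = v * t - a := by field_simp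

lemma sin_eq_mul_sinc (y : ℝ) : Real.sin y = y * Real.sinc y := by
  by_cases hy : y = 0
  · simp [hy]
  · rw [Real.sinc_of_ne_zero hy]; field_simp

lemma one_sub_cos (y : ℝ) : 1 - Real.cos y = 2 * Real.sin (y / 2) ^ 2 := by
  have h1 := Real.cos_two_mul (y / 2)
  have h2 := Real.sin_sq_add_cos_sq (y / 2)
  rw [mul_div_cancel₀ y (by norm_num : (2:ℝ) ≠ 0)] at h1
  linarith

lemma cos_limit {v s : ℕ → ℝ} {s0 : ℝ} (hv : ∀ᶠ n in atTop, 0 < v n) (hv0 : Tendsto v atTop (𝓝 0))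
    (hs : Tendsto s atTop (𝓝 s0)) :
    Tendsto (fun n => (1 - Real.cos (v n * s n)) / (v n) ^ 2) atTop (𝓝 (s0 ^ 2 / 2)) := by
  have h1 : Tendsto (fun n => v n * s n / 2) atTop (𝓝 0) := by
    have := (hv0.mul hs).div_const 2
    simpa using this
  have h2 := (Real.continuous_sinc.tendsto 0).comp h1
  rw [Real.sinc_zero] at h2
  have h3 : Tendsto (fun n => 2 * (s n / 2 * Real.sinc (v n * s n / 2)) ^ 2) atTop
      (𝓝 (2 * (s0 / 2 * 1) ^ 2)) := (((hs.div_const 2).mul h2).pow 2).const_mul 2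
  have : 2 * (s0 / 2 * 1) ^ 2 = s0 ^ 2 / 2 := by ring
  rw [this] at h3
  refine h3.congr' ?_
  filter_upwards [hv] with n hn
  rw [one_sub_cos, sin_eq_mul_sinc]
  field_simp

lemma alpha_limit {v ρ : ℕ → ℝ} {lam : ℝ} (hlam : 0 ≤ lam) (hv : ∀ᶠ n in atTop, 0 < v n)
    (hv0 : Tendsto v atTop (𝓝 0)) (hρ : ∀ n, ρ n ∈ Ioc (0:ℝ) 1)
    (h : Tendsto (fun n => (1 - ρ n) / (v n) ^ 2) atTop (𝓝 (2 * lam ^ 2))) :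
    Tendsto (fun n => Real.arccos (ρ n) / v n) atTop (𝓝 (2 * lam)) := by
  have h1 : Tendsto ρ atTop (𝓝 1) := by
    have := (h.mul (hv0.pow 2)).const_sub 1
    simp only [ne_eq, OfNat.ofNat_ne_zero, not_false_eq_true, zero_pow, mul_zero, sub_zero] at this
    refine this.congr' ?_
    filter_upwards [hv] with n hn
    field_simp
    ring
  have h2 : Tendsto (fun n => Real.arccos (ρ n)) atTop (𝓝 0) := by
    have := (Real.continuous_arccos.tendsto 1).comp h1
    rwa [Real.arccos_one] at this
  have h3 : Tendsto (fun n => Real.sinc (Real.arccos (ρ n) / 2)) atTop (𝓝 1) := by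
    have h4 := h2.div_const 2
    rw [zero_div] at h4
    have := (Real.continuous_sinc.tendsto 0).comp h4
    rwa [Real.sinc_zero] at this
  have h5 := ((h.div_const 2).sqrt).const_mul 2
  have h6 := h5.div h3 one_ne_zero
  have : 2 * √(2 * lam ^ 2 / 2) / 1 = 2 * lam := by
    rw [mul_div_cancel_left₀ _ (by norm_num : (2:ℝ) ≠ 0), Real.sqrt_sq hlam, div_one]
  rw [this] at h6
  refine h6.congr' ?_
  filter_upwards [hv, h3.eventually (lt_mem_nhds (by norm_num : (0:ℝ) < 1))] with n hn hn2
  have e : (1 - ρ n) / (v n) ^ 2 / 2 = (Real.arccos (ρ n) / 2 * Real.sinc (Real.arccos (ρ n) / 2) / v n) ^ 2 := by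
    have : ρ n = Real.cos (Real.arccos (ρ n)) := by
      rw [Real.cos_arccos (by linarith [(hρ n).1]) (hρ n).2]
    conv_lhs => rw [this]
    rw [one_sub_cos, sin_eq_mul_sinc]
    field_simp
  simp only [Pi.div_apply]
  rw [e, Real.sqrt_sq]
  · field_simp
  · have := Real.arccos_nonneg (ρ n)
    positivity

noncomputable def phi (ν : Measure ℝ) (u θ : ℝ) : ℝ := ν.real {r | u < r * Real.cos θ}

section
variable {ν : Measure ℝ} [IsProbabilityMeasure ν]

lemma phi_pos (u θ : ℝ) (hθ : 0 < Real.cos θ) : phi ν u θ = ν.real (Ioi (u / Real.cos θ)) := by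
  unfold phi; congr 1; ext r; simp [div_lt_iff₀ hθ]

lemma phi_neg (hν : ∀ᵐ r ∂ν, 0 < r) (u θ : ℝ) (hu : 0 < u) (hθ : Real.cos θ ≤ 0) : phi ν u θ = 0 := by
  unfold phi
  rw [measureReal_eq_zero_iff, measure_eq_zero_iff_ae_notMem]
  filter_upwards [hν] with r hr
  simp only [not_lt]
  nlinarith

lemma phi_nonneg (u θ : ℝ) : 0 ≤ phi ν u θ := measureReal_nonneg

lemma phi_le_one (u θ : ℝ) : phi ν u θ ≤ 1 := measureReal_le_one

lemma phi_measurable (u : ℝ) : Measurable (phi ν u) := by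
  have : MeasurableSet {p : ℝ × ℝ | u < p.1 * Real.cos p.2} :=
    measurableSet_lt (by fun_prop) (by fun_prop)
  exact (measurable_measure_prodMk_right this).ennreal_toReal

lemma v_pos (h : GumbelData T aa l) {b : ℕ → ℝ} (hb : Tendsto b atTop l) :
    ∀ᶠ n in atTop, 0 < √(aa (b n) / b n) := by
  filter_upwards [hb.eventually (ev_pos' h)] with n hn
  have := h.aapos (b n)
  positivity

lemma v_zero (h : GumbelData T aa l) {b : ℕ → ℝ} (hb : Tendsto b atTop l) :
    Tendsto (fun n => √(aa (b n) / b n)) atTop (𝓝 0) := by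
  have := ((ratio_zero h).comp hb).sqrt
  simpa using this

lemma pt (h : GumbelData (fun u => ν.real (Ioi u)) aa l) {b κ : ℕ → ℝ} (hb : Tendsto b atTop l)
    {κ0 : ℝ} (hκ : Tendsto κ atTop (𝓝 κ0)) (x t : ℝ) :
    Tendsto (fun n => phi ν (b n + aa (b n) * x) (√(aa (b n) / b n) * (t - κ n)) / ν.real (Ioi (b n)))
      atTop (𝓝 (Real.exp (-(x + (t - κ0) ^ 2 / 2)))) := by
  have hv := v_pos h hb
  have hv0 := v_zero h hb
  have hs : Tendsto (fun n => t - κ n) atTop (𝓝 (t - κ0)) := hκ.const_sub t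
  have hcl := cos_limit hv hv0 hs
  have hc1 : Tendsto (fun n => Real.cos (√(aa (b n) / b n) * (t - κ n))) atTop (𝓝 1) := by
    have := (Real.continuous_cos.tendsto 0).comp (by simpa using hv0.mul hs)
    rwa [Real.cos_zero] at this
  have hz := (hcl.add_const x).div hc1 one_ne_zero
  have := seq_limit h hb hz
  have e : (((t - κ0) ^ 2 / 2 + x) / 1) = x + (t - κ0) ^ 2 / 2 := by ring
  rw [e] at this
  refine this.congr' ?_
  filter_upwards [hb.eventually (ev_pos' h), hc1.eventually (lt_mem_nhds (by norm_num : (0:ℝ) < 1))]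
    with n hn hc
  rw [phi_pos _ _ hc]
  have ha := h.aapos (b n)
  congr 3
  simp only [Pi.div_apply]
  rw [Real.sq_sqrt (by positivity)]
  field_simp
  ring

lemma bd (h : GumbelData (fun u => ν.real (Ioi u)) aa l) (hν : ∀ᵐ r ∂ν, 0 < r)
    {b κ : ℕ → ℝ} (hb : Tendsto b atTop l)
    {κ0 : ℝ} (hκ : Tendsto κ atTop (𝓝 κ0)) (x : ℝ) : ∃ C, 0 ≤ C ∧ ∀ᶠ n in atTop, ∀ t : ℝ,
      |√(aa (b n) / b n) * (t - κ n)| ≤ π →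
      phi ν (b n + aa (b n) * x) (√(aa (b n) / b n) * (t - κ n)) / ν.real (Ioi (b n))
        ≤ C * (1 + t ^ 2)⁻¹ := by
  set K := |κ0| + 1 with hK
  have hKe : ∀ᶠ n in atTop, |κ n| < K := hκ.abs.eventually (gt_mem_nhds (by linarith))
  obtain ⟨C, hC, hCe⟩ := tail_bound' h (|x| + K ^ 2 / 10) (by positivity)
  refine ⟨20 * C, by positivity, ?_⟩
  have hr : ∀ᶠ n in atTop, aa (b n) / b n < 1 / (2 * (|x| + 1)) :=
    ((ratio_zero h).comp hb).eventually (gt_mem_nhds (by positivity))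
  filter_upwards [hb.eventually hCe, hb.eventually (ev_pos' h), hKe, hr, hb.eventually (ev_pos h)]
    with n h1 hbn h2 h3 hT t ht
  have ha := h.aapos (b n)
  have hu : b n / 2 ≤ b n + aa (b n) * x := by
    rw [div_lt_div_iff₀ hbn (by positivity)] at h3
    have := neg_abs_le x
    nlinarith
  have hrhs : 0 ≤ 20 * C * (1 + t ^ 2)⁻¹ := by positivity
  rw [div_le_iff₀ hT]
  set θ := √(aa (b n) / b n) * (t - κ n) with hθ
  rcases le_or_gt (Real.cos θ) 0 with hc | hc
  · rw [phi_neg hν _ _ (by linarith) hc]; positivity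
  rw [phi_pos _ _ hc]
  have hcos : Real.cos θ ≤ 1 - θ ^ 2 / 5 := by
    have h5 := Real.cos_le_one_sub_mul_cos_sq ht
    have h6 : 1 / 5 ≤ 2 / π ^ 2 := by
      rw [div_le_div_iff₀ (by norm_num) (by positivity)]
      nlinarith [Real.pi_lt_d2, Real.pi_pos]
    nlinarith [sq_nonneg θ]
  have hinv : 1 + θ ^ 2 / 5 ≤ 1 / Real.cos θ := by
    rw [le_div_iff₀ hc]
    nlinarith [sq_nonneg θ]
  have hθ2 : b n * θ ^ 2 = aa (b n) * (t - κ n) ^ 2 := by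
    rw [hθ, mul_pow, Real.sq_sqrt (by positivity)]; field_simp
  have htk : t ^ 2 / 2 - K ^ 2 ≤ (t - κ n) ^ 2 := by
    have : κ n ^ 2 ≤ K ^ 2 := by
      rw [← sq_abs (κ n)]; gcongr
    nlinarith [sq_nonneg (t - 2 * κ n)]
  have hlow : b n + aa (b n) * (t ^ 2 / 20 - (|x| + K ^ 2 / 10)) ≤
      (b n + aa (b n) * x) / Real.cos θ := by
    rw [div_eq_mul_one_div (b n + aa (b n) * x)]
    have h7 : (b n + aa (b n) * x) * (1 + θ ^ 2 / 5) ≤ (b n + aa (b n) * x) * (1 / Real.cos θ) := by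
      gcongr; linarith
    have h8 : b n / 2 * (θ ^ 2 / 5) ≤ (b n + aa (b n) * x) * (θ ^ 2 / 5) := by gcongr
    have h9 : aa (b n) * (t ^ 2 / 2 - K ^ 2) ≤ aa (b n) * (t - κ n) ^ 2 := by gcongr
    have h10 : aa (b n) * (-|x|) ≤ aa (b n) * x := by gcongr; exact neg_abs_le x
    nlinarith
  have hm : ν.real (Ioi ((b n + aa (b n) * x) / Real.cos θ)) ≤ _ := h.anti hlow
  refine hm.trans ((h1 (t ^ 2 / 20) (by positivity)).trans ?_)
  refine mul_le_mul_of_nonneg_right ?_ hT.le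
  rw [← div_eq_mul_inv, div_le_div_iff₀ (by positivity) (by positivity)]
  nlinarith [sq_nonneg t]

lemma main_limit (h : GumbelData (fun u => ν.real (Ioi u)) aa l) (hν : ∀ᵐ r ∂ν, 0 < r)
    {b α₁ α₂ : ℕ → ℝ} (hb : Tendsto b atTop l) {k₁ k₂ : ℝ}
    (hα₁ : ∀ n, α₁ n ∈ Icc 0 (π / 2)) (hα₂ : ∀ n, α₂ n ∈ Icc 0 (π / 2))
    (hk₁ : Tendsto (fun n => α₁ n / √(aa (b n) / b n)) atTop (𝓝 k₁))
    (hk₂ : Tendsto (fun n => α₂ n / √(aa (b n) / b n)) atTop (𝓝 k₂)) (x y : ℝ) :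
    Tendsto (fun n => (∫ θ in (-(π/2))..(π/2), max (phi ν (b n + aa (b n) * x) (θ - α₁ n))
        (phi ν (b n + aa (b n) * y) (θ - α₂ n))) / (√(aa (b n) / b n) * ν.real (Ioi (b n)))) atTop
      (𝓝 (∫ t : ℝ, max (Real.exp (-(x + (t - k₁) ^ 2 / 2))) (Real.exp (-(y + (t - k₂) ^ 2 / 2))))) := by
  obtain ⟨C₁, hC₁, hB₁⟩ := bd h hν hb hk₁ x
  obtain ⟨C₂, hC₂, hB₂⟩ := bd h hν hb hk₂ y
  have hv := v_pos h hb
  have hv0 := v_zero h hb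
  have hTp := hb.eventually (ev_pos h)
  set v : ℕ → ℝ := fun n => √(aa (b n) / b n) with hvdef
  set f : ℕ → ℝ → ℝ := fun n θ => max (phi ν (b n + aa (b n) * x) (θ - α₁ n))
        (phi ν (b n + aa (b n) * y) (θ - α₂ n)) with hf
  have hfm : ∀ n, Measurable (f n) := fun n =>
    ((phi_measurable _).comp (by fun_prop)).max ((phi_measurable _).comp (by fun_prop))
  let g : ℕ → ℝ → ℝ := fun n => (Ioc (-(π/2) / v n) ((π/2) / v n)).indicator
    (fun t => f n (v n * t) / ν.real (Ioi (b n)))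
  have hlim : Tendsto (fun n => ∫ t, g n t) atTop
      (𝓝 (∫ t : ℝ, max (Real.exp (-(x + (t - k₁) ^ 2 / 2))) (Real.exp (-(y + (t - k₂) ^ 2 / 2))))) := by
    apply tendsto_integral_filter_of_dominated_convergence (fun t => (C₁ + C₂) * (1 + t ^ 2)⁻¹)
    · refine Eventually.of_forall fun n => ?_
      exact ((((hfm n).comp (by fun_prop)).div_const _).indicator measurableSet_Ioc).aestronglyMeasurable
    · filter_upwards [hB₁, hB₂, hv, hTp] with n h1 h2 h3 h4
      refine Eventually.of_forall fun t => ?_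
      by_cases ht : t ∈ Ioc (-(π/2) / v n) ((π/2) / v n)
      · simp only [g, indicator_of_mem ht]
        have hp : ∀ u θ, 0 ≤ phi ν u θ := fun u θ => phi_nonneg u θ
        rw [Real.norm_of_nonneg (div_nonneg (le_max_of_le_left (hp _ _)) h4.le)]
        obtain ⟨t1, t2⟩ := ht
        have t1' : -(π/2) < v n * t := by rw [div_lt_iff₀ h3] at t1; linarith
        have t2' : v n * t ≤ π/2 := by rw [le_div_iff₀ h3] at t2; linarith
        have e1 : v n * (t - α₁ n / v n) = v n * t - α₁ n := mul_sub_div' h3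
        have e2 : v n * (t - α₂ n / v n) = v n * t - α₂ n := mul_sub_div' h3
        have a1 := h1 t (by
          change |v n * (t - α₁ n / v n)| ≤ π
          rw [e1, abs_le]; constructor <;> linarith [(hα₁ n).1, (hα₁ n).2])
        have a2 := h2 t (by
          change |v n * (t - α₂ n / v n)| ≤ π
          rw [e2, abs_le]; constructor <;> linarith [(hα₂ n).1, (hα₂ n).2])
        change phi ν _ (v n * (t - α₁ n / v n)) / _ ≤ _ at a1
        change phi ν _ (v n * (t - α₂ n / v n)) / _ ≤ _ at a2
        rw [e1] at a1
        rw [e2] at a2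
        calc _ ≤ (phi ν (b n + aa (b n) * x) (v n * t - α₁ n) + phi ν (b n + aa (b n) * y) (v n * t - α₂ n)) /
              ν.real (Ioi (b n)) := by
                refine div_le_div_of_nonneg_right ?_ h4.le
                exact max_le_add_of_nonneg (hp _ _) (hp _ _)
          _ ≤ _ := by rw [add_div, add_mul]; exact add_le_add a1 a2
      · simp only [g, indicator_of_notMem ht, norm_zero]; positivity
    · exact integrable_inv_one_add_sq.const_mul _
    · refine Eventually.of_forall fun t => ?_
      have p1 := pt h hb hk₁ x t
      have p2 := pt h hb hk₂ y t
      refine (p1.max p2).congr' ?_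
      have hvt : Tendsto (fun n => v n * t) atTop (𝓝 0) := by simpa using hv0.mul_const t
      have hpi := Real.pi_pos
      filter_upwards [hv, hTp, hvt.eventually (lt_mem_nhds (by linarith : -(π/2) < 0)),
        hvt.eventually (gt_mem_nhds (by linarith : 0 < π/2))] with n h1 h2 h3 h4
      have ht : t ∈ Ioc (-(π/2) / v n) ((π/2) / v n) := by
        constructor
        · rw [div_lt_iff₀ h1]; linarith
        · rw [le_div_iff₀ h1]; linarith
      simp only [g, indicator_of_mem ht, f]
      have e1 : √(aa (b n) / b n) * (t - α₁ n / v n) = v n * t - α₁ n := by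
        change v n * (t - α₁ n / v n) = _
        exact mul_sub_div' h1
      have e2 : √(aa (b n) / b n) * (t - α₂ n / v n) = v n * t - α₂ n := by
        change v n * (t - α₂ n / v n) = _
        exact mul_sub_div' h1
      rw [e1, e2, max_div_div_right h2.le]
  refine hlim.congr' ?_
  filter_upwards [hv, hTp] with n h1 h2
  have hpi := Real.pi_pos
  have hle : -(π/2) / v n ≤ (π/2) / v n := by
    apply div_le_div_of_nonneg_right _ h1.le
    linarith
  simp only [g]
  rw [integral_indicator measurableSet_Ioc, ← intervalIntegral.integral_of_le hle,
    intervalIntegral.integral_div]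
  have := intervalIntegral.mul_integral_comp_mul_left (a := -(π/2) / v n) (b := (π/2) / v n) (f := f n) (c := v n)
  rw [mul_div_cancel₀ _ h1.ne', mul_div_cancel₀ _ h1.ne'] at this
  rw [← this]
  change _ = _ / (v n * _)
  rw [mul_div_mul_left _ _ h1.ne']

end
lemma integrable_gauss_shift (x k : ℝ) :
    Integrable (fun t : ℝ => Real.exp (-(x + (t - k) ^ 2 / 2))) := by
  have h := ((integrable_exp_neg_mul_sq (b := 1/2) (by norm_num)).comp_sub_right k).const_mul (Real.exp (-x))
  refine h.congr (Eventually.of_forall fun t => ?_)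
  simp only
  rw [← Real.exp_add]; congr 1; ring

lemma gauss_Iic (x k c : ℝ) :
    ∫ t in Iic c, Real.exp (-(x + (t - k) ^ 2 / 2)) = Real.exp (-x) * (√(2 * π) * stdNormalCDF (c - k)) := by
  have hp : (√(2 * π)) ≠ 0 := by positivity
  unfold stdNormalCDF
  rw [← mul_assoc (√(2 * π)), mul_inv_cancel₀ hp, one_mul]
  have h := (measurePreserving_sub_right (volume : Measure ℝ) k).setIntegral_preimage_emb
    (MeasurableEquiv.subRight k).measurableEmbedding (fun s => Real.exp (-(s ^ 2) / 2)) (Iic (c - k))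
  have e : (fun t : ℝ => t - k) ⁻¹' Iic (c - k) = Iic c := by ext t; simp
  rw [e] at h
  rw [← h, ← integral_const_mul]
  congr 1; ext t
  rw [← Real.exp_add]; congr 1; ring

lemma gauss_Ioi (x k c : ℝ) :
    ∫ t in Ioi c, Real.exp (-(x + (t - k) ^ 2 / 2)) = Real.exp (-x) * (√(2 * π) * stdNormalCDF (k - c)) := by
  have := integral_comp_neg_Ioi c (fun t => Real.exp (-(x + (t - (-k)) ^ 2 / 2)))
  have h2 := gauss_Iic x (-k) (-c)
  have e : -c - -k = k - c := by ring
  rw [← this, e] at h2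
  rw [← h2]
  congr 1; ext t; congr 3; ring

lemma gauss_max_aux (x y k₁ k₂ δ : ℝ) (hδ : 0 < δ) (hk : k₁ - k₂ = 2 * δ) :
    ∫ t : ℝ, max (Real.exp (-(x + (t - k₁) ^ 2 / 2))) (Real.exp (-(y + (t - k₂) ^ 2 / 2))) =
      √(2 * π) * (stdNormalCDF (δ + (x - y) / (2 * δ)) * Real.exp (-y) +
        stdNormalCDF (δ + (y - x) / (2 * δ)) * Real.exp (-x)) := by
  have hi : Integrable (fun t : ℝ => max (Real.exp (-(x + (t - k₁) ^ 2 / 2))) (Real.exp (-(y + (t - k₂) ^ 2 / 2)))) :=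
    (integrable_gauss_shift x k₁).sup (integrable_gauss_shift y k₂)
  set c := (x - y) / (2 * δ) + (k₁ + k₂) / 2 with hc
  have hkey : ∀ t, (x + (t - k₁) ^ 2 / 2) - (y + (t - k₂) ^ 2 / 2) = 2 * δ * (c - t) := by
    intro t
    have h1 : k₁ = k₂ + 2 * δ := by linarith
    rw [hc, h1]; field_simp; ring
  rw [← intervalIntegral.integral_Iic_add_Ioi (b := c) hi.integrableOn hi.integrableOn]
  have e1 : ∫ t in Iic c, max (Real.exp (-(x + (t - k₁) ^ 2 / 2))) (Real.exp (-(y + (t - k₂) ^ 2 / 2))) =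
      ∫ t in Iic c, Real.exp (-(y + (t - k₂) ^ 2 / 2)) := by
    refine setIntegral_congr_fun measurableSet_Iic fun t ht => max_eq_right ?_
    have ht' : t ≤ c := ht
    apply Real.exp_le_exp.2
    have := hkey t
    nlinarith
  have e2 : ∫ t in Ioi c, max (Real.exp (-(x + (t - k₁) ^ 2 / 2))) (Real.exp (-(y + (t - k₂) ^ 2 / 2))) =
      ∫ t in Ioi c, Real.exp (-(x + (t - k₁) ^ 2 / 2)) := by
    refine setIntegral_congr_fun measurableSet_Ioi fun t ht => max_eq_left ?_
    have ht' : c < t := ht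
    apply Real.exp_le_exp.2
    have := hkey t
    nlinarith
  change (∫ t in Iic c, max (Real.exp (-(x + (t - k₁) ^ 2 / 2))) (Real.exp (-(y + (t - k₂) ^ 2 / 2)))) +
    (∫ t in Ioi c, max (Real.exp (-(x + (t - k₁) ^ 2 / 2))) (Real.exp (-(y + (t - k₂) ^ 2 / 2)))) = _
  rw [e1, e2, gauss_Iic, gauss_Ioi]
  have f1 : c - k₂ = δ + (x - y) / (2 * δ) := by rw [hc]; linarith
  have f2 : k₁ - c = δ + (y - x) / (2 * δ) := by
    rw [hc]
    have : (y - x) / (2 * δ) = - ((x - y) / (2 * δ)) := by ring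
    rw [this]; linarith
  rw [f1, f2]; ring

lemma gauss_max (x y l₁ l₂ : ℝ) (h : 0 < |l₁ - l₂|) :
    ∫ t : ℝ, max (Real.exp (-(x + (t - 2 * l₁) ^ 2 / 2))) (Real.exp (-(y + (t - 2 * l₂) ^ 2 / 2))) =
      √(2 * π) * (stdNormalCDF (|l₁ - l₂| + (x - y) / (2 * |l₁ - l₂|)) * Real.exp (-y) +
        stdNormalCDF (|l₁ - l₂| + (y - x) / (2 * |l₁ - l₂|)) * Real.exp (-x)) := by
  rcases le_total l₂ l₁ with hl | hl
  · apply gauss_max_aux _ _ _ _ _ h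
    rw [abs_of_nonneg (by linarith)]; ring
  · simp_rw [max_comm (Real.exp (-(x + _)))]
    rw [gauss_max_aux y x (2 * l₂) (2 * l₁) _ h (by rw [abs_of_nonpos (by linarith)]; ring)]
    ring

lemma gauss_zero : ∫ t : ℝ, max (Real.exp (-(0 + (t - 0) ^ 2 / 2))) (Real.exp (-(0 + (t - 0) ^ 2 / 2))) = √(2 * π) := by
  have := integral_gaussian (1/2)
  rw [div_div_eq_mul_div, div_one, mul_comm π 2] at this
  rw [← this]
  congr 1; ext t
  rw [max_self]; congr 1; ring

section
variable {Ω : Type*} [MeasurableSpace Ω] {μ : Measure Ω} [IsProbabilityMeasure μ] {R Θ : Ω → ℝ}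

lemma fub (hRm : Measurable R) (hΘm : Measurable Θ)
    (hΘunif : μ.map Θ = (ENNReal.ofReal (2 * π))⁻¹ • volume.restrict (Ioo (-π) π))
    (hindep : IndepFun R Θ μ) {S : Set (ℝ × ℝ)} (hS : MeasurableSet S) :
    (μ {ω | (R ω, Θ ω) ∈ S}).toReal =
      (2 * π)⁻¹ * ∫ θ in (-π)..π, (μ.map R).real {r | (r, θ) ∈ S} := by
  have hpi := Real.pi_pos
  have := Measure.isProbabilityMeasure_map (μ := μ) hRm.aemeasurable
  have := Measure.isProbabilityMeasure_map (μ := μ) hΘm.aemeasurable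
  have h1 : μ {ω | (R ω, Θ ω) ∈ S} = (μ.map (fun ω => (R ω, Θ ω))) S := by
    rw [Measure.map_apply (hRm.prodMk hΘm) hS]; rfl
  rw [h1, (indepFun_iff_map_prod_eq_prod_map_map hRm.aemeasurable hΘm.aemeasurable).1 hindep,
    Measure.prod_apply_symm hS, hΘunif, lintegral_smul_measure, smul_eq_mul, ENNReal.toReal_mul,
    ENNReal.toReal_inv, ENNReal.toReal_ofReal (by positivity),
    intervalIntegral.integral_of_le (by linarith), integral_Ioc_eq_integral_Ioo]
  congr 1
  rw [← integral_toReal (measurable_measure_prodMk_right hS).aemeasurable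
    (Eventually.of_forall fun _ => measure_lt_top _ _)]
  rfl

lemma no_atom (hRm : Measurable R) (hΘm : Measurable Θ) (hRpos : ∀ᵐ ω ∂μ, 0 < R ω)
    (hΘunif : μ.map Θ = (ENNReal.ofReal (2 * π))⁻¹ • volume.restrict (Ioo (-π) π))
    (hindep : IndepFun R Θ μ) (c : ℝ) : μ {ω | R ω * Real.cos (Θ ω) = c} = 0 := by
  have := Measure.isProbabilityMeasure_map (μ := μ) hRm.aemeasurable
  have := Measure.isProbabilityMeasure_map (μ := μ) hΘm.aemeasurable
  have hS : MeasurableSet {p : ℝ × ℝ | p.1 * Real.cos p.2 = c} :=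
    measurableSet_eq_fun (by fun_prop) (by fun_prop)
  have h1 : μ {ω | R ω * Real.cos (Θ ω) = c} = (μ.map (fun ω => (R ω, Θ ω))) {p : ℝ × ℝ | p.1 * Real.cos p.2 = c} := by
    rw [Measure.map_apply (hRm.prodMk hΘm) hS]; rfl
  rw [h1, (indepFun_iff_map_prod_eq_prod_map_map hRm.aemeasurable hΘm.aemeasurable).1 hindep,
    Measure.prod_apply hS, lintegral_eq_zero_iff (measurable_measure_prodMk_left hS)]
  have hr : ∀ᵐ r ∂(μ.map R), 0 < r :=
    (ae_map_iff hRm.aemeasurable measurableSet_Ioi).2 hRpos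
  filter_upwards [hr] with r hr
  rw [hΘunif]
  simp only [Measure.smul_apply, Pi.zero_apply, smul_eq_mul, mul_eq_zero]
  right
  have hm : MeasurableSet (Prod.mk r ⁻¹' {p : ℝ × ℝ | p.1 * Real.cos p.2 = c}) := measurable_prodMk_left hS
  rw [Measure.restrict_apply hm]
  refine measure_mono_null (t := {Real.arccos (c / r), -Real.arccos (c / r)}) ?_ 
    ((Set.toFinite _).measure_zero _)
  rintro θ ⟨h1, h2, h3⟩
  have h4 : Real.cos θ = c / r := by
    rw [eq_div_iff hr.ne', mul_comm]; exact h1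
  rw [← h4, ← Real.cos_abs, Real.arccos_cos (abs_nonneg _) (abs_le.2 ⟨h2.le, h3.le⟩)]
  rcases abs_cases θ with ⟨h, _⟩ | ⟨h, _⟩ <;> simp [h]

lemma quantile (P : Measure ℝ) [IsProbabilityMeasure P] (hP : ∀ c, P {c} = 0) (q : ℝ) (hq0 : 0 < q)
    (hq1 : q < 1) : P.real (Iic (sInf {x | q < P.real (Iic x)})) = q := by
  have hcont : Continuous (cdf P) := by
    rw [continuous_iff_continuousAt]
    intro c
    rw [(monotone_cdf P).continuousAt_iff_leftLim_eq_rightLim, StieltjesFunction.rightLim_eq]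
    have := hP c
    nth_rewrite 1 [← measure_cdf P] at this
    rw [StieltjesFunction.measure_singleton, ENNReal.ofReal_eq_zero] at this
    have h2 := (monotone_cdf P).leftLim_le (le_refl c)
    linarith
  simp_rw [← cdf_eq_real]
  set S := {x | q < cdf P x} with hS
  have hne : S.Nonempty := ((tendsto_cdf_atTop P).eventually (lt_mem_nhds hq1)).exists
  have hbb : BddBelow S := by
    obtain ⟨c, hc⟩ := ((tendsto_cdf_atBot P).eventually (gt_mem_nhds hq0)).exists
    refine ⟨c, fun x hx => ?_⟩
    by_contra hcon
    push Not at hcon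
    have h3 : q < cdf P x := hx
    linarith [monotone_cdf P hcon.le]
  apply le_antisymm
  · by_contra hcon
    push Not at hcon
    have h1 : ∀ᶠ x in 𝓝 (sInf S), q < cdf P x := (hcont.tendsto _).eventually (lt_mem_nhds hcon)
    have h2 := (h1.filter_mono (nhdsWithin_le_nhds (s := Iio (sInf S)))).and self_mem_nhdsWithin
    obtain ⟨x, hx, hx2⟩ := h2.exists
    exact absurd (csInf_le hbb hx) (not_le.2 hx2)
  · have h1 := csInf_mem_closure hne hbb
    have h2 : closure S ⊆ {x | q ≤ cdf P x} :=
      closure_minimal (fun x hx => show q ≤ cdf P x from le_of_lt hx) (isClosed_le continuous_const hcont)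
    exact h2 h1

end

section
variable {ν : Measure ℝ} [IsProbabilityMeasure ν]

lemma max_union (hν : ∀ᵐ r ∂ν, 0 < r) {u₁ u₂ c₁ c₂ : ℝ} (h₁ : 0 < u₁) (h₂ : 0 < u₂) :
    ν.real {r | u₁ < r * c₁ ∨ u₂ < r * c₂} = max (ν.real {r | u₁ < r * c₁}) (ν.real {r | u₂ < r * c₂}) := by
  have up : ∀ u c : ℝ, 0 < u → IsUpperSet {r : ℝ | 0 < r ∧ u < r * c} := by
    rintro u c hu r s hrs ⟨hr, hc⟩
    have hcp : 0 < c := by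
      by_contra h; push Not at h; nlinarith
    exact ⟨by linarith, by nlinarith⟩
  have e : ∀ u c : ℝ, ν.real {r | u < r * c} = ν.real {r : ℝ | 0 < r ∧ u < r * c} := by
    intro u c
    refine measureReal_congr ?_
    filter_upwards [hν] with r hr
    apply propext
    change u < r * c ↔ 0 < r ∧ u < r * c
    simp [hr]
  have e2 : ν.real {r | u₁ < r * c₁ ∨ u₂ < r * c₂} =
      ν.real ({r : ℝ | 0 < r ∧ u₁ < r * c₁} ∪ {r : ℝ | 0 < r ∧ u₂ < r * c₂}) := by
    refine measureReal_congr ?_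
    filter_upwards [hν] with r hr
    apply propext
    change (u₁ < r * c₁ ∨ u₂ < r * c₂) ↔ (0 < r ∧ u₁ < r * c₁) ∨ (0 < r ∧ u₂ < r * c₂)
    simp [hr]
  rw [e2, e, e]
  rcases (up u₁ c₁ h₁).total (up u₂ c₂ h₂) with h | h
  · rw [union_eq_self_of_subset_left h, max_eq_right (measureReal_mono h)]
  · rw [union_eq_self_of_subset_right h, max_eq_left (measureReal_mono h)]

lemma sym_integral (f : ℝ → ℝ) (hfm : Measurable f) (hf1 : ∀ x, |f x| ≤ 1)
    (hper : Function.Periodic f (2 * π)) (hsym : ∀ x, f (π - x) = f x) :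
    ∫ θ in (-π)..π, f θ = 2 * ∫ θ in (-(π/2))..(π/2), f θ := by
  have hi : ∀ a b, IntervalIntegrable f volume a b := fun a b => by
    refine (intervalIntegrable_const (c := (1:ℝ))).mono_fun hfm.aestronglyMeasurable ?_
    exact Eventually.of_forall fun x => by simpa using hf1 x
  have h1 := hper.intervalIntegral_add_eq (-π) (-(π/2))
  have e1 : -π + 2 * π = π := by ring
  have e2 : -(π/2) + 2 * π = π + π/2 := by ring
  rw [e1, e2] at h1
  rw [h1, ← intervalIntegral.integral_add_adjacent_intervals (hi _ (π/2)) (hi _ _)]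
  have h2 := intervalIntegral.integral_comp_sub_left f π (a := -(π/2)) (b := π/2)
  have e3 : π - π / 2 = π / 2 := by ring
  rw [sub_neg_eq_add, e3] at h2
  rw [← h2]
  simp_rw [hsym]
  ring

end

lemma basis_of_endpoint {F : ℝ → ℝ} {l : Filter ℝ}
    (hendpoint : (l = atTop ∧ ∀ x, F x < 1) ∨
      (l = nhdsWithin 1 (Iio 1) ∧ (∀ x < 1, F x < 1) ∧ ∀ x, 1 ≤ x → F x = 1)) (P : ℝ → Prop) :
    (∀ᶠ u in l, P u) ↔ ∃ c, 0 < 1 - F c ∧ ∀ u, c < u → 0 < 1 - F u → P u := by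
  rcases hendpoint with ⟨rfl, h⟩ | ⟨rfl, h1, h2⟩
  · constructor
    · intro he
      obtain ⟨c, hc⟩ := eventually_atTop.1 he
      exact ⟨c, by linarith [h c], fun u hu _ => hc u hu.le⟩
    · rintro ⟨c, -, hc⟩
      filter_upwards [eventually_gt_atTop c] with u hu
      exact hc u hu (by linarith [h u])
  · constructor
    · intro he
      obtain ⟨c, hc, hs⟩ := mem_nhdsLT_iff_exists_Ioo_subset.1 he
      refine ⟨c, by linarith [h1 c hc], fun u hu hF => hs ⟨hu, ?_⟩⟩
      by_contra hcon
      push Not at hcon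
      linarith [h2 u hcon]
    · rintro ⟨c, hc0, hc⟩
      have hc1 : c < 1 := by
        by_contra hcon
        push Not at hcon
        linarith [h2 c hcon]
      refine mem_nhdsLT_iff_exists_Ioo_subset.2 ⟨c, hc1, fun u hu => hc u hu.1 ?_⟩
      linarith [h1 u hu.2]

section
variable {Ω : Type*} [MeasurableSpace Ω] {μ : Measure Ω} [IsProbabilityMeasure μ] {R Θ : Ω → ℝ}

lemma prob_E (hRm : Measurable R) (hΘm : Measurable Θ) (hRpos : ∀ᵐ ω ∂μ, 0 < R ω)
    (hΘunif : μ.map Θ = (ENNReal.ofReal (2 * π))⁻¹ • volume.restrict (Ioo (-π) π))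
    (hindep : IndepFun R Θ μ) {α₁ α₂ u₁ u₂ : ℝ} (h₁ : 0 < u₁) (h₂ : 0 < u₂) :
    1 - (μ {ω | Real.cos α₁ * |R ω * Real.cos (Θ ω)| + Real.sin α₁ * (R ω * Real.sin (Θ ω)) ≤ u₁ ∧
      Real.cos α₂ * |R ω * Real.cos (Θ ω)| + Real.sin α₂ * (R ω * Real.sin (Θ ω)) ≤ u₂}).toReal =
    π⁻¹ * ∫ θ in (-(π/2))..(π/2), max (phi (μ.map R) u₁ (θ - α₁)) (phi (μ.map R) u₂ (θ - α₂)) := by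
  have := Measure.isProbabilityMeasure_map (μ := μ) hRm.aemeasurable
  have hν : ∀ᵐ r ∂(μ.map R), 0 < r :=
    (ae_map_iff hRm.aemeasurable measurableSet_Ioi).2 hRpos
  set ν := μ.map R with hνdef
  let S : Set (ℝ × ℝ) := {p | ¬ (Real.cos α₁ * |p.1 * Real.cos p.2| + Real.sin α₁ * (p.1 * Real.sin p.2) ≤ u₁ ∧
      Real.cos α₂ * |p.1 * Real.cos p.2| + Real.sin α₂ * (p.1 * Real.sin p.2) ≤ u₂)}
  have hS : MeasurableSet S := by
    have m : ∀ α u : ℝ, MeasurableSet {p : ℝ × ℝ | Real.cos α * |p.1 * Real.cos p.2| +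
        Real.sin α * (p.1 * Real.sin p.2) ≤ u} :=
      fun α u => measurableSet_le (by fun_prop) (by fun_prop)
    exact ((m α₁ u₁).inter (m α₂ u₂)).compl
  have hE : MeasurableSet {ω | Real.cos α₁ * |R ω * Real.cos (Θ ω)| + Real.sin α₁ * (R ω * Real.sin (Θ ω)) ≤ u₁ ∧
      Real.cos α₂ * |R ω * Real.cos (Θ ω)| + Real.sin α₂ * (R ω * Real.sin (Θ ω)) ≤ u₂} := by
    have m : ∀ α u : ℝ, MeasurableSet {ω | Real.cos α * |R ω * Real.cos (Θ ω)| +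
        Real.sin α * (R ω * Real.sin (Θ ω)) ≤ u} :=
      fun α u => measurableSet_le (by fun_prop) (by fun_prop)
    exact (m α₁ u₁).inter (m α₂ u₂)
  have hc := probReal_compl_eq_one_sub (μ := μ) hE
  have hf := fub hRm hΘm hΘunif hindep hS
  have hc' : (μ {ω | (R ω, Θ ω) ∈ S}).toReal = 1 - _ := hc
  rw [hf] at hc'
  rw [measureReal_def] at hc'
  rw [← hc']
  let f : ℝ → ℝ := fun θ => ν.real {r | (r, θ) ∈ S}
  have hper : Function.Periodic f (2 * π) := by
    intro θ
    simp only [f, S, mem_ofPred_eq, Real.cos_add_two_pi, Real.sin_add_two_pi]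
  have hsym : ∀ θ, f (π - θ) = f θ := by
    intro θ
    simp only [f, S, mem_ofPred_eq, Real.cos_pi_sub, Real.sin_pi_sub, mul_neg, abs_neg]
  have hfm : Measurable f := (measurable_measure_prodMk_right hS).ennreal_toReal
  have hf1 : ∀ x, |f x| ≤ 1 := fun x => by
    rw [abs_of_nonneg measureReal_nonneg]; exact measureReal_le_one
  have h3 := sym_integral f hfm hf1 hper hsym
  change (2 * π)⁻¹ * ∫ θ in (-π)..π, f θ = _
  rw [h3]
  have h4 : ∫ θ in (-(π/2))..(π/2), f θ =
      ∫ θ in (-(π/2))..(π/2), max (phi ν u₁ (θ - α₁)) (phi ν u₂ (θ - α₂)) := by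
    refine intervalIntegral.integral_congr fun θ hθ => ?_
    rw [uIcc_of_le (by linarith [Real.pi_pos])] at hθ
    have hcos : 0 ≤ Real.cos θ := Real.cos_nonneg_of_mem_Icc hθ
    simp only [phi]
    rw [← max_union hν h₁ h₂]
    refine measureReal_congr ?_
    filter_upwards [hν] with r hr
    apply propext
    change (¬ (Real.cos α₁ * |r * Real.cos θ| + Real.sin α₁ * (r * Real.sin θ) ≤ u₁ ∧
      Real.cos α₂ * |r * Real.cos θ| + Real.sin α₂ * (r * Real.sin θ) ≤ u₂)) ↔
      (u₁ < r * Real.cos (θ - α₁) ∨ u₂ < r * Real.cos (θ - α₂))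
    rw [abs_of_nonneg (mul_nonneg hr.le hcos), not_and_or, not_le, not_le, Real.cos_sub, Real.cos_sub]
    have e : ∀ α, Real.cos α * (r * Real.cos θ) + Real.sin α * (r * Real.sin θ) =
      r * (Real.cos θ * Real.cos α + Real.sin θ * Real.sin α) := fun α => by ring
    rw [e, e]
  rw [h4, mul_inv]
  ring

lemma prob_G (hRm : Measurable R) (hΘm : Measurable Θ) (hRpos : ∀ᵐ ω ∂μ, 0 < R ω)
    (hΘunif : μ.map Θ = (ENNReal.ofReal (2 * π))⁻¹ • volume.restrict (Ioo (-π) π))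
    (hindep : IndepFun R Θ μ) {u : ℝ} (hu : 0 < u) :
    1 - (μ {ω | R ω * Real.cos (Θ ω) ≤ u}).toReal =
    (2 * π)⁻¹ * ∫ θ in (-(π/2))..(π/2), phi (μ.map R) u θ := by
  have := Measure.isProbabilityMeasure_map (μ := μ) hRm.aemeasurable
  have hν : ∀ᵐ r ∂(μ.map R), 0 < r :=
    (ae_map_iff hRm.aemeasurable measurableSet_Ioi).2 hRpos
  have hpi := Real.pi_pos
  let S : Set (ℝ × ℝ) := {p | ¬ (p.1 * Real.cos p.2 ≤ u)}
  have hS : MeasurableSet S := by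
    have m : MeasurableSet {p : ℝ × ℝ | p.1 * Real.cos p.2 ≤ u} :=
      measurableSet_le (by fun_prop) (by fun_prop)
    exact m.compl
  have hE : MeasurableSet {ω | R ω * Real.cos (Θ ω) ≤ u} := measurableSet_le (by fun_prop) (by fun_prop)
  have hc := probReal_compl_eq_one_sub (μ := μ) hE
  have hf := fub hRm hΘm hΘunif hindep hS
  have hc' : (μ {ω | (R ω, Θ ω) ∈ S}).toReal = 1 - _ := hc
  rw [hf, measureReal_def] at hc'
  rw [← hc']
  congr 1
  have hp : ∀ θ, (μ.map R).real {r | (r, θ) ∈ S} = phi (μ.map R) u θ := by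
    intro θ
    simp only [phi, S, mem_ofPred_eq, not_le]
  simp_rw [hp]
  have hi : ∀ a b, IntervalIntegrable (phi (μ.map R) u) volume a b := fun a b => by
    refine (intervalIntegrable_const (c := (1:ℝ))).mono_fun (phi_measurable u).aestronglyMeasurable ?_
    refine Eventually.of_forall fun x => ?_
    have h1 := phi_nonneg (ν := μ.map R) u x
    have h2 := phi_le_one (ν := μ.map R) u x
    simpa [abs_of_nonneg h1] using h2
  rw [← intervalIntegral.integral_add_adjacent_intervals (hi (-π) (-(π/2))) (hi (-(π/2)) π),
    ← intervalIntegral.integral_add_adjacent_intervals (hi (-(π/2)) (π/2)) (hi (π/2) π)]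
  have z1 : ∫ θ in (-π)..(-(π/2)), phi (μ.map R) u θ = 0 := by
    rw [intervalIntegral.integral_congr (g := fun _ => (0:ℝ))]
    · simp
    · intro θ hθ
      rw [uIcc_of_le (by linarith)] at hθ
      refine phi_neg hν _ _ hu ?_
      rw [← Real.cos_neg]
      exact Real.cos_nonpos_of_pi_div_two_le_of_le (by linarith [hθ.2]) (by linarith [hθ.1])
  have z2 : ∫ θ in (π/2)..π, phi (μ.map R) u θ = 0 := by
    rw [intervalIntegral.integral_congr (g := fun _ => (0:ℝ))]
    · simp
    · intro θ hθ
      rw [uIcc_of_le (by linarith)] at hθ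
      refine phi_neg hν _ _ hu ?_
      exact Real.cos_nonpos_of_pi_div_two_le_of_le (by linarith [hθ.1]) (by linarith [hθ.2])
  rw [z1, z2]
  ring

lemma G_lt_one (hRm : Measurable R) (hΘm : Measurable Θ)
    (hΘunif : μ.map Θ = (ENNReal.ofReal (2 * π))⁻¹ • volume.restrict (Ioo (-π) π))
    (hindep : IndepFun R Θ μ) {c c' : ℝ} (hc : 0 ≤ c) (hcc : c < c')
    (hT : 0 < (μ.map R).real (Ioi c')) : (μ {ω | R ω * Real.cos (Θ ω) ≤ c}).toReal < 1 := by
  have hE : MeasurableSet {ω | R ω * Real.cos (Θ ω) ≤ c} := measurableSet_le (by fun_prop) (by fun_prop)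
  have hcm := probReal_compl_eq_one_sub (μ := μ) hE
  have hpi := Real.pi_pos
  have hV : MeasurableSet {θ | c / c' < Real.cos θ} := measurableSet_lt (by fun_prop) (by fun_prop)
  have hVo : IsOpen ({θ | c / c' < Real.cos θ} ∩ Ioo (-π) π) :=
    (isOpen_lt continuous_const Real.continuous_cos).inter isOpen_Ioo
  have hVpos : 0 < μ.map Θ {θ | c / c' < Real.cos θ} := by
    rw [hΘunif, Measure.smul_apply, Measure.restrict_apply hV, smul_eq_mul]
    refine ENNReal.mul_pos (ENNReal.inv_ne_zero.2 ENNReal.ofReal_ne_top) ?_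
    refine (hVo.measure_pos volume ⟨0, ?_, by linarith, hpi⟩).ne'
    change c / c' < Real.cos 0
    rw [Real.cos_zero, div_lt_one (by linarith)]
    exact hcc
  have hTpos : 0 < μ.map R (Ioi c') := by
    have := hT
    rw [measureReal_def, ENNReal.toReal_pos_iff] at this
    exact this.1
  have hin := hindep.measure_inter_preimage_eq_mul (Ioi c') {θ | c / c' < Real.cos θ} measurableSet_Ioi hV
  rw [← Measure.map_apply hRm measurableSet_Ioi, ← Measure.map_apply hΘm hV] at hin
  have hpos : 0 < μ (R ⁻¹' Ioi c' ∩ Θ ⁻¹' {θ | c / c' < Real.cos θ}) := by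
    rw [hin]; exact ENNReal.mul_pos hTpos.ne' hVpos.ne'
  have hsub : R ⁻¹' Ioi c' ∩ Θ ⁻¹' {θ | c / c' < Real.cos θ} ⊆ {ω | R ω * Real.cos (Θ ω) ≤ c}ᶜ := by
    rintro ω ⟨h1, h2⟩
    have h1' : c' < R ω := h1
    have h2' : c / c' < Real.cos (Θ ω) := h2
    have hc'0 : 0 < c' := by linarith
    have h3 : 0 ≤ c / c' := by positivity
    rw [div_lt_iff₀ hc'0] at h2'
    change ¬ (R ω * Real.cos (Θ ω) ≤ c)
    rw [not_le]
    nlinarith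
  have h5 : 0 < μ.real {ω | R ω * Real.cos (Θ ω) ≤ c}ᶜ := by
    rw [measureReal_def, ENNReal.toReal_pos_iff]
    exact ⟨hpos.trans_le (measure_mono hsub), measure_lt_top _ _⟩
  rw [hcm, measureReal_def] at h5
  linarith

end

end HR

open HR

theorem maxima_skew_gumbel_HuslerReiss
{Ω : Type*} [MeasurableSpace Ω] (μ : Measure Ω) [IsProbabilityMeasure μ]
    (R Θ : Ω → ℝ) (hRm : Measurable R) (hΘm : Measurable Θ)
    (hRpos : ∀ᵐ ω ∂μ, 0 < R ω)
    (hΘunif : μ.map Θ = (ENNReal.ofReal (2 * π))⁻¹ • volume.restrict (Ioo (-π) π))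
    (hindep : IndepFun R Θ μ)
    (X Y : Ω → ℝ)
    (hX : X = fun ω => R ω * Real.cos (Θ ω))
    (hY : Y = fun ω => R ω * Real.sin (Θ ω))
    (F G : ℝ → ℝ)
    (hF : F = fun x => (μ {ω | R ω ≤ x}).toReal)
    (hG : G = fun x => (μ {ω | X ω ≤ x}).toReal)
    (w : ℝ → ℝ) (hw : ∀ x, 0 < w x)
    (l : Filter ℝ)
    (hendpoint : (l = atTop ∧ ∀ x, F x < 1) ∨
      (l = nhdsWithin 1 (Iio 1) ∧ (∀ x < 1, F x < 1) ∧ ∀ x, 1 ≤ x → F x = 1))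
    (hGumbel : ∀ s : ℝ,
      Tendsto (fun u => (1 - F (u + s / w u)) / (1 - F u)) l (𝓝 (Real.exp (-s))))
    (b a : ℕ → ℝ)
    (hb : ∀ n : ℕ, b n = sInf {x | 1 - 1 / (n : ℝ) < G x})
    (ha : ∀ n : ℕ, a n = 1 / w (b n))
    (ρ₁ ρ₂ : ℕ → ℝ) (hρ₁ : ∀ n, ρ₁ n ∈ Ioc (0 : ℝ) 1) (hρ₂ : ∀ n, ρ₂ n ∈ Ioc (0 : ℝ) 1)
    (lam₁ lam₂ : ℝ) (hlam₁ : 0 ≤ lam₁) (hlam₂ : 0 ≤ lam₂)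
    (hHR₁ : Tendsto (fun n : ℕ => (1 - ρ₁ n) * b n / a n) atTop (𝓝 (2 * lam₁ ^ 2)))
    (hHR₂ : Tendsto (fun n : ℕ => (1 - ρ₂ n) * b n / a n) atTop (𝓝 (2 * lam₂ ^ 2)))
    (hne : 0 < |lam₁ - lam₂|) :
    ∀ x y : ℝ,
      Tendsto (fun n : ℕ =>
          ((μ {ω | ρ₁ n * |X ω| + Real.sqrt (1 - ρ₁ n ^ 2) * Y ω ≤
              a n * x + b n + a n * Real.log 2 ∧
            ρ₂ n * |X ω| + Real.sqrt (1 - ρ₂ n ^ 2) * Y ω ≤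
              a n * y + b n + a n * Real.log 2}).toReal) ^ n)
        atTop (𝓝
          (Real.exp (-(stdNormalCDF (|lam₁ - lam₂| + (x - y) / (2 * |lam₁ - lam₂|)) *
              Real.exp (-y) +
            stdNormalCDF (|lam₁ - lam₂| + (y - x) / (2 * |lam₁ - lam₂|)) *
              Real.exp (-x))))) := by
  have hpi := Real.pi_pos
  have hprob := Measure.isProbabilityMeasure_map (μ := μ) hRm.aemeasurable
  have hν : ∀ᵐ r ∂(μ.map R), 0 < r :=
    (ae_map_iff hRm.aemeasurable measurableSet_Ioi).2 hRpos
  have hTF : ∀ u, (μ.map R).real (Ioi u) = 1 - F u := by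
    intro u
    have h1 := probReal_compl_eq_one_sub (μ := μ.map R) (measurableSet_Iic (a := u))
    rw [compl_Iic] at h1
    rw [h1, hF, measureReal_def, Measure.map_apply hRm measurableSet_Iic]
    rfl
  have hnb : l.NeBot := by
    rcases hendpoint with ⟨rfl, -⟩ | ⟨rfl, -⟩ <;> infer_instance
  have hg : GumbelData (fun u => (μ.map R).real (Ioi u)) (fun u => 1 / w u) l := by
    refine ⟨fun u v huv => measureReal_mono (Ioi_subset_Ioi huv), fun u => measureReal_nonneg,
      fun u => measureReal_le_one, ?_, fun u => one_div_pos.2 (hw u), hnb, ?_, ?_⟩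
    · change (μ.map R).real (Ioi 0) = 1
      rw [measureReal_def, (prob_compl_eq_zero_iff measurableSet_Ioi).1 (ae_iff.1 hν), ENNReal.toReal_one]
    · intro P
      simp_rw [hTF]
      exact basis_of_endpoint hendpoint P
    · intro s
      simp_rw [hTF, mul_one_div]
      exact hGumbel s
  have hXm : Measurable X := by rw [hX]; fun_prop
  have hPX := Measure.isProbabilityMeasure_map (μ := μ) hXm.aemeasurable
  have hGX : ∀ u, G u = (μ.map X).real (Iic u) := by
    intro u
    rw [hG, measureReal_def, Measure.map_apply hXm measurableSet_Iic]; rfl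
  have hGb : ∀ n : ℕ, 2 ≤ n → G (b n) = 1 - 1 / (n : ℝ) := by
    intro n hn
    have hn' : (2:ℝ) ≤ n := by exact_mod_cast hn
    have h1 : 1 / (n:ℝ) ≤ 1 / 2 := by gcongr
    have h2 : 0 < 1 / (n:ℝ) := by positivity
    rw [hGX, hb]
    simp_rw [hGX]
    refine quantile _ (fun c => ?_) _ (by linarith) (by linarith)
    rw [Measure.map_apply hXm (measurableSet_singleton c), hX]
    exact no_atom hRm hΘm hRpos hΘunif hindep c
  have hGmono : Monotone G := by
    intro u v huv
    rw [hGX, hGX]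
    exact measureReal_mono (Iic_subset_Iic.2 huv)
  have hGT : ∀ u, 1 - G u ≤ (μ.map R).real (Ioi u) := by
    intro u
    rw [hTF]
    have : F u ≤ G u := by
      rw [hF, hG]
      refine ENNReal.toReal_mono (measure_ne_top _ _) (measure_mono_ae ?_)
      filter_upwards [hRpos] with ω hω h
      have h' : R ω ≤ u := h
      change X ω ≤ u
      rw [hX]
      change R ω * Real.cos (Θ ω) ≤ u
      nlinarith [Real.cos_le_one (Θ ω)]
    linarith
  have hbl : Tendsto b atTop l := by
    intro s hs
    obtain ⟨c, hc, H⟩ := (hg.basis (· ∈ s)).1 hs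
    have hc0 : 0 < (μ.map R).real (Ioi (max c 0)) := by
      rcases max_cases c 0 with ⟨h, _⟩ | ⟨h, _⟩
      · rw [h]; exact hc
      · rw [h]; have h00 : (μ.map R).real (Ioi 0) = 1 := hg.zero
        rw [h00]; norm_num
    obtain ⟨c', hc1, hc2⟩ : ∃ c', max c 0 < c' ∧ 0 < (μ.map R).real (Ioi c') := by
      have h1 : ∀ᶠ u in l, max c 0 < u ∧ 0 < (μ.map R).real (Ioi u) :=
        (hg.basis _).2 ⟨max c 0, hc0, fun u a b => ⟨a, b⟩⟩
      exact h1.exists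
    have hG1 : G (max c 0) < 1 := by
      rw [hG, hX]
      exact G_lt_one hRm hΘm hΘunif hindep (le_max_right _ _) hc1 hc2
    have hlim : Tendsto (fun n : ℕ => 1 - 1 / (n:ℝ)) atTop (𝓝 1) := by
      simpa using (tendsto_one_div_atTop_nhds_zero_nat (𝕜 := ℝ)).const_sub 1
    change ∀ᶠ n in atTop, b n ∈ s
    filter_upwards [hlim.eventually (lt_mem_nhds hG1), eventually_ge_atTop 2] with n h1 h2
    rw [← hGb n h2] at h1
    refine H _ ?_ ?_
    · by_contra hcon
      push Not at hcon
      linarith [hGmono (hcon.trans (le_max_left c 0))]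
    · refine lt_of_lt_of_le ?_ (hGT (b n))
      rw [hGb n h2]
      have : (0:ℝ) < n := by positivity
      have : 0 < 1 / (n:ℝ) := by positivity
      linarith
  have haa : ∀ n, a n = (fun u => 1 / w u) (b n) := ha
  generalize (fun u => 1 / w u) = aa at hg haa
  have hv := v_pos hg hbl
  have hv0 := v_zero hg hbl
  have hbpos := hbl.eventually (ev_pos' hg)
  have hTpos := hbl.eventually (ev_pos hg)
  have hv2 : ∀ᶠ n in atTop, √(aa (b n) / b n) ^ 2 = aa (b n) / b n := by
    filter_upwards [hbpos] with n hn
    exact Real.sq_sqrt (div_nonneg (hg.aapos _).le hn.le)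
  have hk : ∀ (ρ : ℕ → ℝ) (lam : ℝ), (∀ n, ρ n ∈ Ioc (0:ℝ) 1) → 0 ≤ lam →
      Tendsto (fun n : ℕ => (1 - ρ n) * b n / a n) atTop (𝓝 (2 * lam ^ 2)) →
      Tendsto (fun n => Real.arccos (ρ n) / √(aa (b n) / b n)) atTop (𝓝 (2 * lam)) := by
    intro ρ lam hρ hlam hHR
    refine alpha_limit hlam hv hv0 hρ (hHR.congr' ?_)
    filter_upwards [hv2, hbpos] with n h1 h2
    have := hg.aapos (b n)
    rw [h1, haa]
    field_simp
  have hα : ∀ (ρ : ℕ → ℝ), (∀ n, ρ n ∈ Ioc (0:ℝ) 1) → ∀ n, Real.arccos (ρ n) ∈ Icc 0 (π/2) :=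
    fun ρ hρ n => ⟨Real.arccos_nonneg _, Real.arccos_le_pi_div_two.2 (hρ n).1.le⟩
  intro x y
  have M1 := main_limit hg hν hbl (hα ρ₁ hρ₁) (hα ρ₂ hρ₂) (hk ρ₁ lam₁ hρ₁ hlam₁ hHR₁)
    (hk ρ₂ lam₂ hρ₂ hlam₂ hHR₂) (x + Real.log 2) (y + Real.log 2)
  have z0 : Tendsto (fun n => (fun _ : ℕ => (0:ℝ)) n / √(aa (b n) / b n)) atTop (𝓝 0) := by simp
  have M0 := main_limit hg hν hbl (α₁ := fun _ => 0) (α₂ := fun _ => 0)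
    (fun n => ⟨le_rfl, by positivity⟩) (fun n => ⟨le_rfl, by positivity⟩) z0 z0 0 0
  rw [gauss_zero] at M0
  rw [gauss_max _ _ _ _ hne] at M1
  have hs : √(2 * π) ≠ 0 := by positivity
  have hnv : Tendsto (fun n : ℕ => (n:ℝ) * (√(aa (b n) / b n) * (μ.map R).real (Ioi (b n)))) atTop
      (𝓝 (2 * π / √(2 * π))) := by
    refine ((tendsto_const_nhds (x := 2 * π)).div M0 hs).congr' ?_
    filter_upwards [hv, hbpos, hTpos, eventually_ge_atTop 2] with n h1 h2 h3 h4
    have h5 := prob_G hRm hΘm hRpos hΘunif hindep h2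
    have h6 := hGb n h4
    rw [hG, hX] at h6
    simp only at h6
    rw [h6] at h5
    simp only [Pi.div_apply, mul_zero, add_zero, sub_zero, max_self]
    set D := ∫ θ in (-(π/2))..(π/2), phi (μ.map R) (b n) θ
    have hn0 : (0:ℝ) < n := by positivity
    have h7 : D = 2 * π / n := by
      rw [sub_sub_cancel] at h5
      field_simp at h5
      field_simp
      linarith
    rw [h7]
    have h3' : (μ.map R).real (Ioi (b n)) ≠ 0 := h3.ne'
    field_simp
  have hfin := ((M1.mul hnv).const_mul π⁻¹).neg
  have hP0 : (0:ℝ) < 1 / (|x + Real.log 2| + 1) := by positivity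
  have hP : ∀ᶠ n in atTop, 0 < b n + aa (b n) * (x + Real.log 2) := by
    filter_upwards [hbpos, ((ratio_zero hg).comp hbl).eventually
      (gt_mem_nhds hP0)] with n h1 h2
    simp only [Function.comp] at h2
    rw [div_lt_div_iff₀ h1 (by positivity)] at h2
    have := hg.aapos (b n)
    nlinarith [neg_abs_le (x + Real.log 2)]
  have hQ0 : (0:ℝ) < 1 / (|y + Real.log 2| + 1) := by positivity
  have hQ : ∀ᶠ n in atTop, 0 < b n + aa (b n) * (y + Real.log 2) := by
    filter_upwards [hbpos, ((ratio_zero hg).comp hbl).eventually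
      (gt_mem_nhds hQ0)] with n h1 h2
    simp only [Function.comp] at h2
    rw [div_lt_div_iff₀ h1 (by positivity)] at h2
    have := hg.aapos (b n)
    nlinarith [neg_abs_le (y + Real.log 2)]
  have heq : ∀ᶠ n in atTop, (μ {ω | ρ₁ n * |X ω| + Real.sqrt (1 - ρ₁ n ^ 2) * Y ω ≤
              a n * x + b n + a n * Real.log 2 ∧
            ρ₂ n * |X ω| + Real.sqrt (1 - ρ₂ n ^ 2) * Y ω ≤
              a n * y + b n + a n * Real.log 2}).toReal = 1 + -(π⁻¹ * ∫ θ in (-(π/2))..(π/2),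
        max (phi (μ.map R) (b n + aa (b n) * (x + Real.log 2)) (θ - Real.arccos (ρ₁ n)))
        (phi (μ.map R) (b n + aa (b n) * (y + Real.log 2)) (θ - Real.arccos (ρ₂ n)))) := by
    filter_upwards [hP, hQ] with n h1 h2
    rw [← prob_E hRm hΘm hRpos hΘunif hindep h1 h2]
    rw [Real.sin_arccos, Real.sin_arccos, Real.cos_arccos (by linarith [(hρ₁ n).1]) (hρ₁ n).2,
      Real.cos_arccos (by linarith [(hρ₂ n).1]) (hρ₂ n).2, haa n, hX, hY]
    have e : ∀ z, aa (b n) * z + b n + aa (b n) * Real.log 2 = b n + aa (b n) * (z + Real.log 2) :=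
      fun z => by ring
    rw [e, e]
    ring
  refine (Real.tendsto_one_add_pow_exp_of_tendsto
    (g := fun n => -(π⁻¹ * ∫ θ in (-(π/2))..(π/2),
        max (phi (μ.map R) (b n + aa (b n) * (x + Real.log 2)) (θ - Real.arccos (ρ₁ n)))
        (phi (μ.map R) (b n + aa (b n) * (y + Real.log 2)) (θ - Real.arccos (ρ₂ n))))) ?_).congr' ?_
  · have ev : ∀ z : ℝ, Real.exp (-(z + Real.log 2)) = Real.exp (-z) / 2 := by
      intro z
      rw [neg_add, Real.exp_add, Real.exp_neg (Real.log 2), Real.exp_log (by norm_num)]; rfl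
    rw [ev, ev, add_sub_add_right_eq_sub, add_sub_add_right_eq_sub] at hfin
    have hval : ∀ A B C D s : ℝ, s ≠ 0 → -(π⁻¹ * (s * (A * (B / 2) + C * (D / 2)) * (2 * π / s))) =
        -(A * B + C * D) := by
      intro A B C D s hs
      field_simp
    rw [hval _ _ _ _ _ hs] at hfin
    refine hfin.congr' ?_
    filter_upwards [hv, hTpos] with n h1 h2
    have h2' : (μ.map R).real (Ioi (b n)) ≠ 0 := h2.ne'
    have h1' := h1.ne'
    have hh : ∀ D p v T m : ℝ, v ≠ 0 → T ≠ 0 → -(p * (D / (v * T) * (m * (v * T)))) = m * -(p * D) := by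
      intro D p v T m hv hT
      field_simp
    exact hh _ _ _ _ _ h1' h2'
  · filter_upwards [heq] with n h1
    rw [h1]
end

section
/- For every x < 0, lim_{n→∞} P(ρ_n|X| + √(1-ρ_n²)·Y > 1 + u_n·x) / (u_n^{1/2}·(1-F(1-u_n))) = 2·I_α·|x|^{1/2+α}, where I_α = (1/√(2π))·Γ(α+1)/Γ(α+3/2). -/
open MeasureTheory Filter Real Set ProbabilityTheory Topology

noncomputable def Ialpha (α : ℝ) : ℝ :=
  (Real.sqrt (2 * Real.pi))⁻¹ * (Real.Gamma (α + 1) / Real.Gamma (α + 3 / 2))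

noncomputable def Upsilon (α t : ℝ) : ℝ :=
  (∫ s in Set.Icc (-1 : ℝ) (min t 1), (1 - s ^ 2) ^ α) /
    (∫ s in Set.Icc (-1 : ℝ) 1, (1 - s ^ 2) ^ α)

lemma aux_meas {Ω : Type*} [MeasurableSpace Ω] (μ : Measure Ω) [IsProbabilityMeasure μ]
    (R : Ω → ℝ) (hRm : Measurable R) (a : ℝ) :
    Measurable (fun c : ℝ => (μ {ω | a < R ω * c}).toReal) := by
  have hs : MeasurableSet {p : Ω × ℝ | a < R p.1 * p.2} :=
    measurableSet_lt measurable_const ((hRm.comp measurable_fst).mul measurable_snd)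
  exact (measurable_measure_prodMk_right (μ := μ) hs).ennreal_toReal

lemma aux_slice {Ω : Type*} [MeasurableSpace Ω] (μ : Measure Ω) [IsProbabilityMeasure μ]
    (R Θ : Ω → ℝ) (hRm : Measurable R) (hΘm : Measurable Θ)
    (hΘunif : μ.map Θ = (ENNReal.ofReal (2 * π))⁻¹ • volume.restrict (Ioo (-π) π))
    (hindep : IndepFun R Θ μ) (g : ℝ → ℝ) (hg : Measurable g) (a : ℝ) :
    (μ {ω | a < R ω * g (Θ ω)}).toReal
      = (2 * π)⁻¹ * ∫ θ in (-π)..π, (μ {ω | a < R ω * g θ}).toReal := by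
  have hs : MeasurableSet {p : ℝ × ℝ | a < p.1 * g p.2} :=
    measurableSet_lt measurable_const (measurable_fst.mul (hg.comp measurable_snd))
  have h1 := (indepFun_iff_map_prod_eq_prod_map_map hRm.aemeasurable hΘm.aemeasurable).1 hindep
  have h2 : μ {ω | a < R ω * g (Θ ω)} = (μ.map (fun ω => (R ω, Θ ω))) {p : ℝ × ℝ | a < p.1 * g p.2} := by
    rw [Measure.map_apply (hRm.prodMk hΘm) hs]; rfl
  have : IsProbabilityMeasure (μ.map R) := Measure.isProbabilityMeasure_map hRm.aemeasurable
  have : IsProbabilityMeasure (μ.map Θ) := Measure.isProbabilityMeasure_map hΘm.aemeasurable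
  have h3 : ∀ θ, (μ.map R) ((fun x => (x, θ)) ⁻¹' {p : ℝ × ℝ | a < p.1 * g p.2})
      = μ {ω | a < R ω * g θ} := by
    intro θ
    rw [Measure.map_apply hRm (measurable_prodMk_right hs)]; rfl
  rw [h2, h1, Measure.prod_apply_symm hs]
  simp_rw [h3]
  rw [hΘunif, lintegral_smul_measure, intervalIntegral.integral_of_le (by linarith [pi_pos]),
    integral_Ioc_eq_integral_Ioo, integral_toReal]
  · simp [ENNReal.toReal_mul, pi_pos.le]
  · have := (measurable_measure_prodMk_right (μ := μ.map R) hs)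
    simp_rw [h3] at this
    exact this.aemeasurable
  · exact ae_of_all _ fun _ => measure_lt_top _ _

lemma aux_fold (H : ℝ → ℝ) (hH : Measurable H) (hb : ∀ c, |H c| ≤ 1) (ρ : ℝ)
    (hρ : ρ ∈ Ioc (0:ℝ) 1) :
    ∫ θ in (-π)..π, H (ρ * |cos θ| + √(1 - ρ ^ 2) * sin θ)
      = 2 * ∫ φ in (-(π/2) - arccos ρ)..(π/2 - arccos ρ), H (cos φ) := by
  set G : ℝ → ℝ := fun θ => H (ρ * |cos θ| + √(1 - ρ ^ 2) * sin θ) with hG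
  have hGm : Measurable G := hH.comp (by fun_prop)
  have hint : ∀ a b, IntervalIntegrable G volume a b := by
    intro a b
    refine (intervalIntegrable_const (c := (1:ℝ))).mono_fun hGm.aestronglyMeasurable ?_
    exact ae_of_all _ fun x => by simpa using hb _
  have hper : Function.Periodic G (2 * π) := by
    intro θ; simp [hG]
  have e1 : ∫ θ in (-π)..π, G θ = ∫ θ in (-(π/2))..(3*π/2), G θ := by
    have := hper.intervalIntegral_add_eq (-π) (-(π/2))
    rw [show -π + 2*π = π by ring, show -(π/2) + 2*π = 3*π/2 by ring] at this
    exact this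
  have e2 : ∫ θ in (π/2)..(3*π/2), G θ = ∫ θ in (-(π/2))..(π/2), G θ := by
    have := intervalIntegral.integral_comp_sub_left (a := -(π/2)) (b := π/2) G π
    rw [show π - π/2 = π/2 by ring, show π - -(π/2) = 3*π/2 by ring] at this
    rw [← this]
    congr 1; ext θ; simp [hG]
  rw [e1, ← intervalIntegral.integral_add_adjacent_intervals (hint _ (π/2)) (hint _ _), e2,
    ← two_mul]
  congr 1
  rw [← intervalIntegral.integral_comp_sub_right (fun φ => H (cos φ))]
  apply intervalIntegral.integral_congr
  intro θ hθ
  rw [uIcc_of_le (by linarith [pi_pos])] at hθ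
  simp only [hG]
  rw [abs_of_nonneg (cos_nonneg_of_mem_Icc hθ), cos_sub, cos_arccos (by linarith [hρ.1]) hρ.2, sin_arccos]
  ring_nf

lemma aux_rv (T : ℝ → ℝ) (hT : Antitone T) (hT0 : ∀ c, 0 ≤ T c) 
    (hTpos : ∀ c < 1, 0 < T c) (α : ℝ) (hα : 0 < α)
    (hW : ∀ x > 0, Tendsto (fun t => T (1 - t * x) / T (1 - t)) (𝓝[>] 0) (𝓝 (x ^ α)))
    (u : ℕ → ℝ) (hupos : ∀ n, 0 < u n) (hu0 : Tendsto u atTop (𝓝 0))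
    (y : ℕ → ℝ) (L : ℝ) (hy : Tendsto y atTop (𝓝 L)) :
    Tendsto (fun n => T (1 - u n * y n) / T (1 - u n)) atTop (𝓝 ((max L 0) ^ α)) := by
  have hu : Tendsto u atTop (𝓝[>] 0) :=
    tendsto_nhdsWithin_iff.2 ⟨hu0, Eventually.of_forall hupos⟩
  have hc : ContinuousAt (fun z : ℝ => z ^ α) (max L 0) :=
    continuousAt_rpow_const _ _ (Or.inr hα.le)
  rw [tendsto_order]
  constructor
  · intro b hb
    rcases le_or_gt L 0 with hL | hL
    · rw [max_eq_right hL, zero_rpow hα.ne'] at hb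
      exact Eventually.of_forall fun n => hb.trans_le (div_nonneg (hT0 _) (hT0 _))
    · rw [max_eq_left hL.le] at hb hc
      have h1 : ∀ᶠ z in 𝓝 L, b < z ^ α := hc.eventually (lt_mem_nhds hb)
      have h2 : ∀ᶠ z in 𝓝[<] L, b < z ^ α ∧ 0 < z ∧ z < L := by
        filter_upwards [nhdsWithin_le_nhds h1, nhdsWithin_le_nhds (lt_mem_nhds hL),
          self_mem_nhdsWithin] with z a b c using ⟨a, b, c⟩
      obtain ⟨z, hz1, hz2, hz3⟩ := h2.exists
      filter_upwards [((hW z hz2).comp hu).eventually (lt_mem_nhds hz1), hy.eventually (lt_mem_nhds hz3)]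
        with n hn hn2
      refine hn.trans_le ?_
      have := hTpos (1 - u n) (by linarith [hupos n])
      have h5 := hupos n
      simp only [Function.comp]
      gcongr
      apply hT
      nlinarith
  · intro b hb
    have h1 : ∀ᶠ z in 𝓝 (max L 0), z ^ α < b := hc.eventually (gt_mem_nhds hb)
    have h2 : ∀ᶠ z in 𝓝[>] (max L 0), z ^ α < b ∧ max L 0 < z := by
      filter_upwards [nhdsWithin_le_nhds h1, self_mem_nhdsWithin] with z a c using ⟨a, c⟩
    obtain ⟨z, hz1, hz2⟩ := h2.exists
    have hz3 : L < z := (le_max_left _ _).trans_lt hz2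
    have hz4 : 0 < z := (le_max_right _ _).trans_lt hz2
    filter_upwards [((hW z hz4).comp hu).eventually (gt_mem_nhds hz1), hy.eventually (gt_mem_nhds hz3)]
        with n hn hn2
    refine lt_of_le_of_lt ?_ hn
    have := hTpos (1 - u n) (by linarith [hupos n])
    have h5 := hupos n
    simp only [Function.comp]
    gcongr
    apply hT
    nlinarith

lemma aux_beta0 (α : ℝ) (hα : 0 < α) :
    ∫ t in (0:ℝ)..1, t ^ α * (1 - t) ^ α = Gamma (α+1) * Gamma (α+1) / Gamma (2 * (α + 1)) := by
  have h := beta_eq_betaIntegralReal (α+1) (α+1) (by linarith) (by linarith)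
  rw [beta, ← two_mul] at h
  rw [h, Complex.betaIntegral]
  have : ∀ t ∈ uIcc (0:ℝ) 1, (t:ℂ) ^ (((α+1:ℝ):ℂ) - 1) * (1 - (t:ℂ)) ^ (((α+1:ℝ):ℂ) - 1)
     = ((t ^ α * (1 - t) ^ α : ℝ) : ℂ) := by
    intro t ht
    rw [uIcc_of_le zero_le_one] at ht
    push_cast
    rw [Complex.ofReal_cpow ht.1, Complex.ofReal_cpow (by linarith [ht.2])]
    push_cast
    simp
  rw [intervalIntegral.integral_congr this, intervalIntegral.integral_ofReal, Complex.ofReal_re]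

lemma aux_beta1 (α : ℝ) (hα : 0 < α) :
    ∫ v in (-1:ℝ)..1, (1 - v ^ 2) ^ α = √π * Gamma (α+1) / Gamma (α + 3 / 2) := by
  have h := intervalIntegral.integral_comp_mul_add (a := 0) (b := 1) (c := 2)
    (fun v : ℝ => (1 - v ^ 2) ^ α) (by norm_num) (-1)
  norm_num at h
  have h2 : ∫ t in (0:ℝ)..1, (1 - (2 * t + -1) ^ 2) ^ α = 4 ^ α * ∫ t in (0:ℝ)..1, t ^ α * (1 - t) ^ α := by
    rw [← intervalIntegral.integral_const_mul]
    apply intervalIntegral.integral_congr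
    intro t ht
    rw [uIcc_of_le zero_le_one] at ht
    have h1t : 0 ≤ 1 - t := by linarith [ht.2]
    simp only
    rw [show 1 - (2 * t + -1) ^ 2 = 4 * (t * (1 - t)) by ring,
      mul_rpow (by norm_num) (mul_nonneg ht.1 h1t), mul_rpow ht.1 h1t]
  rw [h2, aux_beta0 α hα] at h
  have h3 : (∫ v in (-1:ℝ)..1, (1 - v ^ 2) ^ α) = 2 * (4 ^ α * (Gamma (α+1) * Gamma (α+1) / Gamma (2 * (α + 1)))) := by
    linarith
  have h4 := Real.Gamma_mul_Gamma_add_half (α + 1)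
  rw [show α + 1 + 1/2 = α + 3/2 by ring] at h4
  have p1 : 0 < Gamma (α+1) := Gamma_pos_of_pos (by linarith)
  have p2 : 0 < Gamma (α+3/2) := Gamma_pos_of_pos (by linarith)
  have p3 : 0 < Gamma (2*(α+1)) := Gamma_pos_of_pos (by linarith)
  have h5 : (2:ℝ) ^ (1 - 2 * (α + 1)) * (2 * 4 ^ α) = 1 := by
    rw [show (4:ℝ) = 2 ^ (2:ℝ) by norm_num, ← rpow_mul (by norm_num)]
    rw [show (2:ℝ) * 2 ^ (2 * α) = 2 ^ (1 + 2 * α) by rw [rpow_add two_pos, rpow_one],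
      ← rpow_add two_pos, show 1 - 2 * (α + 1) + (1 + 2 * α) = 0 by ring, rpow_zero]
  rw [h3]
  generalize Gamma (α + 3/2) = g2 at *
  generalize Gamma (2 * (α + 1)) = g3 at *
  generalize Gamma (α + 1) = g1 at *
  field_simp
  linear_combination (2 * 4 ^ α) * h4 + (g3 * √π) * h5

lemma aux_beta (α : ℝ) (hα : 0 < α) (x : ℝ) (hx : 0 < x) :
    ∫ s : ℝ, (max (x - s ^ 2 / 2) 0) ^ α
      = √(2 * x) * x ^ α * (√π * Gamma (α+1) / Gamma (α + 3 / 2)) := by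
  set k := √(2 * x) with hk
  have hk0 : 0 < k := by positivity
  have hk2 : k ^ 2 = 2 * x := sq_sqrt (by positivity)
  have h1 := Measure.integral_comp_mul_left (fun s : ℝ => (max (x - s ^ 2 / 2) 0) ^ α) k
  rw [abs_of_pos (by positivity)] at h1
  have h2 : ∀ v : ℝ, (max (x - (k * v) ^ 2 / 2) 0) ^ α
      = (Ioc (-1:ℝ) 1).indicator (fun v => x ^ α * (1 - v ^ 2) ^ α) v := by
    intro v
    have e : x - (k * v) ^ 2 / 2 = x * (1 - v ^ 2) := by rw [mul_pow, hk2]; ring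
    rw [e]
    by_cases hv : v ∈ Ioc (-1:ℝ) 1
    · have : 0 ≤ 1 - v ^ 2 := by nlinarith [hv.1, hv.2]
      rw [indicator_of_mem hv, max_eq_left (by positivity), mul_rpow hx.le this]
    · rw [indicator_of_notMem hv, max_eq_right, zero_rpow hα.ne']
      simp only [mem_Ioc, not_and_or, not_lt, not_le] at hv
      have : 1 - v ^ 2 ≤ 0 := by rcases hv with h | h <;> nlinarith
      exact mul_nonpos_of_nonneg_of_nonpos hx.le this
  simp_rw [h2] at h1
  rw [integral_indicator measurableSet_Ioc, ← intervalIntegral.integral_of_le (by norm_num),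
    intervalIntegral.integral_const_mul, aux_beta1 α hα, smul_eq_mul] at h1
  rw [mul_assoc, h1]
  field_simp

lemma aux_cos_s6 (s : ℝ) (u : ℕ → ℝ) (hupos : ∀ n, 0 < u n) (hu0 : Tendsto u atTop (𝓝 0)) :
    Tendsto (fun n => (cos (√(u n) * s) - 1) / u n) atTop (𝓝 (- s ^ 2 / 2)) := by
  have hsq : Tendsto (fun n => √(u n) * s) atTop (𝓝 0) := by
    have := ((continuous_sqrt.tendsto 0).comp hu0).mul_const s
    simpa using this
  have h1 : ∀ᶠ n in atTop, |√(u n) * s| ≤ 1 := by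
    have := hsq.abs
    rw [abs_zero] at this
    exact (this.eventually (gt_mem_nhds one_pos)).mono fun n h => h.le
  rw [tendsto_iff_norm_sub_tendsto_zero]
  refine squeeze_zero' (g := fun n => u n * s ^ 4 * (5 / 96)) (Eventually.of_forall fun n => norm_nonneg _) ?_ ?_
  · filter_upwards [h1] with n hn
    have h := cos_bound hn
    have h0 := hupos n
    have e : (√(u n) * s) ^ 2 = u n * s ^ 2 := by rw [mul_pow, sq_sqrt h0.le]
    have e4 : |√(u n) * s| ^ 4 = u n * (u n * s ^ 4) := by
      rw [show (4:ℕ) = 2 * 2 by rfl, pow_mul, sq_abs, e]; ring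
    have : (cos (√(u n) * s) - 1) / u n - - s ^ 2 / 2 = (cos (√(u n) * s) - (1 - (√(u n) * s) ^ 2 / 2)) / u n := by
      rw [e]; field_simp; ring
    rw [this, norm_div, Real.norm_eq_abs, Real.norm_eq_abs, abs_of_pos h0, div_le_iff₀ h0]
    rw [e4] at h
    linarith
  · have := (hu0.mul_const (s ^ 4)).mul_const (5/96)
    simpa using this

theorem tail_half_skew_weibull
{Ω : Type*} [MeasurableSpace Ω] (μ : Measure Ω) [IsProbabilityMeasure μ]
    (R Θ : Ω → ℝ) (hRm : Measurable R) (hΘm : Measurable Θ)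
    (hRpos : ∀ᵐ ω ∂μ, 0 < R ω)
    (hΘunif : μ.map Θ = (ENNReal.ofReal (2 * π))⁻¹ • volume.restrict (Ioo (-π) π))
    (hindep : IndepFun R Θ μ)
    (X Y : Ω → ℝ)
    (hX : X = fun ω => R ω * Real.cos (Θ ω))
    (hY : Y = fun ω => R ω * Real.sin (Θ ω))
    (F : ℝ → ℝ)
    (hF : F = fun x => (μ {ω | R ω ≤ x}).toReal)
    (hend1 : ∀ x < 1, F x < 1) (hend2 : ∀ x, 1 ≤ x → F x = 1)
    (α : ℝ) (hα : 0 < α)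
    (hWeibull : ∀ x > 0, Tendsto (fun t => (1 - F (1 - t * x)) / (1 - F (1 - t)))
      (nhdsWithin 0 (Ioi 0)) (𝓝 (x ^ α)))
    (u : ℕ → ℝ) (hupos : ∀ n, 0 < u n) (hudec : StrictAnti u)
    (hu0 : Tendsto u atTop (𝓝 0))
    (ρ : ℕ → ℝ) (hρ : ∀ n, ρ n ∈ Ioc (0 : ℝ) 1)
    (lam : ℝ) (hlam : 0 ≤ lam)
    (hHR : Tendsto (fun n : ℕ => (1 - ρ n) / u n) atTop (𝓝 (2 * lam ^ 2))) :
    ∀ x < (0 : ℝ),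
      Tendsto (fun n : ℕ =>
          (μ {ω | 1 + u n * x < ρ n * |X ω| + Real.sqrt (1 - ρ n ^ 2) * Y ω}).toReal /
            (Real.sqrt (u n) * (1 - F (1 - u n))))
        atTop (𝓝 (2 * Ialpha α * |x| ^ (1 / 2 + α))) := by
  intro x hx
  obtain ⟨T, hTdef⟩ : ∃ T : ℝ → ℝ, ∀ c, T c = 1 - F c := ⟨_, fun _ => rfl⟩
  have hTm : ∀ c, T c = (μ {ω | c < R ω}).toReal := by
    intro c
    have hm : MeasurableSet {ω | R ω ≤ c} := measurableSet_le hRm measurable_const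
    have h := prob_compl_eq_one_sub (μ := μ) hm
    have e : {ω | R ω ≤ c}ᶜ = {ω | c < R ω} := by ext ω; simp
    rw [hTdef, hF, ← e, h, ENNReal.toReal_sub_of_le prob_le_one ENNReal.one_ne_top]
    simp
  have hT : Antitone T := by
    intro a b hab
    rw [hTm, hTm]
    exact ENNReal.toReal_mono (measure_ne_top _ _) (measure_mono fun ω h => lt_of_le_of_lt hab h)
  have hT0 : ∀ c, 0 ≤ T c := fun c => by rw [hTm]; exact ENNReal.toReal_nonneg
  have hT1 : ∀ c, 1 ≤ c → T c = 0 := fun c hc => by rw [hTdef, hend2 c hc, sub_self]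
  have hTpos : ∀ c < 1, 0 < T c := fun c hc => by rw [hTdef]; linarith [hend1 c hc]
  have hW : ∀ x > 0, Tendsto (fun t => T (1 - t * x) / T (1 - t)) (𝓝[>] 0) (𝓝 (x ^ α)) := by
    intro x hx
    simp_rw [hTdef]
    exact hWeibull x hx
  have hu : Tendsto u atTop (𝓝[>] 0) :=
    tendsto_nhdsWithin_iff.2 ⟨hu0, Eventually.of_forall hupos⟩
  obtain ⟨H, hHdef⟩ : ∃ H : ℝ → ℝ → ℝ, ∀ a c, H a c = (μ {ω | a < R ω * c}).toReal :=
    ⟨_, fun _ _ => rfl⟩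
  have hHm : ∀ a, Measurable (H a) := by
    intro a
    have := aux_meas μ R hRm a
    simp_rw [← hHdef] at this
    exact this
  have hHb : ∀ a c, |H a c| ≤ 1 := by
    intro a c
    rw [hHdef, abs_of_nonneg ENNReal.toReal_nonneg]
    exact ENNReal.toReal_le_of_le_ofReal zero_le_one (by simpa using prob_le_one)
  have hHpos : ∀ a c, 0 < c → H a c = T (a / c) := by
    intro a c hc
    rw [hHdef, hTm]
    simp_rw [div_lt_iff₀ hc]
  have hHneg : ∀ a c, 0 ≤ a → c ≤ 0 → H a c = 0 := by
    intro a c ha hc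
    rw [hHdef]
    have : μ {ω | a < R ω * c} = 0 := by
      rw [measure_eq_zero_iff_ae_notMem]
      filter_upwards [hRpos] with ω hω
      simp only [not_lt]
      nlinarith
    rw [this]; rfl
  have hux : Tendsto (fun n => 1 + u n * x) atTop (𝓝 1) := by
    simpa using (hu0.mul_const x).const_add 1
  have hsq : Tendsto (fun n => √(u n)) atTop (𝓝 0) := by
    simpa [Function.comp_def] using (continuous_sqrt.tendsto 0).comp hu0
  have hsqpos : ∀ n, 0 < √(u n) := fun n => sqrt_pos.2 (hupos n)
  have hρ1 : Tendsto ρ atTop (𝓝 1) := by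
    have h := (hHR.mul hu0).const_sub 1
    rw [mul_zero, sub_zero] at h
    refine h.congr fun n => ?_
    have := (hupos n).ne'
    field_simp
    ring
  have hδ : Tendsto (fun n => arccos (ρ n)) atTop (𝓝 0) := by
    simpa [Function.comp_def] using (continuous_arccos.tendsto 1).comp hρ1
  have key : ∀ n, (μ {ω | 1 + u n * x < ρ n * |X ω| + Real.sqrt (1 - ρ n ^ 2) * Y ω}).toReal /
            (Real.sqrt (u n) * (1 - F (1 - u n))) = π⁻¹ *
      ∫ s, (Ioc ((-(π/2) - arccos (ρ n)) / √(u n)) ((π/2 - arccos (ρ n)) / √(u n))).indicator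
        (fun s => H (1 + u n * x) (cos (√(u n) * s)) / T (1 - u n)) s := by
    intro n
    have e1 : μ {ω | 1 + u n * x < ρ n * |X ω| + Real.sqrt (1 - ρ n ^ 2) * Y ω}
        = μ {ω | 1 + u n * x < R ω * (fun θ => ρ n * |cos θ| + √(1 - ρ n ^ 2) * sin θ) (Θ ω)} := by
      apply measure_congr
      filter_upwards [hRpos] with ω hω
      apply propext
      change (1 + u n * x < _) ↔ (1 + u n * x < _)
      simp only [hX, hY, abs_mul, abs_of_pos hω]
      rw [show ρ n * (R ω * |cos (Θ ω)|) + √(1 - ρ n ^ 2) * (R ω * sin (Θ ω))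
        = R ω * (ρ n * |cos (Θ ω)| + √(1 - ρ n ^ 2) * sin (Θ ω)) by ring]
    have hTn := hTpos (1 - u n) (by linarith [hupos n])
    have hs := hsqpos n
    rw [e1, aux_slice μ R Θ hRm hΘm hΘunif hindep (fun θ => ρ n * |cos θ| + √(1 - ρ n ^ 2) * sin θ) (by fun_prop), ← hTdef]
    simp_rw [← hHdef]
    rw [aux_fold _ (hHm _) (hHb _) _ (hρ n), integral_indicator measurableSet_Ioc,
      ← intervalIntegral.integral_of_le (by gcongr; linarith [pi_pos]),
      intervalIntegral.integral_div,
      intervalIntegral.integral_comp_mul_left (fun φ => H (1 + u n * x) (cos φ)) hs.ne',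
      mul_div_cancel₀ _ hs.ne', mul_div_cancel₀ _ hs.ne', smul_eq_mul]
    have := pi_pos
    field_simp
  simp_rw [key]
  have lim : Tendsto (fun n => ∫ s, (Ioc ((-(π/2) - arccos (ρ n)) / √(u n))
        ((π/2 - arccos (ρ n)) / √(u n))).indicator
        (fun s => H (1 + u n * x) (cos (√(u n) * s)) / T (1 - u n)) s) atTop
        (𝓝 (∫ s : ℝ, (max (-x - s ^ 2 / 2) 0) ^ α)) := by
    have hbd : ∀ᶠ n in atTop, T (1 - u n * (-x)) / T (1 - u n) ≤ (-x) ^ α + 1 := by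
      have := (hW (-x) (by linarith)).comp hu
      exact (this.eventually (gt_mem_nhds (lt_add_one _))).mono fun n h => h.le
    refine tendsto_integral_filter_of_dominated_convergence
      ((Icc (-(π * √(-x))) (π * √(-x))).indicator fun _ => (-x) ^ α + 1) ?_ ?_ ?_ ?_
    · refine Eventually.of_forall fun n => Measurable.aestronglyMeasurable ?_
      refine Measurable.indicator ?_ measurableSet_Ioc
      exact ((hHm _).comp (by fun_prop)).div_const _
    · filter_upwards [hbd, hux.eventually (lt_mem_nhds one_pos)] with n hn ha
      refine ae_of_all _ fun s => ?_
      have hTn := hTpos (1 - u n) (by linarith [hupos n])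
      have hs := hsqpos n
      have hc0 : 0 ≤ (-x) ^ α + 1 := by
        have := rpow_nonneg (show 0 ≤ -x by linarith) α
        linarith
      have hr0 : 0 ≤ (Icc (-(π * √(-x))) (π * √(-x))).indicator (fun _ => (-x) ^ α + 1) s :=
        indicator_nonneg (fun _ _ => hc0) s
      by_cases hmem : s ∈ Ioc ((-(π/2) - arccos (ρ n)) / √(u n)) ((π/2 - arccos (ρ n)) / √(u n))
      swap
      · rw [indicator_of_notMem hmem, norm_zero]; exact hr0
      rw [indicator_of_mem hmem]
      rcases le_or_gt (cos (√(u n) * s)) 0 with hcos | hcos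
      · rw [hHneg _ _ ha.le hcos, zero_div, norm_zero]; exact hr0
      rw [hHpos _ _ hcos, Real.norm_eq_abs, abs_of_nonneg (div_nonneg (hT0 _) hTn.le)]
      by_cases hs2 : s ∈ Icc (-(π * √(-x))) (π * √(-x))
      · rw [indicator_of_mem hs2]
        refine le_trans ?_ hn
        gcongr
        apply hT
        rw [le_div_iff₀ hcos]
        have := cos_le_one (√(u n) * s)
        nlinarith
      · rw [indicator_of_notMem hs2, hT1 _ ?_, zero_div]
        rw [le_div_iff₀ hcos, one_mul]
        have hδ0 := arccos_nonneg (ρ n)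
        have hδ1 : arccos (ρ n) ≤ π / 2 := arccos_le_pi_div_two.2 (hρ n).1.le
        have hφ : |√(u n) * s| ≤ π := by
          have h1 := hmem.1
          have h2 := hmem.2
          rw [div_lt_iff₀ hs] at h1
          rw [le_div_iff₀ hs] at h2
          rw [abs_le]
          constructor <;> linarith [pi_pos]
        have hcb := cos_le_one_sub_mul_cos_sq hφ
        refine hcb.trans ?_
        rw [mul_pow, sq_sqrt (hupos n).le]
        have hs3 : π ^ 2 * (-x) ≤ s ^ 2 := by
          have h0 : 0 ≤ π * √(-x) := by positivity
          have : π * √(-x) ≤ |s| := by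
            by_contra hcon
            push Not at hcon
            exact hs2 (abs_le.1 hcon.le)
          have h3 := pow_le_pow_left₀ h0 this 2
          rwa [mul_pow, sq_sqrt (by linarith), sq_abs] at h3
        have hs4 : -x ≤ 2 / π ^ 2 * s ^ 2 := by
          have : 0 < π ^ 2 := by positivity
          rw [div_mul_eq_mul_div, le_div_iff₀ this]
          nlinarith [sq_nonneg s]
        nlinarith [hupos n]
    · rw [integrable_indicator_iff measurableSet_Icc]
      exact integrableOn_const (by simp)
    · refine ae_of_all _ fun s => ?_
      have hcos1 : Tendsto (fun n => cos (√(u n) * s)) atTop (𝓝 1) := by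
        have := (continuous_cos.tendsto _).comp (hsq.mul_const s)
        simpa [Function.comp_def] using this
      have hy : Tendsto (fun n => ((cos (√(u n) * s) - 1) / u n - x) / cos (√(u n) * s)) atTop
          (𝓝 (-x - s ^ 2 / 2)) := by
        have := ((aux_cos_s6 s u hupos hu0).sub_const x).div hcos1 one_ne_zero
        have e : -x - s ^ 2 / 2 = (-s ^ 2 / 2 - x) / 1 := by ring
        rw [e]
        exact this
      have hrv := aux_rv T hT hT0 hTpos α hα hW u hupos hu0 _ _ hy
      refine hrv.congr' ?_
      have l1 : ∀ᶠ n in atTop, -(π/2) - arccos (ρ n) < √(u n) * s := by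
        have a := (hδ.const_sub (-(π/2)))
        have b := hsq.mul_const s
        rw [sub_zero] at a
        rw [zero_mul] at b
        exact a.eventually_lt b (by linarith [pi_pos])
      have l2 : ∀ᶠ n in atTop, √(u n) * s < π/2 - arccos (ρ n) := by
        have a := (hδ.const_sub (π/2))
        have b := hsq.mul_const s
        rw [sub_zero] at a
        rw [zero_mul] at b
        exact b.eventually_lt a (by linarith [pi_pos])
      filter_upwards [l1, l2, hcos1.eventually (lt_mem_nhds one_pos)] with n h1 h2 h3
      have hs := hsqpos n
      rw [indicator_of_mem, hHpos _ _ h3]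
      · congr 2
        have := hupos n
        field_simp
        ring
      · constructor
        · rw [div_lt_iff₀ hs]; linarith
        · rw [le_div_iff₀ hs]; linarith
  have fin := lim.const_mul π⁻¹
  convert fin using 2
  rw [aux_beta α hα (-x) (by linarith), Ialpha, abs_of_neg hx, rpow_add (by linarith),
    ← sqrt_eq_rpow, sqrt_mul zero_le_two, sqrt_mul zero_le_two]
  have h2 : √2 * √2 = 2 := mul_self_sqrt (by norm_num)
  have hp : √π * √π = π := mul_self_sqrt pi_pos.le
  have p2 : 0 < √2 := by positivity
  have pp : 0 < √π := sqrt_pos.2 pi_pos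
  nth_rewrite 2 [← hp]
  have hg : 0 < Gamma (α + 3/2) := Gamma_pos_of_pos (by linarith)
  generalize Gamma (α + 3/2) = g at *
  field_simp
  linear_combination (-(√(-x) * (-x) ^ α)) * h2
end
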